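/- arXiv:1605.01024 — 5 statements merged into one kernel-verified Lean document; each statement's English description precedes it below -/
import Mathlib

section
/- There exists a semifilter T on ω such that, as a subspace of the Cantor space 2^ω: (i) T is the union of a completely metrizable subspace and a countable subspace; (ii) no nonempty relatively open subset of T is σ-compact; and (iii) no nonempty relatively open subset of T is completely metrizable. (Consequently T is homeomorphic to van Douwen's space 𝐓.) -/
open Set

abbrev Cantor := ℕ → Bool

def UpwardClosed (S : Set Cantor) : Prop :=
  ∀ x ∈ S, ∀ y : Cantor, (∀ n, x n = true → y n = true) → y ∈ S

def DownwardClosed (R : Set Cantor) : Prop :=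
  ∀ y ∈ R, ∀ x : Cantor, (∀ n, x n = true → y n = true) → x ∈ R

def ClosedUnderFinMod (S : Set Cantor) : Prop :=
  ∀ x ∈ S, ∀ y : Cantor, {n | x n ≠ y n}.Finite → y ∈ S

def IsSemifilter (S : Set Cantor) : Prop :=
  (fun _ => false) ∉ S ∧ (fun _ => true) ∈ S ∧ UpwardClosed S ∧ ClosedUnderFinMod S

def IsSemiideal (R : Set Cantor) : Prop :=
  (fun _ => false) ∈ R ∧ (fun _ => true) ∉ R ∧ DownwardClosed R ∧ ClosedUnderFinMod R

def ClosedUnderInter (S : Set Cantor) : Prop :=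
  ∀ x ∈ S, ∀ y ∈ S, (fun n => x n && y n) ∈ S

def IsFilterOnOmega (F : Set Cantor) : Prop := IsSemifilter F ∧ ClosedUnderInter F

def IsHomogeneous (X : Type*) [TopologicalSpace X] : Prop :=
  ∀ x y : X, ∃ h : X ≃ₜ X, h x = y

def IsFsigma (A : Set Cantor) : Prop :=
  ∃ F : ℕ → Set Cantor, (∀ n, IsClosed (F n)) ∧ A = ⋃ n, F n

def DOmegaSigmaTwo (X : Set Cantor) : Prop :=
  ∃ A : ℕ → Set Cantor, (∀ n, IsFsigma (A n)) ∧ Monotone A ∧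
    X = ⋃ n ∈ {n : ℕ | Odd n}, (A n \ ⋃ m < n, A m)

def InDelta (X : Set Cantor) : Prop := DOmegaSigmaTwo X ∧ DOmegaSigmaTwo Xᶜ

def WadgeLe (A B : Set Cantor) : Prop :=
  ∃ f : Cantor → Cantor, Continuous f ∧ A = f ⁻¹' B

def WadgeEquiv (A B : Set Cantor) : Prop := WadgeLe A B ∧ WadgeLe B A

def CompletelyMetrizable (X : Type*) [t : TopologicalSpace X] : Prop :=
  ∃ m : MetricSpace X, m.toUniformSpace.toTopologicalSpace = t ∧
    @CompleteSpace X m.toUniformSpace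

def FirstCategory (X : Type*) [TopologicalSpace X] : Prop :=
  ∃ f : ℕ → Set X, (∀ n, interior (closure (f n)) = ∅) ∧ (Set.univ : Set X) = ⋃ n, f n

def CantorFin : Set Cantor := {x | {n | x n = true}.Finite}

def BorelSet (X : Set Cantor) : Prop := @MeasurableSet Cantor (borel Cantor) X

open TopologicalSpace Topology Filter

lemma polish_iInter {O : ℕ → Set Cantor} (hO : ∀ k, IsOpen (O k)) :
    PolishSpace (⋂ k, O k : Set Cantor) := by
  have hb : IsCompletelyMetrizableSpace Bool :=
    (IsClosedEmbedding.of_continuous_injective_isClosedMap (f := fun b : Bool => cond b (1:ℕ) 0)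
      continuous_of_discreteTopology (by intro a b h; cases a <;> cases b <;> simp_all)
      (fun _ _ => isClosed_discrete _)).IsCompletelyMetrizableSpace
  have hb : PolishSpace Bool := inferInstance
  have hC : PolishSpace Cantor := inferInstance
  have : ∀ k, PolishSpace (O k) := fun k => (hO k).polishSpace
  let f : (⋂ k, O k : Set Cantor) → (∀ k, O k) := fun x k => ⟨x.1, mem_iInter.1 x.2 k⟩
  have hf : Continuous f := by
    refine continuous_pi fun k => ?_
    exact Continuous.subtype_mk continuous_subtype_val _
  have hemb : IsEmbedding f := by
    have h1 : IsEmbedding ((fun y : (∀ k, O k) => (y 0).1) ∘ f) := IsEmbedding.subtypeVal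
    exact IsEmbedding.of_comp hf (by fun_prop) h1
  have hcl : IsClosed (range f) := by
    have : range f = ⋂ k, {y : (∀ k, O k) | (y k).1 = (y 0).1} := by
      ext y
      simp only [mem_range, mem_iInter, mem_ofPred_eq]
      constructor
      · rintro ⟨x, rfl⟩ k; rfl
      · intro h
        refine ⟨⟨(y 0).1, mem_iInter.2 fun k => h k ▸ (y k).2⟩, ?_⟩
        funext k
        exact Subtype.ext (h k).symm
    rw [this]
    refine isClosed_iInter fun k => isClosed_eq ?_ ?_ <;> fun_prop
  exact IsClosedEmbedding.polishSpace ⟨hemb, hcl⟩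

def evenPt : Cantor := fun n => decide (Even n)

def setA : Set Cantor := {x | {n | Odd n ∧ x n = true}.Infinite}
def setB : Set Cantor := {x | {n | x n ≠ evenPt n}.Finite}

def setO (k : ℕ) : Set Cantor := ⋃ n ∈ {n : ℕ | k < n ∧ Odd n}, {x : Cantor | x n = true}

lemma isOpen_setO (k : ℕ) : IsOpen (setO k) := by
  refine isOpen_biUnion fun n _ => ?_
  have h : Continuous fun x : Cantor => x n := continuous_apply n
  exact (isOpen_discrete {true}).preimage h

lemma setA_eq : setA = ⋂ k, setO k := by
  ext x
  simp only [setA, setO, mem_ofPred_eq, mem_iInter, mem_iUnion, exists_prop]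
  constructor
  · intro h k
    obtain ⟨n, hn, hk⟩ := h.exists_gt k
    exact ⟨n, ⟨hk, hn.1⟩, hn.2⟩
  · intro h
    refine infinite_of_forall_exists_gt fun k => ?_
    obtain ⟨n, ⟨hk, ho⟩, hx⟩ := h k
    exact ⟨n, ⟨ho, hx⟩, hk⟩

lemma dense_finMod (z : Cantor) : Dense {x : Cantor | {n | x n ≠ z n}.Finite} := by
  intro x
  refine mem_closure_of_tendsto (b := atTop) (f := fun k : ℕ => (fun n => if n < k then x n else z n : Cantor)) ?_ ?_
  · rw [tendsto_pi_nhds]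
    intro n
    refine tendsto_const_nhds.congr' ?_
    filter_upwards [eventually_gt_atTop n] with k hk
    simp [hk]
  · refine Eventually.of_forall fun k => ?_
    refine (finite_lt_nat k).subset fun n hn => ?_
    by_contra h
    simp only [mem_ofPred_eq] at hn h
    simp [h] at hn

lemma countable_finMod (z : Cantor) : {x : Cantor | {n | x n ≠ z n}.Finite}.Countable := by
  have : Function.Injective (fun x : {x : Cantor | {n | x n ≠ z n}.Finite} => x.2.toFinset) := by
    rintro ⟨x, hx⟩ ⟨y, hy⟩ h
    refine Subtype.ext (funext fun n => ?_)
    have := Finset.ext_iff.1 h n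
    simp only [Finite.mem_toFinset, mem_ofPred_eq] at this
    show x n = y n
    cases hx : x n <;> cases hy : y n <;> cases hz : z n <;> simp_all
  exact this.countable

lemma semifilter_T : IsSemifilter (setA ∪ setB) := by
  refine ⟨?_, ?_, ?_, ?_⟩
  · rintro (h | h)
    · simp [setA] at h
    · refine infinite_of_forall_exists_gt (fun k => ?_) h
      exact ⟨2 * (k + 1), by simp [evenPt], by omega⟩
  · left
    refine infinite_of_forall_exists_gt (fun k => ?_)
    exact ⟨2 * k + 1, by simp, by omega⟩
  · rintro x hx y hxy
    by_cases hy : y ∈ setA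
    · exact Or.inl hy
    right
    have hy' : {n | Odd n ∧ y n = true}.Finite := not_infinite.1 hy
    rcases hx with hx | hx
    · exact absurd (hx.mono fun n hn => And.intro hn.1 (hxy n hn.2)) hy
    · refine (hy'.union hx).subset fun n hn => ?_
      have := hxy n
      simp only [evenPt, mem_ofPred_eq, mem_union, ← Nat.not_even_iff_odd] at hn ⊢
      by_cases he : Even n <;> cases hx : x n <;> cases hy : y n <;> simp_all
  · rintro x (hx | hx) y hxy
    · left
      intro hy
      refine hx ((hy.union hxy).subset fun n hn => ?_)
      simp only [mem_ofPred_eq, mem_union] at hn ⊢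
      cases hy : y n <;> simp_all
    · right
      refine (hxy.union hx).subset fun n hn => ?_
      simp only [mem_ofPred_eq, mem_union] at hn ⊢
      by_cases h : x n = y n
      · right; rwa [h]
      · left; exact h

lemma dense_setA : Dense setA := by
  refine (dense_finMod fun _ => true).mono fun x hx => ?_
  intro hfin
  have h2 : {n : ℕ | Odd n}.Infinite :=
    infinite_of_forall_exists_gt fun k => ⟨2 * k + 1, by simp, by omega⟩
  refine h2 ((hx.union hfin).subset fun n hn => ?_)
  simp only [mem_ofPred_eq, mem_union] at hn ⊢
  cases h : x n <;> simp_all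

lemma dense_compl : Dense (setA ∪ setB)ᶜ := by
  refine (dense_finMod fun _ => false).mono fun x hx hT => ?_
  refine semifilter_T.1 (semifilter_T.2.2.2 x hT _ hx)

lemma not_sigma {V : Set Cantor} (hV : IsOpen V) (hne : V.Nonempty) :
    ¬ SigmaCompactSpace ((setA ∪ setB) ∩ V : Set Cantor) := by
  intro hs
  let f : Option ℕ → Set Cantor := fun o => o.elim Vᶜ
    fun n => Subtype.val '' compactCovering ((setA ∪ setB) ∩ V : Set Cantor) n
  have hc : ∀ o, IsClosed (f o) := by
    rintro (_ | n)
    · exact hV.isClosed_compl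
    · exact ((isCompact_compactCovering _ n).image continuous_subtype_val).isClosed
  have hU : setA ⊆ ⋃ o, f o := by
    intro x hx
    by_cases hxV : x ∈ V
    · obtain ⟨n, hn⟩ := exists_mem_compactCovering
        (⟨x, Or.inl hx, hxV⟩ : ((setA ∪ setB) ∩ V : Set Cantor))
      exact mem_iUnion.2 ⟨some n, ⟨_, hn, rfl⟩⟩
    · exact mem_iUnion.2 ⟨none, hxV⟩
  have hG : IsGδ setA := setA_eq ▸ IsGδ.iInter_of_isOpen isOpen_setO
  have hd := hG.dense_iUnion_interior_of_closed dense_setA hc hU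
  obtain ⟨x, hxV, hx⟩ := hd.inter_open_nonempty V hV hne
  obtain ⟨o, ho⟩ := mem_iUnion.1 hx
  rcases o with _ | n
  · exact interior_subset ho hxV
  · obtain ⟨y, hy, hyT⟩ := dense_compl.inter_open_nonempty _ isOpen_interior ⟨x, ho⟩
    obtain ⟨z, _, rfl⟩ := interior_subset hy
    exact hyT z.2.1

lemma not_complete {V : Set Cantor} (hV : IsOpen V) (hne : V.Nonempty) :
    ¬ CompletelyMetrizable ((setA ∪ setB) ∩ V : Set Cantor) := by
  intro hs
  have : IsCompletelyMetrizableSpace ((setA ∪ setB) ∩ V : Set Cantor) := ⟨hs⟩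
  obtain ⟨p, hpV, hpB⟩ := (dense_finMod evenPt).inter_open_nonempty V hV hne
  let D : Set ((setA ∪ setB) ∩ V : Set Cantor) := {x | ∀ n, Odd n → x.1 n = p n}
  have hD : IsClosed D := by
    have : D = ⋂ n, ⋂ _ : Odd n, {x | x.1 n = p n} := by ext; simp [D]
    rw [this]
    refine isClosed_iInter fun n => isClosed_iInter fun _ => isClosed_eq ?_ continuous_const
    exact (continuous_apply n).comp continuous_subtype_val
  have : IsCompletelyMetrizableSpace D := hD.isClosedEmbedding_subtypeVal.IsCompletelyMetrizableSpace
  have hDB : ∀ x : D, x.1.1 ∈ setB := by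
    rintro ⟨⟨x, hxT, hxV⟩, hx⟩
    rcases hxT with hA | hB
    · refine absurd (hpB.subset fun n hn => ?_) hA
      have := hx n hn.1
      have h3 := Nat.not_even_iff_odd.2 hn.1
      have h2 := hn.2
      simp_all [evenPt]
    · exact hB
  have : Countable D := by
    have : Countable setB := (countable_finMod evenPt).to_subtype
    refine Function.Injective.countable (f := fun x : D => (⟨x.1.1, hDB x⟩ : setB)) ?_
    intro x y h
    have h' : x.1.1 = y.1.1 := congrArg (fun z : setB => z.1) h
    exact Subtype.ext (Subtype.ext h')
  have : Nonempty D := ⟨⟨⟨p, Or.inr hpB, hpV⟩, fun _ _ => rfl⟩⟩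
  let := upgradeIsCompletelyMetrizable D
  obtain ⟨x, y, hy⟩ := nonempty_interior_of_iUnion_of_closed
    (f := fun x : D => ({x} : Set D)) (fun x => isClosed_singleton) (iUnion_of_singleton D)
  obtain rfl : y = x := mem_singleton_iff.1 (interior_subset hy)
  rw [mem_interior_iff_mem_nhds, nhds_subtype_eq_comap, nhds_subtype_eq_comap, comap_comap,
    mem_comap] at hy
  obtain ⟨W, hW, hWs⟩ := hy
  have ht : Tendsto (fun k : ℕ => Function.update y.1.1 (2 * k) (!y.1.1 (2 * k))) atTop
      (𝓝 y.1.1) := by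
    rw [tendsto_pi_nhds]
    intro n
    refine tendsto_const_nhds.congr' ?_
    filter_upwards [eventually_gt_atTop n] with k hk
    rw [Function.update_of_ne (by omega)]
  obtain ⟨k, hkW, hkV⟩ := ((ht.eventually hW).and
    (ht.eventually (hV.mem_nhds y.1.2.2))).exists
  have hkT := semifilter_T.2.2.2 y.1.1 y.1.2.1
    (Function.update y.1.1 (2 * k) (!y.1.1 (2 * k))) (by
      refine (finite_singleton (2 * k)).subset fun n hn => ?_
      by_contra h
      exact hn (Function.update_of_ne h _ _).symm)
  have hkD : (⟨_, hkT, hkV⟩ : ((setA ∪ setB) ∩ V : Set Cantor)) ∈ D := by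
    intro n hn
    have : n ≠ 2 * k := by rintro rfl; simp [← Nat.not_even_iff_odd] at hn
    exact (Function.update_of_ne this _ _).trans (y.2 n hn)
  have := @hWs ⟨_, hkD⟩ hkW
  have h1 := congrArg (fun z : D => z.1.1 (2 * k)) (mem_singleton_iff.1 this)
  simp at h1

/-- There is a semifilter homeomorphic to van Douwen's space 𝐓. -/
theorem exists_semifilter_vanDouwen_T :
    ∃ T : Set Cantor, IsSemifilter T ∧
      (∃ A B : Set Cantor, T = A ∪ B ∧ CompletelyMetrizable A ∧ B.Countable) ∧
      (∀ U : Set Cantor, (∃ V : Set Cantor, IsOpen V ∧ U = T ∩ V) → U.Nonempty →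
        ¬ SigmaCompactSpace U) ∧
      (∀ U : Set Cantor, (∃ V : Set Cantor, IsOpen V ∧ U = T ∩ V) → U.Nonempty →
        ¬ CompletelyMetrizable U) := by
  refine ⟨setA ∪ setB, semifilter_T, ⟨setA, setB, rfl, ?_, countable_finMod evenPt⟩, ?_, ?_⟩
  · have := polish_iInter isOpen_setO
    rw [setA_eq]
    exact IsCompletelyMetrizableSpace.complete
  · rintro _ ⟨V, hV, rfl⟩ hne
    exact not_sigma hV (hne.mono inter_subset_right)
  · rintro _ ⟨V, hV, rfl⟩ hne
    exact not_complete hV (hne.mono inter_subset_right)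
end

section
/- Let S be a semifilter on ω. Then the product space ℚ × S, where ℚ is the space of rational numbers and S carries the subspace topology from the Cantor space 2^ω, is homeomorphic to a semifilter on ω. -/
open Set

/-- The alternating pattern. -/
def altPat : Cantor := fun n => n % 2 == 0

/-- Sequences eventually equal to the alternating pattern. -/
def altSet : Set Cantor := {x | {n | x n ≠ altPat n}.Finite}

/-- Lexicographically ordered version. -/
def AltLex : Type := {x : Lex (ℕ → Bool) // ofLex x ∈ altSet}

noncomputable instance : LinearOrder AltLex :=
  inferInstanceAs (LinearOrder {x : Lex (ℕ → Bool) // ofLex x ∈ altSet})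

/-- Build an element. -/
def AltLex.mk (x : Cantor) (hx : x ∈ altSet) : AltLex := ⟨toLex x, hx⟩

/-- Underlying sequence. -/
def AltLex.val (x : AltLex) : Cantor := ofLex x.1

theorem AltLex.mem (x : AltLex) : x.val ∈ altSet := x.2

theorem AltLex.lt_iff (x y : AltLex) :
    x < y ↔ ∃ i, (∀ j < i, x.val j = y.val j) ∧ x.val i < y.val i := Iff.rfl

theorem AltLex.apply_le {x y : AltLex} (h : x ≤ y) {i : ℕ} (hj : ∀ j < i, x.val j = y.val j) :
    x.val i ≤ y.val i := by
  by_contra hlt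
  exact absurd ((AltLex.lt_iff y x).2 ⟨i, fun j h => (hj j h).symm, not_le.1 hlt⟩) (not_lt.2 h)

theorem altSet_update {x : Cantor} (hx : x ∈ altSet) (m : ℕ) (v : Bool) :
    Function.update x m v ∈ altSet := by
  refine (Set.Finite.insert m hx).subset ?_
  intro n hn
  by_cases h : n = m
  · exact Or.inl h
  · right
    simpa [Function.update_of_ne h] using hn

theorem altSet_exists {x : Cantor} (hx : x ∈ altSet) (n : ℕ) (v : Bool) :
    ∃ m, n < m ∧ x m = v := by
  obtain ⟨b, hb⟩ := hx.bddAbove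
  have key : ∀ m, b < m → x m = altPat m := by
    intro m hm
    by_contra h
    exact absurd (hb h) (not_le.2 hm)
  cases v
  · refine ⟨2 * (n + b) + 1, by omega, ?_⟩
    rw [key _ (by omega)]
    simp only [altPat, beq_eq_false_iff_ne]; omega
  · refine ⟨2 * (n + b + 1), by omega, ?_⟩
    rw [key _ (by omega)]
    simp only [altPat, beq_iff_eq]; omega

theorem AltLex.exists_gt (x : AltLex) (n : ℕ) :
    ∃ y, x < y ∧ ∀ j ≤ n, y.val j = x.val j := by
  obtain ⟨m, hm, hv⟩ := altSet_exists x.mem n false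
  refine ⟨AltLex.mk _ (altSet_update x.mem m true), ?_, ?_⟩
  · rw [AltLex.lt_iff]
    refine ⟨m, fun j hj => ?_, ?_⟩
    · exact (Function.update_of_ne hj.ne _ _).symm
    · change x.val m < Function.update x.val m true m
      rw [hv, Function.update_self]; decide
  · intro j hj
    exact Function.update_of_ne (by omega) _ _

theorem AltLex.exists_lt' (x : AltLex) (n : ℕ) :
    ∃ y, y < x ∧ ∀ j ≤ n, y.val j = x.val j := by
  obtain ⟨m, hm, hv⟩ := altSet_exists x.mem n true
  refine ⟨AltLex.mk _ (altSet_update x.mem m false), ?_, ?_⟩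
  · rw [AltLex.lt_iff]
    refine ⟨m, fun j hj => ?_, ?_⟩
    · exact Function.update_of_ne hj.ne _ _
    · change Function.update x.val m false m < x.val m
      rw [hv, Function.update_self]; decide
  · intro j hj
    exact Function.update_of_ne (by omega) _ _

instance : NoMaxOrder AltLex := ⟨fun x => (x.exists_gt 0).imp fun _ h => h.1⟩

instance : NoMinOrder AltLex := ⟨fun x => (x.exists_lt' 0).imp fun _ h => h.1⟩

instance : DenselyOrdered AltLex := ⟨fun x y h => by
  obtain ⟨i, hi, hlt⟩ := (AltLex.lt_iff x y).1 h
  obtain ⟨z, hz, hzy⟩ := y.exists_lt' i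
  refine ⟨z, (AltLex.lt_iff x z).2 ⟨i, fun j hj => ?_, ?_⟩, hz⟩
  · rw [hi j hj, hzy j hj.le]
  · rwa [hzy i le_rfl]⟩

instance : Nonempty AltLex := ⟨AltLex.mk altPat (by simp [altSet])⟩

instance : Countable AltLex := by
  have : Function.Injective (fun x : AltLex => x.mem.toFinset) := by
    intro x y h
    have h' : ∀ n, x.val n ≠ altPat n ↔ y.val n ≠ altPat n := by
      intro n
      have := Finset.ext_iff.1 h n
      exact (Set.Finite.mem_toFinset x.mem).symm.trans (this.trans (Set.Finite.mem_toFinset y.mem))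
    apply Subtype.ext
    change x.val = y.val
    funext n
    have := h' n
    revert this
    cases x.val n <;> cases y.val n <;> cases altPat n <;> simp
  exact this.countable

/-- The alternating set is homeomorphic to the rationals. -/
theorem altSet_homeo : Nonempty (ℚ ≃ₜ altSet) := by
  obtain ⟨e⟩ := Order.iso_of_countable_dense AltLex ℚ
  refine ⟨Homeomorph.symm
    { toFun := fun x => e (AltLex.mk x.1 x.2)
      invFun := fun q => ⟨(e.symm q).val, (e.symm q).mem⟩
      left_inv := ?_
      right_inv := ?_
      continuous_toFun := ?_
      continuous_invFun := ?_ }⟩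
  · intro x
    apply Subtype.ext
    change (e.symm (e _)).val = _
    rw [e.symm_apply_apply]; rfl
  · intro q
    exact e.apply_symm_apply q
  · have hev : ∀ j, Continuous (fun x : altSet => x.1 j) := fun j =>
      (continuous_apply j).comp continuous_subtype_val
    have hop : ∀ (j : ℕ) (s : Set Bool), IsOpen {x : altSet | x.1 j ∈ s} := fun j s =>
      (isOpen_discrete s).preimage (hev j)
    rw [OrderTopology.continuous_iff]
    intro a
    constructor
    · have : (fun x : altSet => e (AltLex.mk x.1 x.2)) ⁻¹' Ioi a =
          ⋃ i : ℕ, ((⋂ j ∈ Set.Iio i, {x : altSet | x.1 j ∈ ({(e.symm a).val j} : Set Bool)}) ∩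
            {x : altSet | x.1 i ∈ Ioi ((e.symm a).val i)}) := by
        ext x
        simp only [mem_preimage, mem_Ioi, ← e.symm_apply_lt, AltLex.lt_iff, mem_iUnion, mem_inter_iff,
          mem_iInter, mem_ofPred_eq, mem_Iio, mem_singleton_iff]
        exact exists_congr fun i => and_congr
          (forall_congr' fun j => forall_congr' fun _ => eq_comm) Iff.rfl
      rw [this]
      exact isOpen_iUnion fun i => ((Set.finite_Iio i).isOpen_biInter fun j _ => hop _ _).inter
        (hop _ _)
    · have : (fun x : altSet => e (AltLex.mk x.1 x.2)) ⁻¹' Iio a =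
          ⋃ i : ℕ, ((⋂ j ∈ Set.Iio i, {x : altSet | x.1 j ∈ ({(e.symm a).val j} : Set Bool)}) ∩
            {x : altSet | x.1 i ∈ Iio ((e.symm a).val i)}) := by
        ext x
        simp only [mem_preimage, mem_Iio, ← e.lt_symm_apply, AltLex.lt_iff, mem_iUnion, mem_inter_iff,
          mem_iInter, mem_ofPred_eq, mem_singleton_iff]
        rfl
      rw [this]
      exact isOpen_iUnion fun i => ((Set.finite_Iio i).isOpen_biInter fun j _ => hop _ _).inter
        (hop _ _)
  · refine Continuous.subtype_mk (continuous_pi fun n => ?_) _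
    rw [continuous_iff_continuousAt]
    intro q
    obtain ⟨b, hb, hb'⟩ := (e.symm q).exists_gt n
    obtain ⟨a, ha, ha'⟩ := (e.symm q).exists_lt' n
    have hnhds : Ioo (e a) (e b) ∈ nhds q :=
      Ioo_mem_nhds (e.lt_symm_apply.1 ha) (e.symm_apply_lt.1 hb)
    have hconst : (fun r => (e.symm r).val n) =ᶠ[nhds q] fun _ => (e.symm q).val n := by
      filter_upwards [hnhds] with r hr
      have h1 : a < e.symm r := e.lt_symm_apply.2 hr.1
      have h2 : e.symm r < b := e.symm_apply_lt.2 hr.2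
      have key : ∀ i, i ≤ n → (e.symm r).val i = (e.symm q).val i := by
        intro i
        induction i using Nat.strong_induction_on with
        | _ i ih =>
          intro hi
          have e1 := AltLex.apply_le h1.le (i := i) fun j hj => by
            rw [ha' j (by omega), ih j hj (by omega)]
          have e2 := AltLex.apply_le h2.le (i := i) fun j hj => by
            rw [hb' j (by omega), ih j hj (by omega)]
          rw [ha' i hi] at e1
          rw [hb' i hi] at e2
          exact le_antisymm e2 e1
      exact key n le_rfl
    exact (continuousAt_const).congr hconst.symm

/-- Cofinite sets. -/
def cofSet : Set Cantor := {x | {n | x n ≠ true}.Finite}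

/-- Flipping homeomorphism. -/
def flipHomeo : Cantor ≃ₜ Cantor where
  toFun x := fun n => x n == altPat n
  invFun x := fun n => x n == altPat n
  left_inv x := by
    funext n
    change ((x n == altPat n) == altPat n) = x n
    cases x n <;> cases altPat n <;> rfl
  right_inv x := by
    funext n
    change ((x n == altPat n) == altPat n) = x n
    cases x n <;> cases altPat n <;> rfl
  continuous_toFun := continuous_pi fun n =>
    (continuous_of_discreteTopology (f := fun v : Bool => v == altPat n)).comp (continuous_apply n)
  continuous_invFun := continuous_pi fun n =>
    (continuous_of_discreteTopology (f := fun v : Bool => v == altPat n)).comp (continuous_apply n)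

theorem cofSet_homeo : Nonempty (ℚ ≃ₜ cofSet) := by
  obtain ⟨e⟩ := altSet_homeo
  refine ⟨e.trans (flipHomeo.subtype fun x => ?_)⟩
  change {n | x n ≠ altPat n}.Finite ↔ {n | (x n == altPat n) ≠ true}.Finite
  simp

theorem cofSet_isSemifilter : IsSemifilter cofSet := by
  refine ⟨?_, ?_, ?_, ?_⟩
  · simp [cofSet, Set.infinite_univ]
  · simp [cofSet]
  · intro x hx y h
    exact Set.Finite.subset hx fun n hn hxn => hn (h n hxn)
  · intro x hx y h
    refine (Set.Finite.union hx h).subset fun n hn => ?_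
    by_cases hxn : x n = true
    · right
      intro hxy
      exact hn (hxy ▸ hxn)
    · exact Or.inl hxn

/-- Even part. -/
def evenPart (x : Cantor) : Cantor := fun n => x (2 * n)

/-- Odd part. -/
def oddPart (x : Cantor) : Cantor := fun n => x (2 * n + 1)

/-- Interleaving. -/
def interleave (x y : Cantor) : Cantor := fun n => if n % 2 = 0 then x (n / 2) else y (n / 2)

theorem evenPart_interleave (x y : Cantor) : evenPart (interleave x y) = x := by
  funext n
  simp [evenPart, interleave]

theorem oddPart_interleave (x y : Cantor) : oddPart (interleave x y) = y := by
  funext n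
  have h1 : (2 * n + 1) % 2 ≠ 0 := by omega
  have h2 : (2 * n + 1) / 2 = n := by omega
  simp only [oddPart, interleave, if_neg h1, h2]

theorem interleave_parts (x : Cantor) : interleave (evenPart x) (oddPart x) = x := by
  funext n
  unfold interleave evenPart oddPart
  split_ifs with h
  · congr 1; omega
  · congr 1; omega

/-- Product of two sets of subsets of ω. -/
def prodSet (C S : Set Cantor) : Set Cantor := {x | evenPart x ∈ C ∧ oddPart x ∈ S}

theorem prodSet_isSemifilter {C S : Set Cantor} (hC : IsSemifilter C) (hS : IsSemifilter S) :
    IsSemifilter (prodSet C S) := by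
  obtain ⟨c1, c2, c3, c4⟩ := hC
  obtain ⟨s1, s2, s3, s4⟩ := hS
  refine ⟨fun h => c1 h.1, ⟨c2, s2⟩, ?_, ?_⟩
  · intro x hx y h
    exact ⟨c3 _ hx.1 _ fun n => h _, s3 _ hx.2 _ fun n => h _⟩
  · intro x hx y h
    refine ⟨c4 _ hx.1 _ ?_, s4 _ hx.2 _ ?_⟩
    · exact h.preimage (f := fun n => 2 * n) (fun a _ b _ hab => by simpa using hab)
    · exact h.preimage (f := fun n => 2 * n + 1) (fun a _ b _ hab => by simpa using hab)

/-- The product set is homeomorphic to the product. -/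
def prodSetHomeo (C S : Set Cantor) : (C × S) ≃ₜ prodSet C S where
  toFun p := ⟨interleave p.1.1 p.2.1, by
    refine ⟨?_, ?_⟩
    · rw [evenPart_interleave]; exact p.1.2
    · rw [oddPart_interleave]; exact p.2.2⟩
  invFun x := (⟨evenPart x.1, x.2.1⟩, ⟨oddPart x.1, x.2.2⟩)
  left_inv p := by
    refine Prod.ext (Subtype.ext ?_) (Subtype.ext ?_)
    · exact evenPart_interleave _ _
    · exact oddPart_interleave _ _
  right_inv x := Subtype.ext (interleave_parts _)
  continuous_toFun := by
    refine Continuous.subtype_mk (continuous_pi fun n => ?_) _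
    unfold interleave
    split_ifs
    · exact (continuous_apply _).comp (continuous_subtype_val.comp continuous_fst)
    · exact (continuous_apply _).comp (continuous_subtype_val.comp continuous_snd)
  continuous_invFun := by
    refine Continuous.prodMk (Continuous.subtype_mk (continuous_pi fun n => ?_) _)
      (Continuous.subtype_mk (continuous_pi fun n => ?_) _)
    · exact (continuous_apply (2 * n)).comp continuous_subtype_val
    · exact (continuous_apply (2 * n + 1)).comp continuous_subtype_val

/-- ℚ × S is homeomorphic to a semifilter, for any semifilter S. -/
theorem rat_prod_semifilter_homeomorphic_semifilter (S : Set Cantor) (hS : IsSemifilter S) :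
    ∃ T : Set Cantor, IsSemifilter T ∧ Nonempty ((ℚ × S) ≃ₜ T) := by
  obtain ⟨e⟩ := cofSet_homeo
  exact ⟨prodSet cofSet S, prodSet_isSemifilter cofSet_isSemifilter hS,
    ⟨(e.prodCongr (Homeomorph.refl S)).trans (prodSetHomeo cofSet S)⟩⟩
end

section
/- Let S be a semifilter on ω and let Fin ⊆ 2^ω denote the collection of finite subsets of ω. Then the subspace (2^ω × 2^ω) \ (Fin × (2^ω \ S)) of the product space 2^ω × 2^ω is homeomorphic to a semifilter on ω. -/
open Set

def interleaveHomeo : (Cantor × Cantor) ≃ₜ Cantor where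
  toFun p n := Sum.elim p.1 p.2 (Equiv.natSumNatEquivNat.symm n)
  invFun z := (fun n => z (Equiv.natSumNatEquivNat (Sum.inl n)),
    fun n => z (Equiv.natSumNatEquivNat (Sum.inr n)))
  left_inv p := by ext n <;> simp only [Equiv.symm_apply_apply, Sum.elim_inl, Sum.elim_inr]
  right_inv z := by
    funext n
    obtain ⟨m, rfl⟩ := Equiv.natSumNatEquivNat.surjective n
    simp only [Equiv.symm_apply_apply]
    cases m <;> rfl
  continuous_toFun := by
    refine continuous_pi fun n => ?_
    rcases Equiv.natSumNatEquivNat.symm n with m | m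
    · exact (continuous_apply m).comp continuous_fst
    · exact (continuous_apply m).comp continuous_snd
  continuous_invFun := by fun_prop

/-- (2^ω × 2^ω) \ (Fin × (2^ω \ S)) is homeomorphic to a semifilter. -/
theorem tricky_subspace_homeomorphic_semifilter (S : Set Cantor) (hS : IsSemifilter S) :
    ∃ T : Set Cantor, IsSemifilter T ∧
      Nonempty ((((Set.univ : Set (Cantor × Cantor)) \ (CantorFin ×ˢ Sᶜ)) : Set (Cantor × Cantor)) ≃ₜ T) := by
  obtain ⟨h0, h1, hu, hf⟩ := hS
  refine ⟨{z | (interleaveHomeo.symm z).1 ∉ CantorFin ∨ (interleaveHomeo.symm z).2 ∈ S},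
    ⟨?_, ?_, ?_, ?_⟩, ⟨interleaveHomeo.subtype ?_⟩⟩
  · rintro (h | h)
    · apply h
      simp [CantorFin, interleaveHomeo, Homeomorph.symm]
    · exact h0 h
  · exact Or.inr h1
  · rintro x (h | h) y hxy
    · refine Or.inl fun hy => h ?_
      exact Set.Finite.subset hy fun n hn => hxy _ hn
    · exact Or.inr (hu _ h _ fun n hn => hxy _ hn)
  · rintro x (h | h) y hxy
    · refine Or.inl fun hy => h ?_
      have h2 : {n | (interleaveHomeo.symm x).1 n ≠ (interleaveHomeo.symm y).1 n}.Finite :=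
        hxy.preimage (f := fun n => Equiv.natSumNatEquivNat (Sum.inl n))
          (Equiv.natSumNatEquivNat.injective.comp Sum.inl_injective).injOn
      refine (Set.Finite.union hy h2).subset fun n hn => ?_
      simp only [Set.mem_union, Set.mem_setOf_eq] at hn ⊢
      by_cases h3 : (interleaveHomeo.symm y).1 n = true
      · exact Or.inl h3
      · exact Or.inr fun h4 => h3 (h4 ▸ hn)
    · exact Or.inr (hf _ h _ (hxy.preimage (f := fun n => Equiv.natSumNatEquivNat (Sum.inr n))
          (Equiv.natSumNatEquivNat.injective.comp Sum.inr_injective).injOn))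
  · intro p
    simp only [Set.mem_diff, Set.mem_univ, Set.mem_prod, Set.mem_compl_iff, true_and,
      Set.mem_setOf_eq, Homeomorph.symm_apply_apply]
    tauto
end

section
/- Let X be a subset of the Cantor space 2^ω such that the subspace X is homogeneous and not locally compact, and such that X ∈ Δ. Then X is homeomorphic to a semifilter on ω. -/
open Set

namespace SF

/-- agreement on the first `m` coordinates -/
def Agr (m : ℕ) (x y : Cantor) : Prop := ∀ i < m, x i = y i

theorem Agr.rfl {m : ℕ} {x : Cantor} : Agr m x x := fun _ _ => Eq.refl _
theorem Agr.symm {m : ℕ} {x y : Cantor} (h : Agr m x y) : Agr m y x := fun i hi => (h i hi).symm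
theorem Agr.trans {m : ℕ} {x y z : Cantor} (h : Agr m x y) (h' : Agr m y z) : Agr m x z :=
  fun i hi => (h i hi).trans (h' i hi)
theorem Agr.mono {m k : ℕ} {x y : Cantor} (h : Agr m x y) (hk : k ≤ m) : Agr k x y :=
  fun i hi => h i (lt_of_lt_of_le hi hk)

theorem isOpen_coord_eq (i : ℕ) (c : Bool) : IsOpen {y : Cantor | y i = c} := by
  have h : Continuous fun y : Cantor => y i := continuous_apply i
  exact (isOpen_discrete ({c} : Set Bool)).preimage h

theorem isOpen_agr (m : ℕ) (x : Cantor) : IsOpen {y | Agr m x y} := by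
  have : {y : Cantor | Agr m x y} = ⋂ i ∈ Finset.range m, {y : Cantor | y i = x i} := by
    ext y
    simp only [mem_ofPred_eq, Agr, mem_iInter, Finset.mem_range]
    exact ⟨fun h i hi => (h i hi).symm, fun h i hi => (h i hi).symm⟩
  rw [this]
  refine isOpen_biInter_finset fun i _ => ?_
  exact isOpen_coord_eq i (x i)

theorem isOpen_sat {O : Set Cantor} (m : ℕ) (h : ∀ x ∈ O, ∀ y, Agr m x y → y ∈ O) : IsOpen O := by
  rw [isOpen_iff_forall_mem_open]
  intro x hx
  exact ⟨{y | Agr m x y}, fun y hy => h x hx y hy, isOpen_agr m x, Agr.rfl⟩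

theorem isClopen_sat {O : Set Cantor} (m : ℕ) (h : ∀ x ∈ O, ∀ y, Agr m x y → y ∈ O) :
    IsClopen O := by
  refine ⟨⟨isOpen_sat m fun x hx y hxy hy => hx (h y hy x hxy.symm)⟩, isOpen_sat m h⟩

theorem open_agr {O : Set Cantor} (hO : IsOpen O) {x : Cantor} (hx : x ∈ O) :
    ∃ m, ∀ y, Agr m x y → y ∈ O := by
  rw [isOpen_pi_iff] at hO
  obtain ⟨I, u, hu, hsub⟩ := hO x hx
  refine ⟨I.sup id + 1, fun y hy => hsub fun i hi => ?_⟩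
  have : i < I.sup id + 1 := Nat.lt_succ_of_le (Finset.le_sup (f := id) hi)
  have h := hy i this
  rw [← h]
  exact (hu i hi).2

theorem closed_agr {K : Set Cantor} (hK : IsClosed K) {x : Cantor} (hx : x ∉ K) :
    ∃ m, ∀ y ∈ K, ¬ Agr m x y := by
  obtain ⟨m, hm⟩ := open_agr hK.isOpen_compl (x := x) hx
  exact ⟨m, fun y hy h => hm y h hy⟩

theorem eq_of_agr {x y : Cantor} (h : ∀ m, Agr m x y) : x = y :=
  funext fun i => h (i+1) i (Nat.lt_succ_self i)

/-- cells -/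
abbrev Idx := Σ m : ℕ, (Fin m → Bool)
def cell (p : Idx) : Set Cantor := {y | ∀ i : Fin p.1, y i = p.2 i}
def idx (x : Cantor) (m : ℕ) : Idx := ⟨m, fun i => x i⟩

theorem mem_cell_idx {x y : Cantor} {m : ℕ} : y ∈ cell (idx x m) ↔ Agr m x y := by
  constructor
  · intro h i hi
    exact (h ⟨i, hi⟩).symm
  · intro h i
    exact (h i i.2).symm

theorem self_mem_cell (x : Cantor) (m : ℕ) : x ∈ cell (idx x m) := mem_cell_idx.2 Agr.rfl

theorem isClopen_cell (p : Idx) : IsClopen (cell p) := by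
  refine isClopen_sat p.1 fun x hx y hxy i => ?_
  rw [← hxy i i.2]; exact hx i

theorem open_cell {O : Set Cantor} (hO : IsOpen O) {x : Cantor} (hx : x ∈ O) :
    ∃ m, cell (idx x m) ⊆ O := by
  obtain ⟨m, hm⟩ := open_agr hO hx
  exact ⟨m, fun y hy => hm y (mem_cell_idx.1 hy)⟩

def Side (X : Set Cantor) (b : Bool) (x : Cantor) : Prop := x ∈ X ↔ b = true

def Rep (X : Set Cantor) : ℕ → Bool → Set Cantor → Prop
  | 0, _, F => F = ∅
  | 1, b, F => F.Subsingleton ∧ ∀ x ∈ F, Side X b x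
  | n+2, b, F => ∃ 𝓔 : Set (Set Cantor), 𝓔.Countable ∧
      (∀ E ∈ 𝓔, IsClosed E ∧ E ⊆ F ∧ Rep X n (!b) E) ∧ ∀ x ∈ F, x ∉ ⋃₀ 𝓔 → Side X b x

def NwdIn (E Z : Set Cantor) : Prop :=
  ∀ O, IsOpen O → (Z ∩ O).Nonempty → ∃ x ∈ Z ∩ O, x ∉ E

def Good (X : Set Cantor) : ℕ → Bool → Set Cantor → Prop
  | 0, _, _ => False
  | 1, b, F => ∃ x, F = {x} ∧ Side X b x
  | 2, b, F => IsClosed F ∧ F.Nonempty ∧ (∀ x ∈ F, Side X b x) ∧ ∀ x ∈ F, NwdIn {x} F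
  | n+3, b, F => IsClosed F ∧ F.Nonempty ∧
      (∃ 𝓔 : Set (Set Cantor), 𝓔.Countable ∧
        (∀ E ∈ 𝓔, IsClosed E ∧ E ⊆ F ∧ Rep X (n+1) (!b) E ∧ NwdIn E F) ∧
        ∀ x ∈ F, x ∉ ⋃₀ 𝓔 → Side X b x) ∧
      ∀ O, IsOpen O → (F ∩ O).Nonempty → ∃ G, G ⊆ F ∩ O ∧ NwdIn G F ∧ Good X (n+1) (!b) G

theorem NwdIn.mono {E E' Z : Set Cantor} (h : NwdIn E Z) (hE : E' ⊆ E) : NwdIn E' Z := by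
  intro O hO hne
  obtain ⟨x, hx, hxE⟩ := h O hO hne
  exact ⟨x, hx, fun h => hxE (hE h)⟩

theorem NwdIn.restrict {E Z O : Set Cantor} (h : NwdIn E Z) (hO : IsOpen O) :
    NwdIn E (Z ∩ O) := by
  intro U hU hne
  rw [inter_assoc] at hne ⊢
  exact h _ (hO.inter hU) hne

theorem NwdIn.union {E E' Z : Set Cantor} (h : NwdIn E Z) (h' : NwdIn E' Z) (hE : IsClosed E) :
    NwdIn (E ∪ E') Z := by
  intro O hO hne
  obtain ⟨x, hx, hxE⟩ := h O hO hne
  obtain ⟨y, hy, hyE⟩ := h' (O ∩ Eᶜ) (hO.inter hE.isOpen_compl) ⟨x, hx.1, hx.2, hxE⟩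
  exact ⟨y, ⟨hy.1, hy.2.1⟩, fun h => h.elim hy.2.2 hyE⟩

theorem Rep.subset {X : Set Cantor} : ∀ (n : ℕ) {b : Bool} {F F' : Set Cantor},
    Rep X n b F → IsClosed F' → F' ⊆ F → Rep X n b F'
  | 0, b, F, F', h, _, hs => by
      have h : F = ∅ := h
      exact subset_empty_iff.1 (h ▸ hs)
  | 1, b, F, F', h, _, hs => ⟨h.1.anti hs, fun x hx => h.2 x (hs hx)⟩
  | n+2, b, F, F', h, hc, hs => by
      obtain ⟨𝓔, hcount, hE, hrest⟩ := h
      refine ⟨(fun E => E ∩ F') '' 𝓔, hcount.image _, ?_, ?_⟩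
      · rintro _ ⟨E, hE', rfl⟩
        obtain ⟨h1, h2, h3⟩ := hE E hE'
        exact ⟨h1.inter hc, inter_subset_right, Rep.subset n h3 (h1.inter hc) inter_subset_left⟩
      · intro x hx hx'
        refine hrest x (hs hx) fun ⟨E, hE', hxE⟩ => hx' ⟨E ∩ F', ⟨E, hE', rfl⟩, hxE, hx⟩

theorem Rep.succ {X : Set Cantor} : ∀ (n : ℕ) {b : Bool} {F : Set Cantor},
    Rep X n b F → Rep X (n+1) b F
  | 0, b, F, h => by
      have h : F = ∅ := h
      subst h
      exact ⟨subsingleton_empty, by simp⟩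
  | 1, b, F, h => ⟨∅, countable_empty, by simp, fun x hx _ => h.2 x hx⟩
  | n+2, b, F, h => by
      obtain ⟨𝓔, hcount, hE, hrest⟩ := h
      exact ⟨𝓔, hcount, fun E hE' => ⟨(hE E hE').1, (hE E hE').2.1, Rep.succ n (hE E hE').2.2⟩,
        hrest⟩

theorem Rep.empty {X : Set Cantor} : ∀ (n : ℕ) {b : Bool}, Rep X n b ∅
  | 0, _ => rfl
  | n+1, _ => Rep.succ n (Rep.empty n)

theorem Good.closed {X : Set Cantor} : ∀ {n : ℕ} {b : Bool} {F : Set Cantor},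
    Good X n b F → IsClosed F
  | 1, b, F, h => by obtain ⟨x, rfl, _⟩ := h; exact isClosed_singleton
  | 2, b, F, h => h.1
  | n+3, b, F, h => h.1

theorem Good.nonempty {X : Set Cantor} : ∀ {n : ℕ} {b : Bool} {F : Set Cantor},
    Good X n b F → F.Nonempty
  | 1, b, F, h => by obtain ⟨x, rfl, _⟩ := h; exact singleton_nonempty x
  | 2, b, F, h => h.2.1
  | n+3, b, F, h => h.2.1

theorem Good.rep {X : Set Cantor} : ∀ {n : ℕ} {b : Bool} {F : Set Cantor},
    Good X n b F → Rep X n b F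
  | 1, b, F, h => by
      obtain ⟨x, rfl, hx⟩ := h
      exact ⟨subsingleton_singleton, by rintro y rfl; exact hx⟩
  | 2, b, F, h => ⟨∅, countable_empty, by simp, fun x hx _ => h.2.2.1 x hx⟩
  | n+3, b, F, h => by
      obtain ⟨𝓔, hcount, hE, hrest⟩ := h.2.2.1
      exact ⟨𝓔, hcount, fun E hE' => ⟨(hE E hE').1, (hE E hE').2.1, (hE E hE').2.2.1⟩, hrest⟩

theorem Good.restrict {X : Set Cantor} : ∀ {n : ℕ} {b : Bool} {F O : Set Cantor},
    Good X n b F → IsClopen O → (F ∩ O).Nonempty → Good X n b (F ∩ O)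
  | 1, b, F, O, h, hO, hne => by
      obtain ⟨x, rfl, hx⟩ := h
      refine ⟨x, ?_, hx⟩
      obtain ⟨y, hy, hyO⟩ := hne
      have hy : y = x := hy
      subst hy
      exact inter_eq_left.2 (singleton_subset_iff.2 hyO)
  | 2, b, F, O, h, hO, hne =>
      ⟨h.1.inter hO.1, hne, fun x hx => h.2.2.1 x hx.1,
        fun x hx => (h.2.2.2 x hx.1).restrict hO.2⟩
  | n+3, b, F, O, h, hO, hne => by
      obtain ⟨h1, h2, ⟨𝓔, hcount, hE, hrest⟩, h4⟩ := h
      refine ⟨h1.inter hO.1, hne, ⟨(fun E => E ∩ O) '' 𝓔, hcount.image _, ?_, ?_⟩, ?_⟩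
      · rintro _ ⟨E, hE', rfl⟩
        obtain ⟨h1, h2, h3, h4⟩ := hE E hE'
        exact ⟨h1.inter hO.1, inter_subset_inter_left _ h2,
          Rep.subset _ h3 (h1.inter hO.1) inter_subset_left,
          (h4.restrict hO.2).mono inter_subset_left⟩
      · intro x hx hx'
        refine hrest x hx.1 fun ⟨E, hE', hxE⟩ => hx' ⟨E ∩ O, ⟨E, hE', rfl⟩, hxE, hx.2⟩
      · intro U hU hne
        rw [inter_assoc] at hne ⊢
        obtain ⟨G, hG1, hG2, hG3⟩ := h4 _ (hO.2.inter hU) hne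
        exact ⟨G, hG1, hG2.restrict hO.2, hG3⟩

def Small (X : Set Cantor) (n : ℕ) (F : Set Cantor) : Prop :=
  ∃ 𝓔 : Set (Set Cantor), 𝓔.Countable ∧ (∀ E ∈ 𝓔, IsClosed E ∧ ∃ b, Rep X n b E) ∧ F ⊆ ⋃₀ 𝓔

theorem Small.of_rep {X : Set Cantor} {n : ℕ} {b : Bool} {F : Set Cantor} (hF : IsClosed F)
    (h : Rep X n b F) : Small X n F :=
  ⟨{F}, countable_singleton F, by rintro E rfl; exact ⟨hF, b, h⟩, by simp⟩

theorem Small.subset {X : Set Cantor} {n : ℕ} {F F' : Set Cantor}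
    (h : Small X n F) (hs : F' ⊆ F) : Small X n F' := by
  obtain ⟨𝓔, h1, h2, h3⟩ := h
  exact ⟨𝓔, h1, h2, hs.trans h3⟩

theorem Small.iUnion {X : Set Cantor} {n : ℕ} {ι : Type*} [Countable ι] {F : ι → Set Cantor}
    (h : ∀ i, Small X n (F i)) : Small X n (⋃ i, F i) := by
  choose 𝓔 h1 h2 h3 using h
  refine ⟨⋃ i, 𝓔 i, countable_iUnion h1, ?_, ?_⟩
  · intro E hE
    obtain ⟨i, hi⟩ := mem_iUnion.1 hE
    exact h2 i E hi
  · intro x hx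
    obtain ⟨i, hi⟩ := mem_iUnion.1 hx
    obtain ⟨E, hE, hxE⟩ := h3 i hi
    exact ⟨E, mem_iUnion.2 ⟨i, hE⟩, hxE⟩

theorem absorb_one {X : Set Cantor} (n : ℕ) (b b' : Bool) {D : Set Cantor} (hD : IsClosed D)
    (h : Rep X n b' D) : ∃ 𝓔 : Set (Set Cantor), 𝓔.Countable ∧
      (∀ E ∈ 𝓔, IsClosed E ∧ E ⊆ D ∧ Rep X n (!b) E) ∧ ∀ x ∈ D, x ∉ ⋃₀ 𝓔 → Side X b x := by
  by_cases hb : b' = !b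
  · subst hb
    exact ⟨{D}, countable_singleton _, by rintro E rfl; exact ⟨hD, Subset.rfl, h⟩,
      fun x hx hx' => (hx' ⟨D, rfl, hx⟩).elim⟩
  · have hb : b' = b := by revert hb; cases b <;> cases b' <;> simp
    subst hb
    match n, h with
    | 0, h =>
      have h : D = ∅ := h
      exact ⟨∅, countable_empty, by simp, by simp [h]⟩
    | 1, h => exact ⟨∅, countable_empty, by simp, fun x hx _ => h.2 x hx⟩
    | n+2, h =>
      obtain ⟨𝓔, hcount, hE, hrest⟩ := h
      exact ⟨𝓔, hcount, fun E hE' => ⟨(hE E hE').1, (hE E hE').2.1,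
        Rep.succ _ (Rep.succ _ (hE E hE').2.2)⟩, hrest⟩

theorem absorb {X : Set Cantor} {n : ℕ} {b : Bool} {F : Set Cantor} (hF : IsClosed F)
    {𝓓 : Set (Set Cantor)} (hc : 𝓓.Countable) (hD : ∀ D ∈ 𝓓, IsClosed D ∧ ∃ b', Rep X n b' D)
    (hrest : ∀ x ∈ F, x ∉ ⋃₀ 𝓓 → Side X b x) : Rep X (n+2) b F := by
  have key : ∀ D : 𝓓, ∃ 𝓔 : Set (Set Cantor), 𝓔.Countable ∧
      (∀ E ∈ 𝓔, IsClosed E ∧ E ⊆ D.1 ∩ F ∧ Rep X n (!b) E) ∧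
      ∀ x ∈ D.1 ∩ F, x ∉ ⋃₀ 𝓔 → Side X b x := by
    intro D
    obtain ⟨h1, b', h2⟩ := hD D.1 D.2
    exact absorb_one n b b' (h1.inter hF) (Rep.subset n h2 (h1.inter hF) inter_subset_left)
  choose 𝓔 h1 h2 h3 using key
  have := hc.to_subtype
  refine ⟨⋃ D, 𝓔 D, countable_iUnion h1, ?_, ?_⟩
  · intro E hE
    obtain ⟨D, hD'⟩ := mem_iUnion.1 hE
    obtain ⟨a, b, c⟩ := h2 D E hD'
    exact ⟨a, b.trans inter_subset_right, c⟩
  · intro x hx hx'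
    by_cases hx2 : x ∈ ⋃₀ 𝓓
    · obtain ⟨D, hDm, hxD⟩ := hx2
      refine h3 ⟨D, hDm⟩ x ⟨hxD, hx⟩ fun ⟨E, hE, hxE⟩ => hx' ⟨E, mem_iUnion.2 ⟨_, hE⟩, hxE⟩
    · exact hrest x hx hx2

/-- the core of the derivation argument -/
theorem good_of_core {X : Set Cantor} (n : ℕ)
    (ih : ∀ m, m + 2 = n → ∀ (b : Bool) (F : Set Cantor), IsClosed F → Rep X (m+1) b F →
      (∃ G ⊆ F, Good X (m+1) b G) ∨ Small X m F)
    (b : Bool) (F : Set Cantor) (hF : IsClosed F) (hne : F.Nonempty) (h : Rep X (n+1) b F)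
    (hns : ∀ p, (F ∩ cell p).Nonempty → ¬ Small X n (F ∩ cell p)) : Good X (n+1) b F := by
  match n, ih, h, hns with
  | 0, _, h, _ =>
    obtain ⟨x, hx⟩ := hne
    exact ⟨x, h.1.eq_singleton_of_mem hx, h.2 x hx⟩
  | 1, _, h, hns =>
    obtain ⟨𝓔, hcount, hE, hrest⟩ := h
    have hS : ∀ x ∈ F, Side X b x := by
      intro x hx
      refine hrest x hx ?_
      rintro ⟨E, hE', hxE⟩
      have : E = ∅ := (hE E hE').2.2
      simp [this] at hxE
    refine ⟨hF, hne, hS, ?_⟩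
    rintro x hx O hO ⟨y, hy, hyO⟩
    by_contra hcon
    push Not at hcon
    obtain ⟨m, hm⟩ := open_cell hO hyO
    refine hns (idx y m) ⟨y, hy, self_mem_cell y m⟩ ?_
    refine Small.of_rep (b := b) (hF.inter (isClopen_cell _).1) ⟨?_, fun z hz => hS z hz.1⟩
    intro z hz w hw
    have h1 : z = x := hcon z ⟨hz.1, hm hz.2⟩
    have h2 : w = x := hcon w ⟨hw.1, hm hw.2⟩
    rw [h1, h2]
  | n+2, ih, h, hns =>
    obtain ⟨𝓔, hcount, hE, hrest⟩ := h
    have hnwd : ∀ E ∈ 𝓔, NwdIn E F := by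
      intro E hE' O hO ⟨y, hy, hyO⟩
      by_contra hcon
      push Not at hcon
      obtain ⟨m, hm⟩ := open_cell hO hyO
      refine hns (idx y m) ⟨y, hy, self_mem_cell y m⟩ ?_
      have hcl := hF.inter (isClopen_cell (idx y m)).1
      refine Small.of_rep (b := !b) hcl (Rep.succ _ (Rep.subset _ (hE E hE').2.2 hcl ?_))
      exact fun z hz => hcon z ⟨hz.1, hm hz.2⟩
    refine ⟨hF, hne, ⟨𝓔, hcount, fun E hE' => ⟨(hE E hE').1, (hE E hE').2.1, (hE E hE').2.2,
      hnwd E hE'⟩, hrest⟩, ?_⟩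
    rintro O hO ⟨y, hy, hyO⟩
    obtain ⟨m, hm⟩ := open_cell hO hyO
    by_contra hcon
    refine hns (idx y m) ⟨y, hy, self_mem_cell y m⟩ ?_
    have hcl := hF.inter (isClopen_cell (idx y m)).1
    have key : ∀ E : 𝓔, Small X n (E.1 ∩ (F ∩ cell (idx y m))) := by
      rintro ⟨E, hE'⟩
      obtain ⟨e1, e2, e3⟩ := hE E hE'
      have := ih n rfl (!b) (E ∩ (F ∩ cell (idx y m))) (e1.inter hcl)
        (Rep.subset _ e3 (e1.inter hcl) inter_subset_left)
      refine this.resolve_left ?_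
      rintro ⟨G, hGs, hG⟩
      refine hcon ⟨G, fun z hz => ⟨(hGs hz).2.1, hm (hGs hz).2.2⟩,
        (hnwd E hE').mono (hGs.trans inter_subset_left), hG⟩
    have := hcount.to_subtype
    obtain ⟨𝓓, d1, d2, d3⟩ := Small.iUnion key
    refine Small.of_rep (b := b) hcl (absorb hcl d1 d2 ?_)
    intro x hx hx'
    refine hrest x hx.1 ?_
    rintro ⟨E, hE', hxE⟩
    exact hx' (d3 (mem_iUnion.2 ⟨⟨E, hE'⟩, hxE, hx⟩))

theorem good_or_small {X : Set Cantor} (n : ℕ) : ∀ (b : Bool) (F : Set Cantor), IsClosed F →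
    Rep X (n+1) b F → (∃ G ⊆ F, Good X (n+1) b G) ∨ Small X n F := by
  induction n using Nat.strong_induction_on with
  | _ n ih =>
  intro b F hF h
  let B := {p : Idx // Small X n (F ∩ cell p)}
  let F' := F \ ⋃ p : B, cell p.1
  have hsm : Small X n (⋃ p : B, (F ∩ cell p.1)) := Small.iUnion fun p => p.2
  have hF' : IsClosed F' := by
    refine hF.sdiff (isOpen_iUnion fun p => (isClopen_cell _).2)
  have hdec : F ⊆ F' ∪ ⋃ p : B, (F ∩ cell p.1) := by
    intro x hx
    by_cases hx' : x ∈ ⋃ p : B, cell p.1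
    · right
      obtain ⟨p, hp⟩ := mem_iUnion.1 hx'
      exact mem_iUnion.2 ⟨p, hx, hp⟩
    · exact Or.inl ⟨hx, hx'⟩
  by_cases hne : F'.Nonempty
  · left
    refine ⟨F', sdiff_subset, good_of_core n (fun m hm => ih m (by omega)) b F' hF' hne
      (Rep.subset _ h hF' sdiff_subset) ?_⟩
    rintro p ⟨x, hx, hxp⟩ hs
    have : Small X n (F ∩ cell p) := by
      have hu : Small X n (⋃ i : Bool, if i then F' ∩ cell p else ⋃ p : B, (F ∩ cell p.1)) := by
        refine Small.iUnion fun i => ?_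
        cases i
        · simpa using hsm
        · simpa using hs
      refine hu.subset ?_
      intro y hy
      rcases hdec hy.1 with h | h
      · exact mem_iUnion.2 ⟨true, by simpa using ⟨h, hy.2⟩⟩
      · exact mem_iUnion.2 ⟨false, by simpa using h⟩
    exact hx.2 (mem_iUnion.2 ⟨⟨p, this⟩, hxp⟩)
  · right
    rw [not_nonempty_iff_eq_empty] at hne
    refine hsm.subset ?_
    rw [hne, empty_union] at hdec
    exact hdec

theorem good_core {X : Set Cantor} (n : ℕ)
    (b : Bool) (F : Set Cantor) (hF : IsClosed F) (hne : F.Nonempty) (h : Rep X (n+1) b F)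
    (hns : ∀ p, (F ∩ cell p).Nonempty → ¬ Small X n (F ∩ cell p)) : Good X (n+1) b F :=
  good_of_core n (fun m _ => good_or_small m) b F hF hne h hns

end SF

namespace SF

theorem exists_enlarge_aux {Z F : Set Cantor} (hZ : IsClosed Z) (hZne : Z.Nonempty) (hFZ : F ⊆ Z) (hF : IsClosed F) (hnwd : NwdIn F Z)
    (𝓖 : Set Cantor → Prop) (hcl : ∀ G, 𝓖 G → IsClosed G)
    (hG : ∀ O, IsOpen O → (Z ∩ O).Nonempty → ∃ G, G ⊆ Z ∩ O ∧ NwdIn G Z ∧ G.Nonempty ∧ 𝓖 G) :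
    ∃ (H : Set Cantor) (I : Set Idx) (g : Idx → Set Cantor), H.Nonempty ∧ H = F ∪ ⋃ t ∈ I, g t ∧ IsClosed H ∧
      H ⊆ Z ∧ NwdIn H Z ∧ (∀ t ∈ I, 𝓖 (g t) ∧ g t ⊆ cell t ∧ Disjoint (cell t) F) ∧
      (∀ t ∈ I, ∀ t' ∈ I, t ≠ t' → Disjoint (cell t) (cell t')) ∧
      ∀ V, IsOpen V → (V ∩ H).Nonempty → ∃ t ∈ I, (V ∩ g t).Nonempty := by
  classical
  let I : Set Idx := {t | (∃ z ∈ Z, ∃ m, t = idx z m ∧ (∀ y ∈ F, ¬ Agr m z y) ∧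
    ∀ k < m, ∃ y ∈ F, Agr k z y)}
  have hne : ∀ t ∈ I, (Z ∩ cell t).Nonempty := by
    rintro t ⟨z, hz, m, rfl, -⟩
    exact ⟨z, hz, self_mem_cell z m⟩
  have hch : ∀ t : Idx, ∃ G, t ∈ I → (G ⊆ Z ∩ cell t ∧ NwdIn G Z ∧ G.Nonempty ∧ 𝓖 G) := by
    intro t
    by_cases ht : t ∈ I
    · obtain ⟨G, hG⟩ := hG (cell t) (isClopen_cell t).2 (hne t ht)
      exact ⟨G, fun _ => hG⟩
    · exact ⟨∅, fun h => (ht h).elim⟩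
  choose g hg using hch
  have hdisF : ∀ t ∈ I, Disjoint (cell t) F := by
    rintro t ⟨z, hz, m, rfl, h1, h2⟩
    rw [Set.disjoint_left]
    intro y hy hyF
    exact h1 y hyF (mem_cell_idx.1 hy)
  have hdis : ∀ t ∈ I, ∀ t' ∈ I, t ≠ t' → Disjoint (cell t) (cell t') := by
    rintro t ⟨z, hz, m, rfl, h1, h2⟩ t' ⟨z', hz', m', rfl, h1', h2'⟩ hne
    rw [Set.disjoint_left]
    intro y hy hy'
    rw [mem_cell_idx] at hy hy'
    have hm : m = m' := by
      rcases lt_trichotomy m m' with h | h | h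
      · obtain ⟨w, hw, hw'⟩ := h2' m h
        exact (h1 w hw ((hy.trans (hy'.mono h.le).symm).trans hw')).elim
      · exact h
      · obtain ⟨w, hw, hw'⟩ := h2 m' h
        exact (h1' w hw ((hy'.trans (hy.mono h.le).symm).trans hw')).elim
    subst hm
    apply hne
    have : Agr m z z' := hy.trans hy'.symm
    unfold idx
    congr 1
    funext i
    exact this i i.2
  -- every point of `Z \ F` is in a cell of `I`
  have hfind : ∀ z ∈ Z, z ∉ F → ∃ m, idx z m ∈ I ∧ ∀ k < m, ∃ y ∈ F, Agr k z y := by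
    intro z hz hzF
    have hex := closed_agr hF hzF
    refine ⟨Nat.find hex, ⟨z, hz, _, rfl, Nat.find_spec hex, ?_⟩, ?_⟩ <;>
    · intro k hk
      have := Nat.find_min hex hk
      push Not at this
      exact this
  have hcap : ∀ t ∈ I, (F ∪ ⋃ t ∈ I, g t) ∩ cell t = g t := by
    intro t ht
    ext y
    constructor
    · rintro ⟨hy | hy, hyt⟩
      · exact (Set.disjoint_left.1 (hdisF t ht) hyt hy).elim
      · simp only [mem_iUnion] at hy
        obtain ⟨t', ht', hy⟩ := hy
        by_cases h : t = t'
        · rwa [h]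
        · exact (Set.disjoint_left.1 (hdis t ht t' ht' h) hyt ((hg t' ht').1 hy).2).elim
    · intro hy
      refine ⟨Or.inr ?_, ((hg t ht).1 hy).2⟩
      simp only [mem_iUnion]
      exact ⟨t, ht, hy⟩
  have hHZ : (F ∪ ⋃ t ∈ I, g t) ⊆ Z := by
    refine union_subset hFZ ?_
    intro y hy
    simp only [mem_iUnion] at hy
    obtain ⟨t, ht, hy⟩ := hy
    exact ((hg t ht).1 hy).1
  have hacc : ∀ V, IsOpen V → (V ∩ (F ∪ ⋃ t ∈ I, g t)).Nonempty →
      ∃ t ∈ I, (V ∩ g t).Nonempty := by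
    rintro V hV ⟨x, hxV, hx | hx⟩
    · obtain ⟨m, hm⟩ := open_cell hV hxV
      obtain ⟨z, hz, hzF⟩ := hnwd (cell (idx x m)) (isClopen_cell _).2
        ⟨x, hFZ hx, self_mem_cell x m⟩
      obtain ⟨k, hk, hk'⟩ := hfind z hz.1 hzF
      have hxz := mem_cell_idx.1 hz.2
      have hmk : m ≤ k := by
        by_contra hlt
        push Not at hlt
        exact Set.disjoint_left.1 (hdisF _ hk) (mem_cell_idx.2 (hxz.symm.mono hlt.le)) hx
      refine ⟨_, hk, ?_⟩
      obtain ⟨h1, h2, ⟨w, hw⟩, h4⟩ := hg _ hk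
      refine ⟨w, hm (mem_cell_idx.2 ?_), hw⟩
      exact hxz.trans ((mem_cell_idx.1 (h1 hw).2).mono hmk)
    · simp only [mem_iUnion] at hx
      obtain ⟨t, ht, hx⟩ := hx
      exact ⟨t, ht, x, hxV, hx⟩
  refine ⟨F ∪ ⋃ t ∈ I, g t, I, g, ?_, rfl, ?_, hHZ, ?_,
    fun t ht => ⟨(hg t ht).2.2.2, (hg t ht).1.trans inter_subset_right, hdisF t ht⟩, hdis, hacc⟩
  · obtain ⟨x, hx⟩ := hZne
    by_cases hxF : x ∈ F
    · exact ⟨x, Or.inl hxF⟩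
    · obtain ⟨m, hm, -⟩ := hfind x hx hxF
      obtain ⟨w, hw⟩ := (hg _ hm).2.2.1
      exact ⟨w, Or.inr (mem_iUnion₂.2 ⟨_, hm, hw⟩)⟩
  · -- closedness
    rw [← isOpen_compl_iff, isOpen_iff_forall_mem_open]
    intro y hy
    by_cases hyZ : y ∈ Z
    · obtain ⟨m, hm, -⟩ := hfind y hyZ (fun h => hy (Or.inl h))
      refine ⟨cell (idx y m) ∩ (g (idx y m))ᶜ, ?_,
        (isClopen_cell _).2.inter (hcl _ (hg _ hm).2.2.2).isOpen_compl, self_mem_cell y m, ?_⟩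
      · rintro w ⟨hw1, hw2⟩ hw
        apply hw2
        rw [← hcap _ hm]
        exact ⟨hw, hw1⟩
      · intro h
        exact hy (Or.inr (mem_iUnion₂.2 ⟨_, hm, h⟩))
    · exact ⟨Zᶜ, compl_subset_compl.2 hHZ, hZ.isOpen_compl, hyZ⟩
  · -- nowhere dense
    rintro O hO ⟨x, hx, hxO⟩
    obtain ⟨y, hy, hyF⟩ := hnwd O hO ⟨x, hx, hxO⟩
    obtain ⟨m, hm, -⟩ := hfind y hy.1 hyF
    obtain ⟨w, hw, hwg⟩ := (hg _ hm).2.1 (O ∩ cell (idx y m)) (hO.inter (isClopen_cell _).2)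
      ⟨y, hy.1, hy.2, self_mem_cell y m⟩
    refine ⟨w, ⟨hw.1, hw.2.1⟩, fun hw' => hwg ?_⟩
    rw [← hcap _ hm]
    exact ⟨hw', hw.2.2⟩

theorem enlarge {X Z F : Set Cantor} {n : ℕ} {b : Bool} (hZ : IsClosed Z) (hFZ : F ⊆ Z) (hF : IsClosed F)
    (hnwd : NwdIn F Z) (hne : Z.Nonempty)
    (hG : ∀ O, IsOpen O → (Z ∩ O).Nonempty → ∃ G, G ⊆ Z ∩ O ∧ NwdIn G Z ∧ Good X (n+1) b G)
    (hrep : Rep X (n+1) b F) : ∃ H, F ⊆ H ∧ H ⊆ Z ∧ NwdIn H Z ∧ Good X (n+1) b H := by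
  match n, hG, hrep with
  | 0, hG, hrep =>
    rcases F.eq_empty_or_nonempty with rfl | ⟨x, hx⟩
    · obtain ⟨G, h1, h2, h3⟩ := hG univ isOpen_univ (by simpa using hne)
      exact ⟨G, empty_subset _, h1.trans inter_subset_left, h2, h3⟩
    · exact ⟨F, Subset.rfl, hFZ, hnwd, x, hrep.1.eq_singleton_of_mem hx, hrep.2 x hx⟩
  | 1, hG, hrep =>
    obtain ⟨H, I, g, hHne, hH, hHc, hHZ, hHn, h1, h2, h3⟩ := exists_enlarge_aux hZ hne hFZ hF hnwd
      (Good X 2 b) (fun _ => Good.closed) (fun O hO hne => by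
        obtain ⟨G, h1, h2, h3⟩ := hG O hO hne
        exact ⟨G, h1, h2, h3.nonempty, h3⟩)
    have hgH : ∀ t ∈ I, g t ⊆ H := by
      intro t ht y hy
      rw [hH]
      exact Or.inr (mem_iUnion₂.2 ⟨t, ht, hy⟩)
    have hFH : F ⊆ H := by rw [hH]; exact subset_union_left
    refine ⟨H, hFH, hHZ, hHn, hHc, hHne, ?_, ?_⟩
    · intro x hx
      rw [hH] at hx
      rcases hx with hx | hx
      · obtain ⟨𝓔, _, hE, hr⟩ := hrep
        refine hr x hx ?_
        rintro ⟨E, hE', hxE⟩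
        have : E = ∅ := (hE E hE').2.2
        simp [this] at hxE
      · obtain ⟨t, ht, hx⟩ := mem_iUnion₂.1 hx
        exact (h1 t ht).1.2.2.1 x hx
    · intro x hx O hO ⟨y, hy, hyO⟩
      obtain ⟨t, ht, z, hzO, hz⟩ := h3 O hO ⟨y, hyO, hy⟩
      by_cases hzx : z = x
      · subst hzx
        obtain ⟨w, hw, hwz⟩ := (h1 t ht).1.2.2.2 z hz O hO ⟨z, hz, hzO⟩
        exact ⟨w, ⟨hgH t ht hw.1, hw.2⟩, hwz⟩
      · exact ⟨z, ⟨hgH t ht hz, hzO⟩, hzx⟩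
  | n+2, hG, hrep =>
    obtain ⟨H, I, g, hHne, hH, hHc, hHZ, hHn, h1, h2, h3⟩ := exists_enlarge_aux hZ hne hFZ hF hnwd
      (Good X (n+3) b) (fun _ => Good.closed) (fun O hO hne => by
        obtain ⟨G, h1, h2, h3⟩ := hG O hO hne
        exact ⟨G, h1, h2, h3.nonempty, h3⟩)
    have hgH : ∀ t ∈ I, g t ⊆ H := by
      intro t ht y hy
      rw [hH]
      exact Or.inr (mem_iUnion₂.2 ⟨t, ht, hy⟩)
    have hFH : F ⊆ H := by rw [hH]; exact subset_union_left
    have hn1 : NwdIn F H := by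
      intro O hO ⟨y, hy, hyO⟩
      obtain ⟨t, ht, z, hzO, hz⟩ := h3 O hO ⟨y, hyO, hy⟩
      exact ⟨z, ⟨hgH t ht hz, hzO⟩, Set.disjoint_left.1 (h1 t ht).2.2 ((h1 t ht).2.1 hz)⟩
    have hn2 : ∀ t ∈ I, ∀ E, E ⊆ g t → NwdIn E (g t) → NwdIn E H := by
      intro t ht E hE hn O hO ⟨y, hy, hyO⟩
      obtain ⟨t', ht', z, hzO, hz⟩ := h3 O hO ⟨y, hyO, hy⟩
      by_cases h : t = t'
      · subst h
        obtain ⟨w, hw, hwE⟩ := hn O hO ⟨z, hz, hzO⟩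
        exact ⟨w, ⟨hgH t ht hw.1, hw.2⟩, hwE⟩
      · refine ⟨z, ⟨hgH t' ht' hz, hzO⟩, fun hzE => ?_⟩
        exact Set.disjoint_left.1 (h2 t ht t' ht' h) ((h1 t ht).2.1 (hE hzE)) ((h1 t' ht').2.1 hz)
    refine ⟨H, hFH, hHZ, hHn, hHc, hHne, ?_, ?_⟩
    · obtain ⟨𝓔, hc, hE, hr⟩ := hrep
      have hg : ∀ t : I, ∃ 𝓔 : Set (Set Cantor), 𝓔.Countable ∧
        (∀ E ∈ 𝓔, IsClosed E ∧ E ⊆ g t ∧ Rep X (n+1) (!b) E ∧ NwdIn E (g t)) ∧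
        ∀ x ∈ g t, x ∉ ⋃₀ 𝓔 → Side X b x := fun t => (h1 t.1 t.2).1.2.2.1
      choose 𝓓 d1 d2 d3 using hg
      refine ⟨𝓔 ∪ ⋃ t, 𝓓 t, hc.union (countable_iUnion d1), ?_, ?_⟩
      · rintro E (hE' | hE')
        · obtain ⟨e1, e2, e3⟩ := hE E hE'
          exact ⟨e1, e2.trans hFH, e3, hn1.mono e2⟩
        · obtain ⟨t, hE'⟩ := mem_iUnion.1 hE'
          obtain ⟨e1, e2, e3, e4⟩ := d2 t E hE'
          exact ⟨e1, e2.trans (hgH t.1 t.2), e3, hn2 t.1 t.2 E e2 e4⟩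
      · intro x hx hx'
        rw [hH] at hx
        rcases hx with hx | hx
        · exact hr x hx fun ⟨E, hE', hxE⟩ => hx' ⟨E, Or.inl hE', hxE⟩
        · obtain ⟨t, ht, hx⟩ := mem_iUnion₂.1 hx
          exact d3 ⟨t, ht⟩ x hx fun ⟨E, hE', hxE⟩ =>
            hx' ⟨E, Or.inr (mem_iUnion.2 ⟨⟨t, ht⟩, hE'⟩), hxE⟩
    · rintro O hO ⟨y, hy, hyO⟩
      obtain ⟨t, ht, z, hzO, hz⟩ := h3 O hO ⟨y, hyO, hy⟩
      obtain ⟨G, g1, g2, g3⟩ := (h1 t ht).1.2.2.2 O hO ⟨z, hz, hzO⟩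
      exact ⟨G, fun w hw => ⟨hgH t ht (g1 hw).1, (g1 hw).2⟩,
        hn2 t ht G (g1.trans inter_subset_left) g2, g3⟩

end SF

namespace SF

structure SideData (X Z : Set Cantor) (b : Bool) (𝓕 : Set (Set Cantor)) (Fs : ℕ → Set Cantor) :
    Prop where
  closed : IsClosed Z
  ne : Z.Nonempty
  h1 : ∀ F ∈ 𝓕, IsClosed F ∧ F.Nonempty ∧ F ⊆ Z ∧ NwdIn F Z
  h2 : ∀ O, IsOpen O → (Z ∩ O).Nonempty → ∃ F ∈ 𝓕, F ⊆ Z ∩ O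
  h3 : ∀ i O, IsClopen O → (Fs i ∩ O).Nonempty → Fs i ∩ O ∈ 𝓕
  h4 : ∀ z ∈ Z, (∀ i, z ∉ Fs i) → Side X b z

structure PIso (X Y : Set Cantor) (Γ : Set (Cantor × Cantor)) : Prop where
  cpt : IsCompact Γ
  resp : ∀ p ∈ Γ, (p.1 ∈ X ↔ p.2 ∈ Y)
  inj1 : ∀ p ∈ Γ, ∀ q ∈ Γ, p.1 = q.1 → p = q
  inj2 : ∀ p ∈ Γ, ∀ q ∈ Γ, p.2 = q.2 → p = q

def Iso (X Y F G : Set Cantor) : Prop :=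
  ∃ Γ, PIso X Y Γ ∧ Prod.fst '' Γ = F ∧ Prod.snd '' Γ = G

theorem PIso.union {X Y : Set Cantor} {Γ Γ' : Set (Cantor × Cantor)} (h : PIso X Y Γ)
    (h' : PIso X Y Γ') (d1 : ∀ p ∈ Γ, ∀ q ∈ Γ', p.1 ≠ q.1) (d2 : ∀ p ∈ Γ, ∀ q ∈ Γ', p.2 ≠ q.2) :
    PIso X Y (Γ ∪ Γ') := by
  refine ⟨h.cpt.union h'.cpt, ?_, ?_, ?_⟩
  · rintro p (hp | hp)
    · exact h.resp p hp
    · exact h'.resp p hp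
  · rintro p (hp | hp) q (hq | hq) he
    · exact h.inj1 p hp q hq he
    · exact (d1 p hp q hq he).elim
    · exact (d1 q hq p hp he.symm).elim
    · exact h'.inj1 p hp q hq he
  · rintro p (hp | hp) q (hq | hq) he
    · exact h.inj2 p hp q hq he
    · exact (d2 p hp q hq he).elim
    · exact (d2 q hq p hp he.symm).elim
    · exact h'.inj2 p hp q hq he

theorem PIso.swap {X Y : Set Cantor} {Γ : Set (Cantor × Cantor)} (h : PIso X Y Γ) :
    PIso Y X (Prod.swap '' Γ) := by
  refine ⟨h.cpt.image continuous_swap, ?_, ?_, ?_⟩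
  · rintro _ ⟨p, hp, rfl⟩
    exact (h.resp p hp).symm
  · rintro _ ⟨p, hp, rfl⟩ _ ⟨q, hq, rfl⟩ he
    rw [h.inj2 p hp q hq he]
  · rintro _ ⟨p, hp, rfl⟩ _ ⟨q, hq, rfl⟩ he
    rw [h.inj1 p hp q hq he]

theorem isClopen_agr2 (m : ℕ) : IsClopen {p : Cantor × Cantor | Agr m p.1 p.2} := by
  have : {p : Cantor × Cantor | Agr m p.1 p.2} =
      ⋂ i ∈ Finset.range m, {p : Cantor × Cantor | p.1 i = p.2 i} := by
    ext y
    simp [Agr]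
  rw [this]
  refine isClopen_biInter_finset fun i _ => ?_
  have hc : Continuous fun p : Cantor × Cantor => (p.1 i, p.2 i) := by fun_prop
  exact (isClopen_discrete {q : Bool × Bool | q.1 = q.2}).preimage hc

theorem unif {Γ : Set (Cantor × Cantor)} (hc : IsCompact Γ)
    (inj : ∀ p ∈ Γ, ∀ q ∈ Γ, p.1 = q.1 → p = q) (k : ℕ) :
    ∃ m, ∀ p ∈ Γ, ∀ q ∈ Γ, Agr m p.1 q.1 → Agr k p.2 q.2 := by
  by_contra hcon
  push Not at hcon
  let K : ℕ → Set ((Cantor × Cantor) × (Cantor × Cantor)) := fun m =>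
    (Γ ×ˢ Γ) ∩ ({z | ¬ Agr k z.1.2 z.2.2} ∩ {z | Agr m z.1.1 z.2.1})
  have c1 : ∀ m, IsClosed {z : (Cantor × Cantor) × (Cantor × Cantor) | Agr m z.1.1 z.2.1} := by
    intro m
    have hc : Continuous fun z : (Cantor × Cantor) × (Cantor × Cantor) => (z.1.1, z.2.1) := by
      fun_prop
    exact (isClopen_agr2 m).1.preimage hc
  have c2 : IsClosed {z : (Cantor × Cantor) × (Cantor × Cantor) | ¬ Agr k z.1.2 z.2.2} := by
    have hc : Continuous fun z : (Cantor × Cantor) × (Cantor × Cantor) => (z.1.2, z.2.2) := by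
      fun_prop
    exact (isClopen_agr2 k).compl.1.preimage hc
  have hK : ∀ m, IsCompact (K m) := fun m => (hc.prod hc).inter_right (c2.inter (c1 m))
  have : (⋂ m, K m).Nonempty := by
    refine IsCompact.nonempty_iInter_of_sequence_nonempty_isCompact_isClosed K ?_ ?_ (hK 0)
      (fun m => (hK m).isClosed)
    · rintro m z ⟨h1, h2, h3⟩
      exact ⟨h1, h2, Agr.mono h3 (Nat.le_succ m)⟩
    · intro m
      obtain ⟨p, hp, q, hq, h1, h2⟩ := hcon m
      exact ⟨(p, q), ⟨hp, hq⟩, h2, h1⟩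
  obtain ⟨⟨p, q⟩, hz⟩ := this
  rw [mem_iInter] at hz
  have heq : p.1 = q.1 := eq_of_agr fun m => (hz m).2.2
  have h0 := hz 0
  have := inj p h0.1.1 q h0.1.2 heq
  subst this
  exact h0.2.1 Agr.rfl

theorem SideData.infinite {X Z : Set Cantor} {b : Bool} {𝓕 : Set (Set Cantor)}
    {Fs : ℕ → Set Cantor} (D : SideData X Z b 𝓕 Fs) {O : Set Cantor} (hO : IsOpen O)
    (hne : (Z ∩ O).Nonempty) : (Z ∩ O).Infinite := by
  intro hfin
  obtain ⟨x, hx⟩ := hne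
  have hf : ((Z ∩ O) \ {x}).Finite := hfin.sdiff
  obtain ⟨F, hF, hs⟩ := D.h2 (O ∩ ((Z ∩ O) \ {x})ᶜ) (hO.inter hf.isClosed.isOpen_compl)
    ⟨x, hx.1, hx.2, by simp⟩
  have hx1 : ∀ y ∈ Z ∩ (O ∩ ((Z ∩ O) \ {x})ᶜ), y = x := by
    rintro y ⟨h1, h2, h3⟩
    by_contra h
    exact h3 ⟨⟨h1, h2⟩, h⟩
  obtain ⟨c1, ⟨w, hw⟩, c3, c4⟩ := D.h1 F hF
  obtain ⟨y, hy, hyF⟩ := c4 (O ∩ ((Z ∩ O) \ {x})ᶜ) (hO.inter hf.isClosed.isOpen_compl)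
    ⟨x, hx.1, hx.2, by simp⟩
  rw [hx1 y hy, ← hx1 w (hs hw)] at hyF
  exact hyF hw

/-- choose a member of the family inside a piece, containing the trace of `Fs i` -/
theorem SideData.pick {X Z : Set Cantor} {b : Bool} {𝓕 : Set (Set Cantor)}
    {Fs : ℕ → Set Cantor} (D : SideData X Z b 𝓕 Fs) {O : Set Cantor} (hO : IsClopen O)
    (hne : (Z ∩ O).Nonempty) (i : ℕ) :
    ∃ F ∈ 𝓕, ∃ F' ∈ 𝓕, F ⊆ Z ∩ O ∧ F' ⊆ Z ∩ O ∧ Disjoint F F' ∧ Fs i ∩ (Z ∩ O) ⊆ F := by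
  have : ∃ F ∈ 𝓕, F ⊆ Z ∩ O ∧ Fs i ∩ (Z ∩ O) ⊆ F := by
    by_cases h : (Fs i ∩ O).Nonempty
    · have h' := D.h3 i O hO h
      exact ⟨_, h', subset_inter ((D.h1 _ h').2.2.1) inter_subset_right,
        fun x hx => ⟨hx.1, hx.2.2⟩⟩
    · obtain ⟨F, hF, hs⟩ := D.h2 O hO.2 hne
      exact ⟨F, hF, hs, fun x hx => (h ⟨x, hx.1, hx.2.2⟩).elim⟩
  obtain ⟨F, hF, hs, hs'⟩ := this
  obtain ⟨c1, c2, c3, c4⟩ := D.h1 F hF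
  obtain ⟨x, hx, hxF⟩ := c4 O hO.2 hne
  obtain ⟨F', hF', hsF'⟩ := D.h2 (O ∩ Fᶜ) (hO.2.inter c1.isOpen_compl) ⟨x, hx.1, hx.2, hxF⟩
  refine ⟨F, hF, F', hF', hs, fun y hy => ⟨(hsF' hy).1, (hsF' hy).2.1⟩, ?_, hs'⟩
  rw [Set.disjoint_right]
  exact fun y hy => (hsF' hy).2.2

section BF

variable {X Z Y W : Set Cantor} {b : Bool} {𝓕 𝓖 : Set (Set Cantor)} {Fs Gs : ℕ → Set Cantor}

theorem newarm (D : SideData X Z b 𝓕 Fs) (E : SideData Y W b 𝓖 Gs)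
    (iso : ∀ F ∈ 𝓕, ∀ G ∈ 𝓖, Iso X Y F G) {O O' : Set Cantor} (hO : IsClopen O)
    (hO' : IsClopen O') (hne : (Z ∩ O).Nonempty) (hne' : (W ∩ O').Nonempty) (i : ℕ) :
    ∃ Γ, PIso X Y Γ ∧ Γ.Nonempty ∧ Γ ⊆ (Z ∩ O) ×ˢ (W ∩ O') ∧ NwdIn (Prod.fst '' Γ) Z ∧
      NwdIn (Prod.snd '' Γ) W ∧ Fs i ∩ (Z ∩ O) ⊆ Prod.fst '' Γ ∧
      Gs i ∩ (W ∩ O') ⊆ Prod.snd '' Γ := by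
  obtain ⟨F, hF, F', hF', f1, f2, f3, f4⟩ := D.pick hO hne i
  obtain ⟨G, hG, G', hG', g1, g2, g3, g4⟩ := E.pick hO' hne' i
  obtain ⟨Γ, p, a1, a2⟩ := iso F hF G' hG'
  obtain ⟨Γ', p', a1', a2'⟩ := iso F' hF' G hG
  have m1 : ∀ q ∈ Γ, q.1 ∈ F := fun q hq => a1 ▸ mem_image_of_mem _ hq
  have m2 : ∀ q ∈ Γ, q.2 ∈ G' := fun q hq => a2 ▸ mem_image_of_mem _ hq
  have m1' : ∀ q ∈ Γ', q.1 ∈ F' := fun q hq => a1' ▸ mem_image_of_mem _ hq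
  have m2' : ∀ q ∈ Γ', q.2 ∈ G := fun q hq => a2' ▸ mem_image_of_mem _ hq
  refine ⟨Γ ∪ Γ', p.union p' ?_ ?_, ?_, ?_, ?_, ?_, ?_, ?_⟩
  · intro q hq q' hq' he
    exact Set.disjoint_left.1 f3 (m1 q hq) (he ▸ m1' q' hq')
  · intro q hq q' hq' he
    exact Set.disjoint_left.1 g3 (m2' q' hq') (he ▸ m2 q hq)
  · obtain ⟨x, hx⟩ := (D.h1 F hF).2.1
    rw [← a1] at hx
    obtain ⟨q, hq, -⟩ := hx
    exact ⟨q, Or.inl hq⟩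
  · rintro q (hq | hq)
    · exact ⟨f1 (m1 q hq), g2 (m2 q hq)⟩
    · exact ⟨f2 (m1' q hq), g1 (m2' q hq)⟩
  · rw [image_union, a1, a1']
    exact (D.h1 F hF).2.2.2.union (D.h1 F' hF').2.2.2 (D.h1 F hF).1
  · rw [image_union, a2, a2']
    exact (E.h1 G' hG').2.2.2.union (E.h1 G hG).2.2.2 (E.h1 G' hG').1
  · rw [image_union, a1]
    exact f4.trans subset_union_left
  · rw [image_union, a2']
    exact g4.trans subset_union_right

/-- locally constant surjections onto finite sets -/
theorem exists_onto {β : Type*} [Finite β] {R : Set Cantor} (hR : R.Infinite) {J : Set β}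
    (hJ : J.Nonempty) : ∃ p : Cantor → β, (∃ m, ∀ x y, Agr m x y → p x = p y) ∧ p '' R = J := by
  classical
  obtain ⟨j0, hj0⟩ := hJ
  have := Fintype.ofFinite β
  obtain ⟨e⟩ : Nonempty (β ↪ R) := by
    have := hR.to_subtype
    exact ⟨(Fintype.equivFin β).toEmbedding.trans
      (⟨fun i => i.1, Fin.val_injective⟩ : Fin _ ↪ ℕ) |>.trans (Infinite.natEmbedding R)⟩
  have hsep : ∃ m, ∀ i j : β, Agr m (e i).1 (e j).1 → i = j := by
    have h : ∀ q : β × β, ∃ m, Agr m (e q.1).1 (e q.2).1 → q.1 = q.2 := by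
      intro q
      by_contra hcon
      push Not at hcon
      have h1 := eq_of_agr fun m => (hcon m).1
      exact (hcon 0).2 (e.injective (Subtype.ext h1))
    choose m hm using h
    refine ⟨Finset.univ.sup m, fun i j hij => hm (i, j) (hij.mono ?_)⟩
    exact Finset.le_sup (f := m) (Finset.mem_univ (i, j))
  obtain ⟨m, hm⟩ := hsep
  let p : Cantor → β := fun z => if h : ∃ j, j ∈ J ∧ Agr m z (e j).1 then h.choose else j0
  have hp : ∀ z j, j ∈ J → Agr m z (e j).1 → p z = j := by
    intro z j hj hz
    have h : ∃ j, j ∈ J ∧ Agr m z (e j).1 := ⟨j, hj, hz⟩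
    have hs := h.choose_spec
    have : p z = h.choose := dif_pos h
    rw [this]
    exact hm _ _ (hs.2.symm.trans hz)
  have hp' : ∀ z, (¬ ∃ j, j ∈ J ∧ Agr m z (e j).1) → p z = j0 := fun z h => dif_neg h
  refine ⟨p, ⟨m, ?_⟩, ?_⟩
  · intro x y hxy
    by_cases h : ∃ j, j ∈ J ∧ Agr m x (e j).1
    · obtain ⟨j, hj, hx⟩ := h
      rw [hp x j hj hx, hp y j hj (hxy.symm.trans hx)]
    · rw [hp' x h, hp' y]
      rintro ⟨j, hj, hy⟩
      exact h ⟨j, hj, hxy.trans hy⟩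
  · apply Subset.antisymm
    · rintro _ ⟨z, -, rfl⟩
      by_cases h : ∃ j, j ∈ J ∧ Agr m z (e j).1
      · obtain ⟨j, hj, hz⟩ := h
        rwa [hp z j hj hz]
      · rwa [hp' z h]
    · intro j hj
      exact ⟨(e j).1, (e j).2, hp _ j hj Agr.rfl⟩

/-- matched locally constant fine partitions -/
theorem exists_match {R R' : Set Cantor} (hR : R.Nonempty) (hR' : R'.Nonempty)
    (hi : ∀ O, IsClopen O → (R ∩ O).Nonempty → (R ∩ O).Infinite)
    (hi' : ∀ O, IsClopen O → (R' ∩ O).Nonempty → (R' ∩ O).Infinite) (k : ℕ) :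
    ∃ (β : Type) (f f' : Cantor → β), (∃ m, ∀ x y, Agr m x y → f x = f y) ∧
      (∃ m, ∀ x y, Agr m x y → f' x = f' y) ∧ (∀ x y, f x = f y → Agr k x y) ∧
      (∀ x y, f' x = f' y → Agr k x y) ∧ f '' R = f' '' R' := by
  let S := Fin k → Bool
  let rs : Cantor → S := fun x i => x i
  have hrs : ∀ x y, rs x = rs y ↔ Agr k x y := by
    intro x y
    constructor
    · intro h i hi
      exact congrFun h ⟨i, hi⟩
    · intro h
      funext i
      exact h i i.2
  have hclo : ∀ s : S, IsClopen {x | rs x = s} := by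
    intro s
    refine isClopen_sat k ?_
    intro x hx y hxy
    exact ((hrs y x).2 hxy.symm).trans hx
  have key : ∀ (R R' : Set Cantor), R'.Nonempty →
    (∀ O, IsClopen O → (R ∩ O).Nonempty → (R ∩ O).Infinite) → ∀ s : S, ∃ p : Cantor → S,
      (∃ m, ∀ x y, Agr m x y → p x = p y) ∧
      ((R ∩ {x | rs x = s}).Nonempty → p '' (R ∩ {x | rs x = s}) = rs '' R') := by
    intro R R' hR' hi s
    by_cases h : (R ∩ {x | rs x = s}).Nonempty
    · obtain ⟨p, h1, h2⟩ := exists_onto (hi _ (hclo s) h) (hR'.image rs)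
      exact ⟨p, h1, fun _ => h2⟩
    · exact ⟨fun _ => s, ⟨0, fun _ _ _ => rfl⟩, fun h' => (h h').elim⟩
  choose p hp1 hp2 using key R R' hR' hi
  choose p' hp1' hp2' using key R' R hR hi'
  choose m hm using hp1
  choose m' hm' using hp1'
  have lc : ∀ (p : S → Cantor → S) (m : S → ℕ), (∀ s x y, Agr (m s) x y → p s x = p s y) →
      ∃ M, ∀ x y, Agr M x y → rs x = rs y ∧ p (rs x) x = p (rs y) y := by
    intro p m hm
    refine ⟨max k (Finset.univ.sup m), fun x y hxy => ?_⟩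
    have h1 : rs x = rs y := (hrs x y).2 (hxy.mono (le_max_left _ _))
    refine ⟨h1, ?_⟩
    rw [h1]
    exact hm _ x y (hxy.mono (le_trans (Finset.le_sup (f := m) (Finset.mem_univ _))
      (le_max_right _ _)))
  obtain ⟨M, hM⟩ := lc p m hm
  obtain ⟨M', hM'⟩ := lc p' m' hm'
  refine ⟨S × S, fun x => (rs x, p (rs x) x), fun y => (p' (rs y) y, rs y), ⟨M, ?_⟩, ⟨M', ?_⟩,
    ?_, ?_, ?_⟩
  · intro x y h
    exact Prod.ext (hM x y h).1 (hM x y h).2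
  · intro x y h
    exact Prod.ext (hM' x y h).2 (hM' x y h).1
  · intro x y h
    exact (hrs x y).1 (congrArg Prod.fst h)
  · intro x y h
    exact (hrs x y).1 (congrArg Prod.snd h)
  · trans (rs '' R) ×ˢ (rs '' R')
    · apply Subset.antisymm
      · rintro _ ⟨x, hx, rfl⟩
        refine ⟨⟨x, hx, rfl⟩, ?_⟩
        rw [← hp2 (rs x) ⟨x, hx, rfl⟩]
        exact ⟨x, ⟨hx, rfl⟩, rfl⟩
      · rintro ⟨s, t⟩ ⟨⟨x, hx, h⟩, ht⟩
        have h : rs x = s := h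
        have ht : t ∈ rs '' R' := ht
        rw [← hp2 s ⟨x, hx, h⟩] at ht
        obtain ⟨z, ⟨hz, hzs⟩, rfl⟩ := ht
        have hzs : rs z = s := hzs
        subst hzs
        exact ⟨z, hz, rfl⟩
    · apply Subset.antisymm
      · rintro ⟨s, t⟩ ⟨hs, ⟨x, hx, h⟩⟩
        have h : rs x = t := h
        have hs : s ∈ rs '' R := hs
        rw [← hp2' t ⟨x, hx, h⟩] at hs
        obtain ⟨z, ⟨hz, hzs⟩, rfl⟩ := hs
        have hzs : rs z = t := hzs
        subst hzs
        exact ⟨z, hz, rfl⟩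
      · rintro _ ⟨x, hx, rfl⟩
        refine ⟨?_, ⟨x, hx, rfl⟩⟩
        rw [← hp2' (rs x) ⟨x, hx, rfl⟩]
        exact ⟨x, ⟨hx, rfl⟩, rfl⟩

end BF
end SF

namespace SF

structure St where
  P : Set Cantor
  Q : Set Cantor
  Γ : Set (Cantor × Cantor)
  r : ℕ

structure Valid (X Z Y W : Set Cantor) (Fs Gs : ℕ → Set Cantor) (σ : St) : Prop where
  hP : ∃ O, IsClopen O ∧ σ.P = Z ∩ O
  hQ : ∃ O, IsClopen O ∧ σ.Q = W ∩ O
  iso : PIso X Y σ.Γ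
  ne : σ.Γ.Nonempty
  sub : σ.Γ ⊆ σ.P ×ˢ σ.Q
  nwd1 : NwdIn (Prod.fst '' σ.Γ) Z
  nwd2 : NwdIn (Prod.snd '' σ.Γ) W
  cap1 : ∀ j < σ.r, Fs j ∩ σ.P ⊆ Prod.fst '' σ.Γ
  cap2 : ∀ j < σ.r, Gs j ∩ σ.Q ⊆ Prod.snd '' σ.Γ

def Mesh (k : ℕ) (P : Set Cantor) : Prop := ∀ x ∈ P, ∀ y ∈ P, Agr k x y

section BF2

variable {X Z Y W : Set Cantor} {b : Bool} {𝓕 𝓖 : Set (Set Cantor)} {Fs Gs : ℕ → Set Cantor}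

/-- leftover of one side is nonempty for large `m` -/
theorem leftover {Z P A : Set Cantor} (hP : ∃ O, IsClopen O ∧ P = Z ∩ O) (hne : P.Nonempty)
    (hA : IsClosed A) (hn : NwdIn A Z) : ∃ m, ∃ x ∈ P, ∀ y ∈ A, ¬ Agr m x y := by
  obtain ⟨O, hO, rfl⟩ := hP
  obtain ⟨x, hx, hxA⟩ := hn O hO.2 hne
  obtain ⟨m, hm⟩ := closed_agr hA hxA
  exact ⟨m, x, hx, hm⟩

theorem step (D : SideData X Z b 𝓕 Fs) (E : SideData Y W b 𝓖 Gs)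
    (iso : ∀ F ∈ 𝓕, ∀ G ∈ 𝓖, Iso X Y F G) (σ : St) (k : ℕ) (hσ : Valid X Z Y W Fs Gs σ) :
    ∃ T : Set St, (∀ τ ∈ T, Valid X Z Y W Fs Gs τ ∧ τ.P ⊆ σ.P ∧ τ.Q ⊆ σ.Q ∧ Mesh k τ.P ∧
        Mesh k τ.Q ∧ ((τ.Γ ⊆ σ.Γ ∧ τ.r = σ.r) ∨ τ.r = σ.r + 1)) ∧
      (∀ x ∈ σ.P, ∃ τ ∈ T, x ∈ τ.P) ∧ (∀ y ∈ σ.Q, ∃ τ ∈ T, y ∈ τ.Q) ∧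
      (∀ τ ∈ T, ∀ τ' ∈ T, ∀ x, x ∈ τ.P → x ∈ τ'.P → τ = τ') ∧
      (∀ τ ∈ T, ∀ τ' ∈ T, ∀ x, x ∈ τ.Q → x ∈ τ'.Q → τ = τ') ∧
      (∀ p ∈ σ.Γ, ∃ τ ∈ T, p ∈ τ.Γ) := by
  classical
  obtain ⟨P, Q, Γ, r⟩ := σ
  have hA : IsClosed (Prod.fst '' Γ) := (hσ.iso.cpt.image continuous_fst).isClosed
  have hB : IsClosed (Prod.snd '' Γ) := (hσ.iso.cpt.image continuous_snd).isClosed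
  obtain ⟨p0, hp0⟩ := hσ.ne
  obtain ⟨m1, x1, hx1, hx1'⟩ := leftover hσ.hP ⟨p0.1, (hσ.sub hp0).1⟩ hA hσ.nwd1
  obtain ⟨m2, y1, hy1, hy1'⟩ := leftover hσ.hQ ⟨p0.2, (hσ.sub hp0).2⟩ hB hσ.nwd2
  obtain ⟨m3, hm3⟩ := unif hσ.iso.cpt hσ.iso.inj1 k
  obtain ⟨m4, hm4⟩ := unif hσ.iso.swap.cpt hσ.iso.swap.inj1 k
  obtain ⟨m, hmk, hma, hmb, hmc, hmd⟩ : ∃ m, k ≤ m ∧ m1 ≤ m ∧ m2 ≤ m ∧ m3 ≤ m ∧ m4 ≤ m :=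
    ⟨k + m1 + m2 + m3 + m4, by omega, by omega, by omega, by omega, by omega⟩
  have u1 : ∀ p ∈ Γ, ∀ q ∈ Γ, Agr m p.1 q.1 → Agr k p.1 q.1 ∧ Agr k p.2 q.2 :=
    fun p hp q hq h => ⟨h.mono hmk, hm3 p hp q hq (h.mono hmc)⟩
  have u2 : ∀ p ∈ Γ, ∀ q ∈ Γ, Agr m p.2 q.2 → Agr k p.1 q.1 ∧ Agr k p.2 q.2 :=
    fun p hp q hq h => ⟨hm4 p.swap ⟨p, hp, rfl⟩ q.swap ⟨q, hq, rfl⟩ (h.mono hmd), h.mono hmk⟩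
  obtain ⟨O, hO, hPO⟩ := hσ.hP
  obtain ⟨O', hO', hQO⟩ := hσ.hQ
  have hPO : P = Z ∩ O := hPO
  have hQO : Q = W ∩ O' := hQO
  -- continuing pieces
  let Γc : Cantor × Cantor → Set (Cantor × Cantor) :=
    fun p => {q | q ∈ Γ ∧ Agr k p.1 q.1 ∧ Agr k p.2 q.2}
  let Oc : Cantor × Cantor → Set Cantor := fun p => {x | ∃ q ∈ Γc p, Agr m x q.1}
  let Oc' : Cantor × Cantor → Set Cantor := fun p => {x | ∃ q ∈ Γc p, Agr m x q.2}
  let cont : Cantor × Cantor → St := fun p => ⟨P ∩ Oc p, Q ∩ Oc' p, Γc p, r⟩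
  have hOc : ∀ p, IsClopen (Oc p) := fun p => isClopen_sat m (by
    rintro x ⟨q, hq, hx⟩ y hxy
    exact ⟨q, hq, hxy.symm.trans hx⟩)
  have hOc' : ∀ p, IsClopen (Oc' p) := fun p => isClopen_sat m (by
    rintro x ⟨q, hq, hx⟩ y hxy
    exact ⟨q, hq, hxy.symm.trans hx⟩)
  have hΓeq : ∀ p q, Agr k p.1 q.1 → Agr k p.2 q.2 → Γc p = Γc q := by
    intro p q h1 h2
    ext z
    exact ⟨fun h => ⟨h.1, h1.symm.trans h.2.1, h2.symm.trans h.2.2⟩,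
      fun h => ⟨h.1, h1.trans h.2.1, h2.trans h.2.2⟩⟩
  have hceq : ∀ p q, Agr k p.1 q.1 → Agr k p.2 q.2 → cont p = cont q := by
    intro p q h1 h2
    have := hΓeq p q h1 h2
    simp only [cont, Oc, Oc', this]
  have hself : ∀ p ∈ Γ, p ∈ Γc p := fun p hp => ⟨hp, Agr.rfl, Agr.rfl⟩
  have hcontV : ∀ p ∈ Γ, Valid X Z Y W Fs Gs (cont p) := by
    intro p hp
    have hsub : Γc p ⊆ Γ := fun q hq => hq.1
    refine ⟨⟨O ∩ Oc p, hO.inter (hOc p), ?_⟩, ⟨O' ∩ Oc' p, hO'.inter (hOc' p), ?_⟩, ?_,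
      ⟨p, hself p hp⟩, ?_, hσ.nwd1.mono (image_mono hsub), hσ.nwd2.mono (image_mono hsub),
      ?_, ?_⟩
    · change P ∩ Oc p = _
      rw [hPO, inter_assoc]
    · change Q ∩ Oc' p = _
      rw [hQO, inter_assoc]
    · refine ⟨?_, fun q hq => hσ.iso.resp q hq.1, fun q hq q' hq' => hσ.iso.inj1 q hq.1 q' hq'.1,
        fun q hq q' hq' => hσ.iso.inj2 q hq.1 q' hq'.1⟩
      have c1 : IsClosed {q : Cantor × Cantor | Agr k p.1 q.1} := by
        have hc : Continuous fun q : Cantor × Cantor => (p.1, q.1) := by fun_prop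
        exact (isClopen_agr2 k).1.preimage hc
      have c2 : IsClosed {q : Cantor × Cantor | Agr k p.2 q.2} := by
        have hc : Continuous fun q : Cantor × Cantor => (p.2, q.2) := by fun_prop
        exact (isClopen_agr2 k).1.preimage hc
      exact hσ.iso.cpt.inter_right (c1.inter c2)
    · intro q hq
      exact ⟨⟨(hσ.sub hq.1).1, q, hq, Agr.rfl⟩, ⟨(hσ.sub hq.1).2, q, hq, Agr.rfl⟩⟩
    · rintro j hj x ⟨hxF, hxP, q, hq, hxq⟩
      obtain ⟨a, ha, rfl⟩ := hσ.cap1 j hj ⟨hxF, hxP⟩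
      obtain ⟨e1, e2⟩ := u1 a ha q hq.1 hxq
      exact ⟨a, ⟨ha, hq.2.1.trans e1.symm, hq.2.2.trans e2.symm⟩, rfl⟩
    · rintro j hj x ⟨hxF, hxP, q, hq, hxq⟩
      obtain ⟨a, ha, rfl⟩ := hσ.cap2 j hj ⟨hxF, hxP⟩
      obtain ⟨e1, e2⟩ := u2 a ha q hq.1 hxq
      exact ⟨a, ⟨ha, hq.2.1.trans e1.symm, hq.2.2.trans e2.symm⟩, rfl⟩
  -- the leftovers
  let N : Set Cantor := {x | ∀ q ∈ Γ, ¬ Agr m x q.1}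
  let N' : Set Cantor := {x | ∀ q ∈ Γ, ¬ Agr m x q.2}
  have hN : IsClopen N := isClopen_sat m (fun x hx y hxy q hq h => hx q hq (hxy.trans h))
  have hN' : IsClopen N' := isClopen_sat m (fun x hx y hxy q hq h => hx q hq (hxy.trans h))
  have hRne : (P ∩ N).Nonempty := ⟨x1, hx1, fun q hq h =>
    hx1' q.1 ⟨q, hq, rfl⟩ (h.mono hma)⟩
  have hRne' : (Q ∩ N').Nonempty := ⟨y1, hy1, fun q hq h =>
    hy1' q.2 ⟨q, hq, rfl⟩ (h.mono hmb)⟩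
  obtain ⟨β, f, f', ⟨M, hM⟩, ⟨M', hM'⟩, hf, hf', hff⟩ := exists_match hRne hRne'
    (fun U hU h => by
      rw [hPO, inter_assoc, inter_assoc] at h ⊢
      exact D.infinite (hO.2.inter (hN.2.inter hU.2)) h)
    (fun U hU h => by
      rw [hQO, inter_assoc, inter_assoc] at h ⊢
      exact E.infinite (hO'.2.inter (hN'.2.inter hU.2)) h) k
  have hfc : ∀ c, IsClopen {x | f x = c} := fun c => isClopen_sat M (fun x hx y hxy =>
    (hM x y hxy).symm.trans hx)
  have hfc' : ∀ c, IsClopen {x | f' x = c} := fun c => isClopen_sat M' (fun x hx y hxy =>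
    (hM' x y hxy).symm.trans hx)
  have hnew : ∀ c, ∃ Γ', c ∈ f '' (P ∩ N) →
      PIso X Y Γ' ∧ Γ'.Nonempty ∧ Γ' ⊆ (Z ∩ (O ∩ N ∩ {x | f x = c})) ×ˢ
        (W ∩ (O' ∩ N' ∩ {x | f' x = c})) ∧ NwdIn (Prod.fst '' Γ') Z ∧
      NwdIn (Prod.snd '' Γ') W ∧ Fs r ∩ (Z ∩ (O ∩ N ∩ {x | f x = c})) ⊆ Prod.fst '' Γ' ∧
      Gs r ∩ (W ∩ (O' ∩ N' ∩ {x | f' x = c})) ⊆ Prod.snd '' Γ' := by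
    intro c
    by_cases hc : c ∈ f '' (P ∩ N)
    · have hc' := hc
      rw [hff] at hc'
      obtain ⟨x, ⟨hx1, hx2⟩, hx3⟩ := hc
      obtain ⟨y, ⟨hy1, hy2⟩, hy3⟩ := hc'
      rw [hPO] at hx1
      rw [hQO] at hy1
      obtain ⟨Γ', h⟩ := newarm D E iso ((hO.inter hN).inter (hfc c)) ((hO'.inter hN').inter (hfc' c))
        ⟨x, hx1.1, ⟨hx1.2, hx2⟩, hx3⟩ ⟨y, hy1.1, ⟨hy1.2, hy2⟩, hy3⟩ r
      exact ⟨Γ', fun _ => h⟩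
    · exact ⟨∅, fun h => (hc h).elim⟩
  choose Γn hΓn using hnew
  let new : β → St := fun c => ⟨Z ∩ (O ∩ N ∩ {x | f x = c}), W ∩ (O' ∩ N' ∩ {x | f' x = c}),
    Γn c, r + 1⟩
  have hnewV : ∀ c ∈ f '' (P ∩ N), Valid X Z Y W Fs Gs (new c) := by
    intro c hc
    obtain ⟨g1, g2, g3, g4, g5, g6, g7⟩ := hΓn c hc
    refine ⟨⟨_, (hO.inter hN).inter (hfc c), rfl⟩, ⟨_, (hO'.inter hN').inter (hfc' c), rfl⟩,
      g1, g2, g3, g4, g5, ?_, ?_⟩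
    · intro j hj
      have hj : j < r + 1 := hj
      rcases Nat.lt_succ_iff_lt_or_eq.1 hj with h | rfl
      · rintro x ⟨hxF, hxZ, ⟨hxO, hxN⟩, -⟩
        obtain ⟨a, ha, rfl⟩ := hσ.cap1 j h ⟨hxF, by rw [hPO]; exact ⟨hxZ, hxO⟩⟩
        exact (hxN a ha Agr.rfl).elim
      · exact g6
    · intro j hj
      have hj : j < r + 1 := hj
      rcases Nat.lt_succ_iff_lt_or_eq.1 hj with h | rfl
      · rintro x ⟨hxF, hxZ, ⟨hxO, hxN⟩, -⟩
        obtain ⟨a, ha, rfl⟩ := hσ.cap2 j h ⟨hxF, by rw [hQO]; exact ⟨hxZ, hxO⟩⟩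
        exact (hxN a ha Agr.rfl).elim
      · exact g7
  refine ⟨cont '' Γ ∪ new '' (f '' (P ∩ N)), ?_, ?_, ?_, ?_, ?_, ?_⟩
  · rintro τ (⟨p, hp, rfl⟩ | ⟨c, hc, rfl⟩)
    · refine ⟨hcontV p hp, inter_subset_left, inter_subset_left, ?_, ?_, Or.inl ⟨fun q hq => hq.1,
        rfl⟩⟩
      · rintro x ⟨-, q, hq, hx⟩ y ⟨-, q', hq', hy⟩
        exact ((hx.mono hmk).trans (hq.2.1.symm.trans hq'.2.1)).trans (hy.mono hmk).symm
      · rintro x ⟨-, q, hq, hx⟩ y ⟨-, q', hq', hy⟩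
        exact ((hx.mono hmk).trans (hq.2.2.symm.trans hq'.2.2)).trans (hy.mono hmk).symm
    · refine ⟨hnewV c hc, ?_, ?_, ?_, ?_, Or.inr rfl⟩
      · rintro x ⟨h1, ⟨h2, h3⟩, h4⟩
        change x ∈ P
        rw [hPO]; exact ⟨h1, h2⟩
      · rintro x ⟨h1, ⟨h2, h3⟩, h4⟩
        change x ∈ Q
        rw [hQO]; exact ⟨h1, h2⟩
      · rintro x ⟨-, -, hx⟩ y ⟨-, -, hy⟩
        exact hf x y (Eq.trans hx (Eq.symm hy))
      · rintro x ⟨-, -, hx⟩ y ⟨-, -, hy⟩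
        exact hf' x y (Eq.trans hx (Eq.symm hy))
  · intro x hx
    have hx : x ∈ P := hx
    by_cases hxN : x ∈ N
    · refine ⟨new (f x), Or.inr ⟨_, ⟨x, ⟨hx, hxN⟩, rfl⟩, rfl⟩, ?_⟩
      rw [hPO] at hx
      exact ⟨hx.1, ⟨hx.2, hxN⟩, rfl⟩
    · have : ∃ q ∈ Γ, Agr m x q.1 := by
        by_contra h
        push Not at h
        exact hxN h
      obtain ⟨q, hq, hxq⟩ := this
      exact ⟨cont q, Or.inl ⟨q, hq, rfl⟩, hx, q, hself q hq, hxq⟩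
  · intro x hx
    have hx : x ∈ Q := hx
    by_cases hxN : x ∈ N'
    · refine ⟨new (f' x), Or.inr ⟨_, hff ▸ ⟨x, ⟨hx, hxN⟩, rfl⟩, rfl⟩, ?_⟩
      rw [hQO] at hx
      exact ⟨hx.1, ⟨hx.2, hxN⟩, rfl⟩
    · have : ∃ q ∈ Γ, Agr m x q.2 := by
        by_contra h
        push Not at h
        exact hxN h
      obtain ⟨q, hq, hxq⟩ := this
      exact ⟨cont q, Or.inl ⟨q, hq, rfl⟩, hx, q, hself q hq, hxq⟩
  · rintro τ (⟨p, hp, rfl⟩ | ⟨c, hc, rfl⟩) τ' (⟨p', hp', rfl⟩ | ⟨c', hc', rfl⟩) x hx hx'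
    · obtain ⟨-, q, hq, hxq⟩ := hx
      obtain ⟨-, q', hq', hxq'⟩ := hx'
      obtain ⟨e1, e2⟩ := u1 q hq.1 q' hq'.1 (hxq.symm.trans hxq')
      exact hceq p p' ((hq.2.1.trans e1).trans hq'.2.1.symm) ((hq.2.2.trans e2).trans hq'.2.2.symm)
    · obtain ⟨-, q, hq, hxq⟩ := hx
      exact (hx'.2.1.2 q hq.1 hxq).elim
    · obtain ⟨-, q, hq, hxq⟩ := hx'
      exact (hx.2.1.2 q hq.1 hxq).elim
    · have h1 : f x = c := hx.2.2
      have h2 : f x = c' := hx'.2.2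
      rw [← h1, ← h2]
  · rintro τ (⟨p, hp, rfl⟩ | ⟨c, hc, rfl⟩) τ' (⟨p', hp', rfl⟩ | ⟨c', hc', rfl⟩) x hx hx'
    · obtain ⟨-, q, hq, hxq⟩ := hx
      obtain ⟨-, q', hq', hxq'⟩ := hx'
      obtain ⟨e1, e2⟩ := u2 q hq.1 q' hq'.1 (hxq.symm.trans hxq')
      exact hceq p p' ((hq.2.1.trans e1).trans hq'.2.1.symm) ((hq.2.2.trans e2).trans hq'.2.2.symm)
    · obtain ⟨-, q, hq, hxq⟩ := hx
      exact (hx'.2.1.2 q hq.1 hxq).elim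
    · obtain ⟨-, q, hq, hxq⟩ := hx'
      exact (hx.2.1.2 q hq.1 hxq).elim
    · have h1 : f' x = c := hx.2.2
      have h2 : f' x = c' := hx'.2.2
      rw [← h1, ← h2]
  · intro p hp
    exact ⟨cont p, Or.inl ⟨p, hp, rfl⟩, hself p hp⟩

/-- exhaustion: the point `z ∈ Fs i` is eventually caught by an arm -/
theorem catch_arm (lev : ℕ → Set St) (P A : St → Set Cantor) (Fs : ℕ → Set Cantor)
    (hcap : ∀ k, ∀ σ ∈ lev k, ∀ j < σ.r, Fs j ∩ P σ ⊆ A σ)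
    (hcl : ∀ k, ∀ σ ∈ lev k, IsClosed (A σ) ∧ (A σ).Nonempty ∧ A σ ⊆ P σ)
    (hstep : ∀ k, ∀ σ ∈ lev k, ∀ z ∈ P σ, ∃ τ ∈ lev (k+1), z ∈ P τ ∧
      ((A τ ⊆ A σ ∧ τ.r = σ.r) ∨ τ.r = σ.r + 1))
    (hmesh : ∀ k, ∀ σ ∈ lev (k+1), Mesh k (P σ)) (i : ℕ) (z : Cantor) (hz : z ∈ Fs i) (d : ℕ) :
    ∀ k, ∀ σ ∈ lev k, z ∈ P σ → i < σ.r + d → ∃ k', ∃ τ ∈ lev k', z ∈ A τ := by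
  induction d with
  | zero =>
    intro k σ hσ hzσ hi
    exact ⟨k, σ, hσ, hcap k σ hσ i hi ⟨hz, hzσ⟩⟩
  | succ d ih =>
    intro k σ hσ hzσ hi
    by_cases hzA : z ∈ A σ
    · exact ⟨k, σ, hσ, hzA⟩
    obtain ⟨m, hm⟩ := closed_agr (hcl k σ hσ).1 hzA
    have key : ∀ l, (∃ τ ∈ lev (k+l), z ∈ P τ ∧ A τ ⊆ A σ ∧ τ.r = σ.r) ∨
        (∃ k', ∃ τ ∈ lev k', z ∈ P τ ∧ τ.r = σ.r + 1) := by
      intro l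
      induction l with
      | zero => exact Or.inl ⟨σ, hσ, hzσ, Subset.rfl, rfl⟩
      | succ l ihl =>
        rcases ihl with ⟨τ, h1, h2, h3, h4⟩ | h
        · obtain ⟨τ', g1, g2, g3⟩ := hstep _ τ h1 z h2
          rcases g3 with g3 | g3
          · exact Or.inl ⟨τ', g1, g2, g3.1.trans h3, g3.2.trans h4⟩
          · exact Or.inr ⟨_, τ', g1, g2, by rw [g3, h4]⟩
        · exact Or.inr h
    rcases key (m+1) with ⟨τ, h1, h2, h3, h4⟩ | ⟨k', τ, h1, h2, h3⟩
    · obtain ⟨c1, ⟨y, hy⟩, c3⟩ := hcl _ τ h1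
      have := hmesh (k+m) τ h1 z h2 y (c3 hy)
      exact (hm y (h3 hy) (this.mono (Nat.le_add_left _ _))).elim
    · exact ih k' τ h1 h2 (by omega)

theorem backforth (D : SideData X Z b 𝓕 Fs) (E : SideData Y W b 𝓖 Gs)
    (iso : ∀ F ∈ 𝓕, ∀ G ∈ 𝓖, Iso X Y F G) : Iso X Y Z W := by
  classical
  have hstep : ∀ (σ : St) (k : ℕ), ∃ T : Set St, Valid X Z Y W Fs Gs σ → _ := fun σ k => by
    by_cases h : Valid X Z Y W Fs Gs σ
    · obtain ⟨T, hT⟩ := step D E iso σ k h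
      exact ⟨T, fun _ => hT⟩
    · exact ⟨∅, fun h' => (h h').elim⟩
  choose T hT using hstep
  obtain ⟨Γ0, a1, a2, a3, a4, a5, a6, a7⟩ := newarm D E iso isClopen_univ isClopen_univ
    (by simpa using D.ne) (by simpa using E.ne) 0
  rw [inter_univ, inter_univ] at a3
  let σ0 : St := ⟨Z, W, Γ0, 0⟩
  have hσ0 : Valid X Z Y W Fs Gs σ0 := ⟨⟨univ, isClopen_univ, (inter_univ _).symm⟩,
    ⟨univ, isClopen_univ, (inter_univ _).symm⟩, a1, a2, a3, a4, a5,
    fun j hj => (Nat.not_lt_zero j hj).elim, fun j hj => (Nat.not_lt_zero j hj).elim⟩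
  let lev : ℕ → Set St := fun k => Nat.rec {σ0} (fun k L => {τ | ∃ σ ∈ L, τ ∈ T σ k}) k
  have lev0 : lev 0 = {σ0} := rfl
  have levS : ∀ k, lev (k+1) = {τ | ∃ σ ∈ lev k, τ ∈ T σ k} := fun k => rfl
  have hval : ∀ k, ∀ σ ∈ lev k, Valid X Z Y W Fs Gs σ := by
    intro k
    induction k with
    | zero => rintro σ rfl; exact hσ0
    | succ k ih =>
      rintro τ ⟨σ, hσ, hτ⟩
      exact ((hT σ k (ih σ hσ)).1 τ hτ).1
  have hcov1 : ∀ k, ∀ x ∈ Z, ∃ σ ∈ lev k, x ∈ σ.P := by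
    intro k x hx
    induction k with
    | zero => exact ⟨σ0, rfl, hx⟩
    | succ k ih =>
      obtain ⟨σ, hσ, hxσ⟩ := ih
      obtain ⟨τ, hτ, hxτ⟩ := (hT σ k (hval k σ hσ)).2.1 x hxσ
      exact ⟨τ, ⟨σ, hσ, hτ⟩, hxτ⟩
  have hcov2 : ∀ k, ∀ x ∈ W, ∃ σ ∈ lev k, x ∈ σ.Q := by
    intro k x hx
    induction k with
    | zero => exact ⟨σ0, rfl, hx⟩
    | succ k ih =>
      obtain ⟨σ, hσ, hxσ⟩ := ih
      obtain ⟨τ, hτ, hxτ⟩ := (hT σ k (hval k σ hσ)).2.2.1 x hxσ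
      exact ⟨τ, ⟨σ, hσ, hτ⟩, hxτ⟩
  have hpar : ∀ k, ∀ τ ∈ lev (k+1), ∃ σ ∈ lev k, τ ∈ T σ k ∧ τ.P ⊆ σ.P ∧ τ.Q ⊆ σ.Q := by
    rintro k τ ⟨σ, hσ, hτ⟩
    have := (hT σ k (hval k σ hσ)).1 τ hτ
    exact ⟨σ, hσ, hτ, this.2.1, this.2.2.1⟩
  have hdis1 : ∀ k, ∀ σ ∈ lev k, ∀ σ' ∈ lev k, ∀ x, x ∈ σ.P → x ∈ σ'.P → σ = σ' := by
    intro k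
    induction k with
    | zero => rintro σ rfl σ' rfl x _ _; rfl
    | succ k ih =>
      intro τ hτ τ' hτ' x hx hx'
      obtain ⟨σ, hσ, h1, h2, h3⟩ := hpar k τ hτ
      obtain ⟨σ', hσ', h1', h2', h3'⟩ := hpar k τ' hτ'
      obtain rfl := ih σ hσ σ' hσ' x (h2 hx) (h2' hx')
      exact (hT σ k (hval k σ hσ)).2.2.2.1 τ h1 τ' h1' x hx hx'
  have hdis2 : ∀ k, ∀ σ ∈ lev k, ∀ σ' ∈ lev k, ∀ x, x ∈ σ.Q → x ∈ σ'.Q → σ = σ' := by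
    intro k
    induction k with
    | zero => rintro σ rfl σ' rfl x _ _; rfl
    | succ k ih =>
      intro τ hτ τ' hτ' x hx hx'
      obtain ⟨σ, hσ, h1, h2, h3⟩ := hpar k τ hτ
      obtain ⟨σ', hσ', h1', h2', h3'⟩ := hpar k τ' hτ'
      obtain rfl := ih σ hσ σ' hσ' x (h3 hx) (h3' hx')
      exact (hT σ k (hval k σ hσ)).2.2.2.2.1 τ h1 τ' h1' x hx hx'
  have hmesh : ∀ k, ∀ σ ∈ lev (k+1), Mesh k σ.P ∧ Mesh k σ.Q := by
    rintro k τ ⟨σ, hσ, hτ⟩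
    have := (hT σ k (hval k σ hσ)).1 τ hτ
    exact ⟨this.2.2.2.1, this.2.2.2.2.1⟩
  have hPc : ∀ k, ∀ σ ∈ lev k, IsClosed σ.P := by
    intro k σ hσ
    obtain ⟨O, hO, h⟩ := (hval k σ hσ).hP
    rw [h]; exact D.closed.inter hO.1
  have hQc : ∀ k, ∀ σ ∈ lev k, IsClosed σ.Q := by
    intro k σ hσ
    obtain ⟨O, hO, h⟩ := (hval k σ hσ).hQ
    rw [h]; exact E.closed.inter hO.1
  have hPZ : ∀ k, ∀ σ ∈ lev k, σ.P ⊆ Z := by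
    intro k σ hσ
    obtain ⟨O, hO, h⟩ := (hval k σ hσ).hP
    rw [h]; exact inter_subset_left
  have hQW : ∀ k, ∀ σ ∈ lev k, σ.Q ⊆ W := by
    intro k σ hσ
    obtain ⟨O, hO, h⟩ := (hval k σ hσ).hQ
    rw [h]; exact inter_subset_left
  let U : ℕ → Set (Cantor × Cantor) := fun k => {p | ∃ σ ∈ lev k, p.1 ∈ σ.P ∧ p.2 ∈ σ.Q}
  have hUmono : ∀ k, U (k+1) ⊆ U k := by
    rintro k p ⟨τ, hτ, h1, h2⟩
    obtain ⟨σ, hσ, -, h3, h4⟩ := hpar k τ hτ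
    exact ⟨σ, hσ, h3 h1, h4 h2⟩
  have hUanti : Antitone U := antitone_nat_of_succ_le hUmono
  have hUc : ∀ k, IsClosed (U k) := by
    intro k
    rw [← isOpen_compl_iff, isOpen_iff_forall_mem_open]
    intro p hp
    by_cases hpZ : p.1 ∈ Z
    · obtain ⟨σ, hσ, hpσ⟩ := hcov1 k p.1 hpZ
      obtain ⟨O, hO, h⟩ := (hval k σ hσ).hP
      refine ⟨O ×ˢ (σ.Q)ᶜ, ?_, hO.2.prod (hQc k σ hσ).isOpen_compl, ?_, ?_⟩
      · rintro q ⟨hq1, hq2⟩ ⟨σ', hσ', h1, h2⟩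
        have : q.1 ∈ σ.P := by rw [h]; exact ⟨hPZ k σ' hσ' h1, hq1⟩
        obtain rfl := hdis1 k σ hσ σ' hσ' q.1 this h1
        exact hq2 h2
      · rw [h] at hpσ; exact hpσ.2
      · intro hpQ
        exact hp ⟨σ, hσ, hpσ, hpQ⟩
    · refine ⟨Prod.fst ⁻¹' Zᶜ, ?_, D.closed.isOpen_compl.preimage continuous_fst, hpZ⟩
      rintro q hq ⟨σ, hσ, h1, h2⟩
      exact hq (hPZ k σ hσ h1)
  have hinj1 : ∀ p ∈ ⋂ k, U k, ∀ q ∈ ⋂ k, U k, p.1 = q.1 → p = q := by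
    intro p hp q hq he
    rw [mem_iInter] at hp hq
    refine Prod.ext he (eq_of_agr fun m => ?_)
    obtain ⟨σ, hσ, h1, h2⟩ := hp (m+1)
    obtain ⟨σ', hσ', h1', h2'⟩ := hq (m+1)
    obtain rfl := hdis1 (m+1) σ hσ σ' hσ' p.1 h1 (he ▸ h1')
    exact (hmesh m σ hσ).2 _ h2 _ h2'
  have hinj2 : ∀ p ∈ ⋂ k, U k, ∀ q ∈ ⋂ k, U k, p.2 = q.2 → p = q := by
    intro p hp q hq he
    rw [mem_iInter] at hp hq
    refine Prod.ext (eq_of_agr fun m => ?_) he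
    obtain ⟨σ, hσ, h1, h2⟩ := hp (m+1)
    obtain ⟨σ', hσ', h1', h2'⟩ := hq (m+1)
    obtain rfl := hdis2 (m+1) σ hσ σ' hσ' p.2 h2 (he ▸ h2')
    exact (hmesh m σ hσ).1 _ h1 _ h1'
  have hpers : ∀ k, ∀ σ ∈ lev k, ∀ p ∈ σ.Γ, p ∈ ⋂ k, U k := by
    intro k σ hσ p hp
    have h1 : ∀ l, ∃ τ ∈ lev (k+l), p ∈ τ.Γ := by
      intro l
      induction l with
      | zero => exact ⟨σ, hσ, hp⟩
      | succ l ih =>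
        obtain ⟨τ, hτ, hpτ⟩ := ih
        obtain ⟨τ', hτ', hpτ'⟩ := (hT τ (k+l) (hval _ τ hτ)).2.2.2.2.2 p hpτ
        exact ⟨τ', ⟨τ, hτ, hτ'⟩, hpτ'⟩
    rw [mem_iInter]
    intro l
    obtain ⟨τ, hτ, hpτ⟩ := h1 l
    have h2 := (hval _ τ hτ).sub hpτ
    exact hUanti (Nat.le_add_left l k) ⟨τ, hτ, h2.1, h2.2⟩
  have htot1 : ∀ x ∈ Z, ∃ p ∈ ⋂ k, U k, p.1 = x := by
    intro x hx
    choose s hs hxs using fun k => hcov1 k x hx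
    have hdec : ∀ k, (s (k+1)).Q ⊆ (s k).Q := by
      intro k
      obtain ⟨σ, hσ, -, h3, h4⟩ := hpar k _ (hs (k+1))
      obtain rfl := hdis1 k σ hσ (s k) (hs k) x (h3 (hxs (k+1))) (hxs k)
      exact h4
    have : (⋂ k, (s k).Q).Nonempty := by
      refine IsCompact.nonempty_iInter_of_sequence_nonempty_isCompact_isClosed _ hdec ?_
        (hQc 0 _ (hs 0)).isCompact (fun k => hQc k _ (hs k))
      intro k
      obtain ⟨p, hp⟩ := (hval k _ (hs k)).ne
      exact ⟨p.2, ((hval k _ (hs k)).sub hp).2⟩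
    obtain ⟨w, hw⟩ := this
    rw [mem_iInter] at hw
    exact ⟨(x, w), mem_iInter.2 fun k => ⟨s k, hs k, hxs k, hw k⟩, rfl⟩
  have htot2 : ∀ x ∈ W, ∃ p ∈ ⋂ k, U k, p.2 = x := by
    intro x hx
    choose s hs hxs using fun k => hcov2 k x hx
    have hdec : ∀ k, (s (k+1)).P ⊆ (s k).P := by
      intro k
      obtain ⟨σ, hσ, -, h3, h4⟩ := hpar k _ (hs (k+1))
      obtain rfl := hdis2 k σ hσ (s k) (hs k) x (h4 (hxs (k+1))) (hxs k)
      exact h3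
    have : (⋂ k, (s k).P).Nonempty := by
      refine IsCompact.nonempty_iInter_of_sequence_nonempty_isCompact_isClosed _ hdec ?_
        (hPc 0 _ (hs 0)).isCompact (fun k => hPc k _ (hs k))
      intro k
      obtain ⟨p, hp⟩ := (hval k _ (hs k)).ne
      exact ⟨p.1, ((hval k _ (hs k)).sub hp).1⟩
    obtain ⟨w, hw⟩ := this
    rw [mem_iInter] at hw
    exact ⟨(w, x), mem_iInter.2 fun k => ⟨s k, hs k, hw k, hxs k⟩, rfl⟩
  have hin1 : ∀ p ∈ ⋂ k, U k, p.1 ∈ Z ∧ p.2 ∈ W := by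
    intro p hp
    rw [mem_iInter] at hp
    obtain ⟨σ, hσ, h1, h2⟩ := hp 0
    exact ⟨hPZ 0 σ hσ h1, hQW 0 σ hσ h2⟩
  have hresp : ∀ p ∈ ⋂ k, U k, (p.1 ∈ X ↔ p.2 ∈ Y) := by
    intro p hp
    have hp' := hp
    rw [mem_iInter] at hp'
    by_cases h1 : ∃ i, p.1 ∈ Fs i
    · obtain ⟨i, hi⟩ := h1
      obtain ⟨σ, hσ, hs1, -⟩ := hp' 0
      obtain ⟨k, τ, hτ, q, hq, hqp⟩ := catch_arm lev St.P (fun σ => Prod.fst '' σ.Γ) Fs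
        (fun k σ hσ => (hval k σ hσ).cap1)
        (fun k σ hσ => ⟨((hval k σ hσ).iso.cpt.image continuous_fst).isClosed,
          (hval k σ hσ).ne.image _, by
            rintro _ ⟨q, hq, rfl⟩
            exact ((hval k σ hσ).sub hq).1⟩)
        (fun k σ hσ z hz => by
          obtain ⟨τ, hτ, hzτ⟩ := (hT σ k (hval k σ hσ)).2.1 z hz
          refine ⟨τ, ⟨σ, hσ, hτ⟩, hzτ, ?_⟩
          have := ((hT σ k (hval k σ hσ)).1 τ hτ).2.2.2.2.2
          exact this.imp (fun h => ⟨image_mono h.1, h.2⟩) id)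
        (fun k σ hσ => (hmesh k σ hσ).1) i p.1 hi (i+1) 0 σ hσ hs1 (by omega)
      have := hinj1 q (hpers k τ hτ q hq) p hp hqp
      subst this
      exact (hval k τ hτ).iso.resp q hq
    by_cases h2 : ∃ i, p.2 ∈ Gs i
    · obtain ⟨i, hi⟩ := h2
      obtain ⟨σ, hσ, -, hs1⟩ := hp' 0
      obtain ⟨k, τ, hτ, q, hq, hqp⟩ := catch_arm lev St.Q (fun σ => Prod.snd '' σ.Γ) Gs
        (fun k σ hσ => (hval k σ hσ).cap2)
        (fun k σ hσ => ⟨((hval k σ hσ).iso.cpt.image continuous_snd).isClosed,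
          (hval k σ hσ).ne.image _, by
            rintro _ ⟨q, hq, rfl⟩
            exact ((hval k σ hσ).sub hq).2⟩)
        (fun k σ hσ z hz => by
          obtain ⟨τ, hτ, hzτ⟩ := (hT σ k (hval k σ hσ)).2.2.1 z hz
          refine ⟨τ, ⟨σ, hσ, hτ⟩, hzτ, ?_⟩
          have := ((hT σ k (hval k σ hσ)).1 τ hτ).2.2.2.2.2
          exact this.imp (fun h => ⟨image_mono h.1, h.2⟩) id)
        (fun k σ hσ => (hmesh k σ hσ).2) i p.2 hi (i+1) 0 σ hσ hs1 (by omega)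
      have := hinj2 q (hpers k τ hτ q hq) p hp hqp
      subst this
      exact (hval k τ hτ).iso.resp q hq
    · push Not at h1 h2
      exact (D.h4 p.1 (hin1 p hp).1 h1).trans (E.h4 p.2 (hin1 p hp).2 h2).symm
  refine ⟨⋂ k, U k, ⟨(isClosed_iInter hUc).isCompact, hresp, hinj1, hinj2⟩, ?_, ?_⟩
  · apply Subset.antisymm
    · rintro _ ⟨p, hp, rfl⟩
      exact (hin1 p hp).1
    · intro x hx
      exact htot1 x hx
  · apply Subset.antisymm
    · rintro _ ⟨p, hp, rfl⟩
      exact (hin1 p hp).2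
    · intro x hx
      exact htot2 x hx

end BF2

theorem Good.iso {X Y : Set Cantor} (n : ℕ) : ∀ {b : Bool} {Z W : Set Cantor},
    Good X n b Z → Good Y n b W → Iso X Y Z W := by
  induction n using Nat.strong_induction_on with
  | _ n ih =>
  intro b Z W hZ hW
  match n, ih, hZ, hW with
  | 1, ih, hZ, hW =>
    obtain ⟨x, rfl, hx⟩ := hZ
    obtain ⟨y, rfl, hy⟩ := hW
    refine ⟨{(x, y)}, ⟨isCompact_singleton, ?_, ?_, ?_⟩, by simp, by simp⟩
    · rintro p rfl
      exact hx.trans hy.symm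
    · rintro p rfl q rfl _; rfl
    · rintro p rfl q rfl _; rfl
  | 2, ih, hZ, hW =>
    have key : ∀ {X Z : Set Cantor}, Good X 2 b Z →
        SideData X Z b {F | ∃ x ∈ Z, F = {x}} (fun _ => ∅) := by
      intro X Z h
      refine ⟨h.1, h.2.1, ?_, ?_, ?_, fun z hz _ => h.2.2.1 z hz⟩
      · rintro F ⟨x, hx, rfl⟩
        exact ⟨isClosed_singleton, singleton_nonempty x, singleton_subset_iff.2 hx, h.2.2.2 x hx⟩
      · rintro O hO ⟨x, hx⟩
        exact ⟨{x}, ⟨x, hx.1, rfl⟩, singleton_subset_iff.2 hx⟩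
      · intro i O hO hne
        simp at hne
    refine backforth (key hZ) (key hW) ?_
    rintro F ⟨x, hx, rfl⟩ G ⟨y, hy, rfl⟩
    refine ih 1 (by norm_num) (b := b) ⟨x, rfl, hZ.2.2.1 x hx⟩ ⟨y, rfl, hW.2.2.1 y hy⟩
  | n+3, ih, hZ, hW =>
    have key : ∀ {X Z : Set Cantor}, Good X (n+3) b Z → ∃ Fs,
        SideData X Z b {F | F ⊆ Z ∧ NwdIn F Z ∧ Good X (n+1) (!b) F} Fs := by
      intro X Z h
      obtain ⟨h1, h2, ⟨𝓔, hc, hE, hr⟩, h4⟩ := h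
      have hc' : (insert ∅ 𝓔).Countable := hc.insert _
      obtain ⟨e, he⟩ := hc'.exists_eq_range ⟨∅, mem_insert _ _⟩
      have hen : ∀ i, ∃ H, e i ⊆ H ∧ H ⊆ Z ∧ NwdIn H Z ∧ Good X (n+1) (!b) H := by
        intro i
        have hi : e i ∈ insert ∅ 𝓔 := he ▸ mem_range_self i
        rcases hi with hi | hi
        · obtain ⟨G, g1, g2, g3⟩ := h4 univ isOpen_univ (by simpa using h2)
          exact ⟨G, by rw [hi]; exact empty_subset _, g1.trans inter_subset_left, g2, g3⟩
        · obtain ⟨e1, e2, e3, e4⟩ := hE _ hi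
          exact enlarge h1 e2 e1 e4 h2 h4 e3
      choose Fs f1 f2 f3 f4 using hen
      refine ⟨Fs, h1, h2, ?_, ?_, ?_, ?_⟩
      · rintro F ⟨g1, g2, g3⟩
        exact ⟨g3.closed, g3.nonempty, g1, g2⟩
      · intro O hO hne
        obtain ⟨G, g1, g2, g3⟩ := h4 O hO hne
        exact ⟨G, ⟨g1.trans inter_subset_left, g2, g3⟩, g1⟩
      · intro i O hO hne
        exact ⟨inter_subset_left.trans (f2 i), (f3 i).mono inter_subset_left,
          (f4 i).restrict hO hne⟩
      · intro z hz hzi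
        refine hr z hz ?_
        rintro ⟨F, hF, hzF⟩
        have : F ∈ range e := he ▸ mem_insert_of_mem _ hF
        obtain ⟨i, rfl⟩ := this
        exact hzi i (f1 i hzF)
    obtain ⟨Fs, D⟩ := key hZ
    obtain ⟨Gs, E⟩ := key hW
    exact backforth D E fun F hF G hG => ih (n+1) (by omega) hF.2.2 hG.2.2

end SF

namespace SF

theorem isClosed_image {φ : Cantor → Cantor} (hφ : Continuous φ) {F : Set Cantor} (hF : IsClosed F) :
    IsClosed (φ '' F) := (hF.isCompact.image hφ).isClosed

theorem NwdIn.image {φ : Cantor → Cantor} (hφ : Continuous φ) (hi : Function.Injective φ)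
    {E F : Set Cantor} (h : NwdIn E F) : NwdIn (φ '' E) (φ '' F) := by
  rintro O hO ⟨_, ⟨y, hy, rfl⟩, hyO⟩
  obtain ⟨x, hx, hxE⟩ := h (φ ⁻¹' O) (hO.preimage hφ) ⟨y, hy, hyO⟩
  refine ⟨φ x, ⟨⟨x, hx.1, rfl⟩, hx.2⟩, ?_⟩
  rintro ⟨z, hz, hzx⟩
  exact hxE (hi hzx ▸ hz)

theorem Rep.image {X Y : Set Cantor} {φ : Cantor → Cantor} (hφ : Continuous φ)
    (hXY : ∀ y, y ∈ X ↔ φ y ∈ Y) : ∀ (n : ℕ) {b : Bool} {F : Set Cantor},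
    Rep X n b F → Rep Y n b (φ '' F)
  | 0, b, F, h => by
      have h : F = ∅ := h
      subst h
      exact image_empty _
  | 1, b, F, h => by
      refine ⟨h.1.image _, ?_⟩
      rintro _ ⟨y, hy, rfl⟩
      exact (hXY y).symm.trans (h.2 y hy)
  | n+2, b, F, h => by
      obtain ⟨𝓔, hc, hE, hr⟩ := h
      refine ⟨(fun E => φ '' E) '' 𝓔, hc.image _, ?_, ?_⟩
      · rintro _ ⟨E, hE', rfl⟩
        obtain ⟨h1, h2, h3⟩ := hE E hE'
        exact ⟨isClosed_image hφ h1, image_mono h2, Rep.image hφ hXY n h3⟩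
      · rintro _ ⟨y, hy, rfl⟩ hn
        refine (hXY y).symm.trans (hr y hy ?_)
        rintro ⟨E, hE', hyE⟩
        exact hn ⟨_, ⟨E, hE', rfl⟩, ⟨y, hyE, rfl⟩⟩

theorem Good.image {X Y : Set Cantor} {φ : Cantor → Cantor} (hφ : Continuous φ)
    (hi : Function.Injective φ)
    (hXY : ∀ y, y ∈ X ↔ φ y ∈ Y) : ∀ (n : ℕ) {b : Bool} {F : Set Cantor},
    Good X n b F → Good Y n b (φ '' F)
  | 0, b, F, h => h
  | 1, b, F, h => by
      obtain ⟨x, rfl, hx⟩ := h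
      exact ⟨φ x, image_singleton, (hXY x).symm.trans hx⟩
  | 2, b, F, h => by
      obtain ⟨h1, h2, h3, h4⟩ := h
      refine ⟨isClosed_image hφ h1, h2.image _, ?_, ?_⟩
      · rintro _ ⟨y, hy, rfl⟩
        exact (hXY y).symm.trans (h3 y hy)
      · rintro _ ⟨y, hy, rfl⟩
        have := (h4 y hy).image hφ hi
        rwa [image_singleton] at this
  | n+3, b, F, h => by
      obtain ⟨h1, h2, ⟨𝓔, hc, hE, hr⟩, h4⟩ := h
      refine ⟨isClosed_image hφ h1, h2.image _, ⟨(fun E => φ '' E) '' 𝓔, hc.image _, ?_, ?_⟩, ?_⟩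
      · rintro _ ⟨E, hE', rfl⟩
        obtain ⟨h1, h2, h3, h4⟩ := hE E hE'
        exact ⟨isClosed_image hφ h1, image_mono h2, Rep.image hφ hXY _ h3, h4.image hφ hi⟩
      · rintro _ ⟨y, hy, rfl⟩ hn
        refine (hXY y).symm.trans (hr y hy ?_)
        rintro ⟨E, hE', hyE⟩
        exact hn ⟨_, ⟨E, hE', rfl⟩, ⟨y, hyE, rfl⟩⟩
      · rintro O hO ⟨_, ⟨y, hy, rfl⟩, hyO⟩
        obtain ⟨G, hG, hn, hg⟩ := h4 (φ ⁻¹' O) (hO.preimage hφ) ⟨y, hy, hyO⟩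
        refine ⟨φ '' G, ?_, hn.image hφ hi, Good.image hφ hi hXY _ hg⟩
        rintro _ ⟨z, hz, rfl⟩
        exact ⟨⟨z, (hG hz).1, rfl⟩, (hG hz).2⟩

/-- interleaving -/
def ev (x : Cantor) : Cantor := fun i => x (2 * i)
def od (x : Cantor) : Cantor := fun i => x (2 * i + 1)
def il (q y : Cantor) : Cantor := fun i => if i % 2 = 0 then q (i / 2) else y (i / 2)

theorem ev_il (q y : Cantor) : ev (il q y) = q := by
  funext i
  simp [ev, il]

theorem od_il (q y : Cantor) : od (il q y) = y := by
  funext i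
  have h1 : (2 * i + 1) % 2 = 1 := by omega
  have h2 : (2 * i + 1) / 2 = i := by omega
  simp [od, il, h1, h2]

theorem il_ev_od (x : Cantor) : il (ev x) (od x) = x := by
  funext i
  by_cases h : i % 2 = 0
  · have : 2 * (i / 2) = i := by omega
    simp [il, ev, h, this]
  · have : 2 * (i / 2) + 1 = i := by omega
    simp [il, od, h, this]

theorem continuous_il (q : Cantor) : Continuous (il q) := by
  refine continuous_pi fun i => ?_
  by_cases h : i % 2 = 0
  · simp only [il, h, if_true]
    exact continuous_const
  · simp only [il, h, if_false]
    exact continuous_apply _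

theorem continuous_ev : Continuous ev := continuous_pi fun _ => continuous_apply _

theorem il_injective (q : Cantor) : Function.Injective (il q) := by
  intro y z h
  have := congrArg od h
  rwa [od_il, od_il] at this

def Dn (b : Bool) : Set Cantor := {q | {i | q i = b}.Finite}

theorem Dn_countable (b : Bool) : (Dn b).Countable := by
  have h : ({s : Set ℕ | s.Finite}).Countable := Set.Countable.ofPred_finite
  refine (h.preimage_of_injOn (f := fun q : Cantor => {i | q i = b}) ?_)
  intro q _ q' _ hqq
  funext i
  have : (q i = b) ↔ (q' i = b) := by
    have := congrArg (fun s : Set ℕ => i ∈ s) hqq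
    simpa using this
  revert this
  cases q i <;> cases q' i <;> cases b <;> simp

theorem Dn_dense (b : Bool) (x : Cantor) (m : ℕ) : ∃ q ∈ Dn b, Agr m x q := by
  refine ⟨fun i => if i < m then x i else !b, ?_, fun i hi => by simp [hi]⟩
  refine (Set.finite_lt_nat m).subset fun i hi => ?_
  by_contra h
  have h' : ¬ i < m := h
  have hi' : (if i < m then x i else !b) = b := hi
  rw [if_neg h'] at hi'
  cases b <;> simp at hi'

theorem Dn_finmod {b : Bool} {q q' : Cantor} (hq : q ∈ Dn b) (h : {i | q i ≠ q' i}.Finite) :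
    q' ∈ Dn b := by
  refine (Set.Finite.union hq h).subset fun i hi => ?_
  have hi : q' i = b := hi
  by_cases hh : q i = b
  · exact Or.inl hh
  · exact Or.inr fun h => hh (h.trans hi)

theorem Dn_up {q q' : Cantor} (hq : q ∈ Dn false) (h : ∀ n, q n = true → q' n = true) :
    q' ∈ Dn false := by
  refine Set.Finite.subset hq fun i hi => ?_
  have hi : q' i = false := hi
  change q i = false
  by_contra hh
  have := h i (by simpa using hh)
  simp [hi] at this

theorem Dn_down {q q' : Cantor} (hq : q' ∈ Dn true) (h : ∀ n, q n = true → q' n = true) :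
    q ∈ Dn true :=
  Set.Finite.subset hq fun i hi => h i hi

theorem const_mem_Dn (b : Bool) : (fun _ => !b) ∈ Dn b := by
  have : {i : ℕ | (!b) = b} = ∅ := by cases b <;> simp
  change {i : ℕ | (!b) = b}.Finite
  rw [this]; exact finite_empty

theorem const_notMem_Dn (b : Bool) : (fun _ => b) ∉ Dn b := by
  intro h
  have h : {i : ℕ | b = b}.Finite := h
  have : {i : ℕ | b = b} = univ := by simp
  rw [this] at h
  exact Set.infinite_univ h

structure SFam (S : Set Cantor) (b : Bool) : Prop where
  up : UpwardClosed S
  fm : ClosedUnderFinMod S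
  emp : b = false → (fun _ => false) ∉ S
  full : b = true → (fun _ => true) ∈ S

/-- the step construction -/
def nxt (S : Set Cantor) (b : Bool) : Set Cantor :=
  {x | (ev x ∈ Dn b ∧ od x ∈ S) ∨ (ev x ∉ Dn b ∧ b = true)}

theorem nxt_sfam {S : Set Cantor} {b : Bool} (h : SFam S (!b)) :
    SFam (nxt S b) b ∧ IsSemifilter (nxt S b) := by
  have hup : UpwardClosed (nxt S b) := by
    intro x hx y hxy
    have h1 : ∀ n, ev x n = true → ev y n = true := fun n => hxy _
    have h2 : ∀ n, od x n = true → od y n = true := fun n => hxy _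
    cases b
    · rcases hx with hx | hx
      · exact Or.inl ⟨Dn_up hx.1 h1, h.up _ hx.2 _ h2⟩
      · simp at hx
    · by_cases hy : ev y ∈ Dn true
      · rcases hx with hx | hx
        · exact Or.inl ⟨hy, h.up _ hx.2 _ h2⟩
        · exact absurd (Dn_down hy h1) hx.1
      · exact Or.inr ⟨hy, rfl⟩
  have hfm : ClosedUnderFinMod (nxt S b) := by
    intro x hx y hxy
    have h1 : {n | ev x n ≠ ev y n}.Finite :=
      hxy.preimage (f := fun n => 2 * n) (fun a _ b _ hab => by simpa using hab)
    have h2 : {n | od x n ≠ od y n}.Finite :=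
      hxy.preimage (f := fun n => 2 * n + 1) (fun a _ b _ hab => by simpa using hab)
    have h1' : {n | ev y n ≠ ev x n}.Finite := by
      simpa only [ne_comm] using h1
    rcases hx with hx | hx
    · exact Or.inl ⟨Dn_finmod hx.1 h1, h.fm _ hx.2 _ h2⟩
    · exact Or.inr ⟨fun hh => hx.1 (Dn_finmod hh h1'), hx.2⟩
  have hemp : (fun _ => false) ∉ nxt S b := by
    rintro (⟨h1, h2⟩ | ⟨h1, h2⟩)
    · cases b
      · exact const_notMem_Dn false h1
      · exact h.emp rfl h2
    · subst h2
      exact h1 (const_mem_Dn true)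
  have hfull : (fun _ => true) ∈ nxt S b := by
    cases b
    · exact Or.inl ⟨const_mem_Dn false, h.full rfl⟩
    · exact Or.inr ⟨const_notMem_Dn true, rfl⟩
  exact ⟨⟨hup, hfm, fun _ => hemp, fun _ => hfull⟩, hemp, hfull, hup, hfm⟩

theorem mem_nxt_il {S : Set Cantor} {b : Bool} {q : Cantor} (hq : q ∈ Dn b) (y : Cantor) :
    y ∈ S ↔ il q y ∈ nxt S b := by
  simp [nxt, ev_il, od_il, hq]

theorem exists_differ (m : ℕ) (x q : Cantor) : ∃ x', Agr m x x' ∧ ev x' ≠ q := by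
  refine ⟨Function.update x (2 * m) (!q m), ?_, ?_⟩
  · intro i hi
    rw [Function.update_of_ne (by omega)]
  · intro h
    have := congrFun h m
    simp [ev] at this

theorem nwd_fib (q : Cantor) : NwdIn {x | ev x = q} univ := by
  rintro O hO ⟨x, -, hx⟩
  obtain ⟨m, hm⟩ := open_agr hO hx
  obtain ⟨x', h1, h2⟩ := exists_differ m x q
  exact ⟨x', ⟨trivial, hm _ h1⟩, h2⟩

theorem nwd_single (x : Cantor) : NwdIn {x} univ :=
  (nwd_fib (ev x)).mono (by rintro _ rfl; rfl)

theorem image_il (q : Cantor) : il q '' univ = {x | ev x = q} := by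
  ext x
  constructor
  · rintro ⟨y, -, rfl⟩
    exact ev_il q y
  · intro h
    have h : ev x = q := h
    exact ⟨od x, trivial, by rw [← h, il_ev_od]⟩

theorem nxt_good {S : Set Cantor} {b : Bool} {n : ℕ} (h : Good S (n+1) (!b) univ) :
    Good (nxt S b) (n+3) b univ := by
  refine ⟨isClosed_univ, univ_nonempty,
    ⟨(fun q => {x | ev x = q}) '' Dn b, (Dn_countable b).image _, ?_, ?_⟩, ?_⟩
  · rintro _ ⟨q, hq, rfl⟩
    refine ⟨?_, subset_univ _, ?_, nwd_fib q⟩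
    · exact isClosed_eq continuous_ev continuous_const
    · change Rep (nxt S b) (n + 1) (!b) {x | ev x = q}
      rw [← image_il]
      exact Rep.image (continuous_il q) (mem_nxt_il hq) _ h.rep
  · intro x _ hx
    have : ev x ∉ Dn b := fun hh => hx ⟨_, ⟨ev x, hh, rfl⟩, rfl⟩
    simp [Side, nxt, this]
  · rintro O hO ⟨x, -, hx⟩
    obtain ⟨m, hm⟩ := open_agr hO hx
    obtain ⟨q, hq, hqa⟩ := Dn_dense b (ev x) m
    have hcl : IsClopen {y | Agr m (od x) y} :=
      isClopen_sat m fun y hy z hz => hy.trans hz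
    have hg : Good S (n+1) (!b) (univ ∩ {y | Agr m (od x) y}) :=
      Good.restrict h hcl ⟨od x, trivial, Agr.rfl⟩
    refine ⟨_, ?_, ?_, Good.image (continuous_il q) (il_injective q) (mem_nxt_il hq) _ hg⟩
    · rintro _ ⟨y, ⟨-, hy⟩, rfl⟩
      refine ⟨trivial, hm _ fun i hi => ?_⟩
      have hy : Agr m (od x) y := hy
      by_cases h : i % 2 = 0
      · have h2 : 2 * (i / 2) = i := by omega
        have := hqa (i / 2) (by omega)
        simp only [il, h, if_true]
        rw [← this, ev, h2]
      · have h2 : 2 * (i / 2) + 1 = i := by omega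
        have := hy (i / 2) (by omega)
        simp only [il, h, if_false]
        rw [← this, od, h2]
    · refine (nwd_fib q).mono ?_
      rintro _ ⟨y, -, rfl⟩
      exact ev_il q y

/-- base case of level three -/
def bas (b : Bool) : Set Cantor := {x | (x ∈ Dn b ∧ b = false) ∨ (x ∉ Dn b ∧ b = true)}

theorem bas_sfam (b : Bool) : SFam (bas b) b ∧ IsSemifilter (bas b) := by
  have hup : UpwardClosed (bas b) := by
    intro x hx y hxy
    rcases hx with ⟨h1, h2⟩ | ⟨h1, h2⟩
    · subst h2
      exact Or.inl ⟨Dn_up h1 hxy, rfl⟩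
    · subst h2
      exact Or.inr ⟨fun hh => h1 (Dn_down hh hxy), rfl⟩
  have hfm : ClosedUnderFinMod (bas b) := by
    intro x hx y hxy
    have hyx : {n | y n ≠ x n}.Finite := by
      simpa only [ne_comm] using hxy
    rcases hx with ⟨h1, h2⟩ | ⟨h1, h2⟩
    · exact Or.inl ⟨Dn_finmod h1 hxy, h2⟩
    · exact Or.inr ⟨fun hh => h1 (Dn_finmod hh hyx), h2⟩
  have hemp : (fun _ => false) ∉ bas b := by
    rintro (⟨h1, h2⟩ | ⟨h1, h2⟩)
    · subst h2
      exact const_notMem_Dn false h1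
    · subst h2
      exact h1 (const_mem_Dn true)
  have hfull : (fun _ => true) ∈ bas b := by
    cases b
    · exact Or.inl ⟨const_mem_Dn false, rfl⟩
    · exact Or.inr ⟨const_notMem_Dn true, rfl⟩
  exact ⟨⟨hup, hfm, fun _ => hemp, fun _ => hfull⟩, hemp, hfull, hup, hfm⟩

theorem bas_good (b : Bool) : Good (bas b) 3 b univ := by
  have hs : ∀ q ∈ Dn b, Side (bas b) (!b) q := by
    intro q hq
    cases b <;> simp [Side, bas, hq]
  refine ⟨isClosed_univ, univ_nonempty,
    ⟨(fun q => {q}) '' Dn b, (Dn_countable b).image _, ?_, ?_⟩, ?_⟩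
  · rintro _ ⟨q, hq, rfl⟩
    refine ⟨isClosed_singleton, subset_univ _, ⟨subsingleton_singleton, ?_⟩, nwd_single q⟩
    rintro x rfl
    exact hs x hq
  · intro x _ hx
    have : x ∉ Dn b := fun hh => hx ⟨_, ⟨x, hh, rfl⟩, rfl⟩
    simp [Side, bas, this]
  · rintro O hO ⟨x, -, hx⟩
    obtain ⟨m, hm⟩ := open_agr hO hx
    obtain ⟨q, hq, hqa⟩ := Dn_dense b x m
    refine ⟨{q}, ?_, nwd_single q, q, rfl, hs q hq⟩
    rintro _ rfl
    exact ⟨trivial, hm _ hqa⟩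

theorem exists_sfam : ∀ (n : ℕ) (b : Bool), ∃ S, SFam S b ∧ Good S (n+2) b univ ∧
    (1 ≤ n → IsSemifilter S)
  | 0, b => by
      refine ⟨{x | b = true}, ⟨fun x hx y _ => hx, fun x hx y _ => hx, ?_, fun h => h⟩,
        ⟨isClosed_univ, univ_nonempty, fun x _ => Iff.rfl, fun x _ => nwd_single x⟩, by omega⟩
      intro h h'
      have h' : b = true := h'
      simp [h] at h'
  | 1, b => ⟨bas b, (bas_sfam b).1, bas_good b, fun _ => (bas_sfam b).2⟩
  | n+2, b => by
      obtain ⟨S, h1, h2, -⟩ := exists_sfam n (!b)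
      exact ⟨nxt S b, (nxt_sfam h1).1, nxt_good h2, fun _ => (nxt_sfam h1).2⟩

end SF

namespace SF

theorem Iso.homeo {X Y F G : Set Cantor} (h : Iso X Y F G) :
    Nonempty (↥(X ∩ F) ≃ₜ ↥(Y ∩ G)) := by
  obtain ⟨Γ, hΓ, rfl, rfl⟩ := h
  have : CompactSpace Γ := isCompact_iff_compactSpace.1 hΓ.cpt
  let f1 : Γ → ↥(Prod.fst '' Γ) := fun p => ⟨p.1.1, p.1, p.2, rfl⟩
  let f2 : Γ → ↥(Prod.snd '' Γ) := fun p => ⟨p.1.2, p.1, p.2, rfl⟩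
  have c1 : Continuous f1 := (continuous_fst.comp continuous_subtype_val).subtype_mk _
  have c2 : Continuous f2 := (continuous_snd.comp continuous_subtype_val).subtype_mk _
  have b1 : Function.Bijective f1 := by
    constructor
    · intro p q hpq
      exact Subtype.ext (hΓ.inj1 p.1 p.2 q.1 q.2 (congrArg Subtype.val hpq))
    · rintro ⟨_, p, hp, rfl⟩
      exact ⟨⟨p, hp⟩, rfl⟩
  have b2 : Function.Bijective f2 := by
    constructor
    · intro p q hpq
      exact Subtype.ext (hΓ.inj2 p.1 p.2 q.1 q.2 (congrArg Subtype.val hpq))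
    · rintro ⟨_, p, hp, rfl⟩
      exact ⟨⟨p, hp⟩, rfl⟩
  let e1 : Γ ≃ₜ ↥(Prod.fst '' Γ) :=
    Continuous.homeoOfEquivCompactToT2 (f := Equiv.ofBijective f1 b1) c1
  let e2 : Γ ≃ₜ ↥(Prod.snd '' Γ) :=
    Continuous.homeoOfEquivCompactToT2 (f := Equiv.ofBijective f2 b2) c2
  let e := e1.symm.trans e2
  have he : ∀ x, (x.1 ∈ X ↔ (e x).1 ∈ Y) := by
    intro x
    obtain ⟨p, rfl⟩ := e1.surjective x
    have h1 : e (e1 p) = e2 p := by simp [e]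
    rw [h1]
    exact hΓ.resp p.1 p.2
  have he' : ∀ y, (y.1 ∈ Y ↔ (e.symm y).1 ∈ X) := by
    intro y
    have := he (e.symm y)
    rw [e.apply_symm_apply] at this
    exact this.symm
  refine ⟨{
    toFun := fun x => ⟨(e ⟨x.1, x.2.2⟩).1, (he ⟨x.1, x.2.2⟩).1 x.2.1, (e ⟨x.1, x.2.2⟩).2⟩
    invFun := fun y => ⟨(e.symm ⟨y.1, y.2.2⟩).1, (he' ⟨y.1, y.2.2⟩).1 y.2.1,
      (e.symm ⟨y.1, y.2.2⟩).2⟩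
    left_inv := fun x => by
      apply Subtype.ext
      simp
    right_inv := fun x => by
      apply Subtype.ext
      simp
    continuous_toFun := ?_
    continuous_invFun := ?_ }⟩
  · exact (continuous_subtype_val.comp (e.continuous.comp
      (continuous_subtype_val.subtype_mk _))).subtype_mk _
  · exact (continuous_subtype_val.comp (e.symm.continuous.comp
      (continuous_subtype_val.subtype_mk _))).subtype_mk _

theorem baire {ι : Type*} [Countable ι] {Z : Set Cantor} (hZ : IsClosed Z) (hne : Z.Nonempty)
    {C : ι → Set Cantor} (hC : ∀ i, IsClosed (C i)) (hcov : Z ⊆ ⋃ i, C i) :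
    ∃ p i, (Z ∩ cell p).Nonempty ∧ Z ∩ cell p ⊆ C i := by
  have : CompactSpace Z := isCompact_iff_compactSpace.1 hZ.isCompact
  have : Nonempty Z := hne.to_subtype
  obtain ⟨i, x, hx⟩ := nonempty_interior_of_iUnion_of_closed
    (f := fun i => (Subtype.val ⁻¹' C i : Set Z))
    (fun i => (hC i).preimage continuous_subtype_val) (by
      refine eq_univ_of_forall fun x => ?_
      obtain ⟨i, hi⟩ := mem_iUnion.1 (hcov x.2)
      exact mem_iUnion.2 ⟨i, hi⟩)
  rw [mem_interior] at hx
  obtain ⟨t, hts, ht, hxt⟩ := hx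
  obtain ⟨O, hO, rfl⟩ := isOpen_induced_iff.1 ht
  obtain ⟨m, hm⟩ := open_cell hO (x := x.1) hxt
  refine ⟨idx x.1 m, i, ⟨x.1, x.2, self_mem_cell _ _⟩, ?_⟩
  rintro y ⟨hyZ, hy⟩
  exact @hts ⟨y, hyZ⟩ (hm hy)

theorem Rep.compl {X : Set Cantor} : ∀ (n : ℕ) {b : Bool} {F : Set Cantor},
    Rep Xᶜ n b F → Rep X n (!b) F
  | 0, _, _, h => h
  | 1, b, F, h => ⟨h.1, fun x hx => by
      have h1 : x ∉ X ↔ b = true := h.2 x hx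
      change x ∈ X ↔ (!b) = true
      rw [← not_iff_not, h1]; simp⟩
  | n+2, b, F, h => by
      obtain ⟨𝓔, hc, hE, hr⟩ := h
      refine ⟨𝓔, hc, fun E hE' => ⟨(hE E hE').1, (hE E hE').2.1, Rep.compl n (hE E hE').2.2⟩, ?_⟩
      intro x hx hx'
      have h1 : x ∉ X ↔ b = true := hr x hx hx'
      change x ∈ X ↔ (!b) = true
      rw [← not_iff_not, h1]; simp

theorem rep_of_subset {X : Set Cantor} {A : ℕ → Set Cantor} (hA : ∀ n, IsFsigma (A n))
    (hmono : Monotone A) (hX : X = ⋃ n ∈ {n : ℕ | Odd n}, (A n \ ⋃ m < n, A m)) :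
    ∀ (n : ℕ) (F : Set Cantor), IsClosed F → F ⊆ A n → ∃ b, Rep X (2 * n + 2) b F := by
  have side : ∀ n x, x ∈ A n → (∀ m < n, x ∉ A m) → Side X (decide (Odd n)) x := by
    intro n x hx hn
    have h1 : ∀ k, x ∈ A k → (∀ m < k, x ∉ A m) → k = n := by
      intro k hk hk'
      rcases lt_trichotomy k n with h | h | h
      · exact absurd hk (hn k h)
      · exact h
      · exact absurd hx (hk' n h)
    change x ∈ X ↔ decide (Odd n) = true
    rw [hX, decide_eq_true_iff]
    simp only [mem_iUnion, mem_sdiff, not_exists, exists_prop]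
    constructor
    · rintro ⟨k, hk, hxk, hxk'⟩
      have := h1 k hxk fun m hm h => hxk' m ⟨hm, h⟩
      exact this ▸ hk
    · intro ho
      exact ⟨n, ho, hx, fun m h => hn m h.1 h.2⟩
  intro n
  induction n with
  | zero =>
    intro F hF hFA
    exact ⟨decide (Odd 0), ∅, countable_empty, by simp, fun x hx _ =>
      side 0 x (hFA hx) (by simp)⟩
  | succ n ih =>
    intro F hF hFA
    obtain ⟨K, hK, hKA⟩ := hA n
    refine ⟨decide (Odd (n+1)), absorb (n := 2 * n + 2) (𝓓 := range K) hF (countable_range K) ?_ ?_⟩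
    · rintro _ ⟨i, rfl⟩
      exact ⟨hK i, ih (K i) (hK i) (by rw [hKA]; exact subset_iUnion K i)⟩
    · intro x hx hx'
      refine side (n+1) x (hFA hx) fun m hm hxm => hx' ?_
      have : x ∈ A n := hmono (Nat.lt_succ_iff.1 hm) hxm
      rw [hKA] at this
      obtain ⟨i, hi⟩ := mem_iUnion.1 this
      exact ⟨K i, ⟨i, rfl⟩, hi⟩

theorem exists_rep {X Z : Set Cantor} (h : InDelta X) (hZ : IsClosed Z) (hne : Z.Nonempty) :
    ∃ n p b, (Z ∩ cell p).Nonempty ∧ Rep X n b (Z ∩ cell p) := by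
  obtain ⟨⟨A, hA, hAm, hAX⟩, ⟨B, hB, hBm, hBX⟩⟩ := h
  choose K hK hKA using hA
  choose L hL hLB using hB
  obtain ⟨p, i, hpne, hpi⟩ := baire (ι := (ℕ × ℕ) ⊕ (ℕ × ℕ)) hZ hne
    (C := Sum.elim (fun i => K i.1 i.2) (fun i => L i.1 i.2))
    (by rintro (i | i) <;> simp [hK, hL]) (by
      intro x _
      by_cases hx : x ∈ X
      · rw [hAX] at hx
        simp only [mem_iUnion, mem_sdiff, exists_prop] at hx
        obtain ⟨n, _, hx, _⟩ := hx
        rw [hKA] at hx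
        obtain ⟨i, hi⟩ := mem_iUnion.1 hx
        exact mem_iUnion.2 ⟨Sum.inl (n, i), hi⟩
      · have hx : x ∈ Xᶜ := hx
        rw [hBX] at hx
        simp only [mem_iUnion, mem_sdiff, exists_prop] at hx
        obtain ⟨n, _, hx, _⟩ := hx
        rw [hLB] at hx
        obtain ⟨i, hi⟩ := mem_iUnion.1 hx
        exact mem_iUnion.2 ⟨Sum.inr (n, i), hi⟩)
  have hcl : IsClosed (Z ∩ cell p) := hZ.inter (isClopen_cell p).1
  rcases i with i | i
  · obtain ⟨b, hb⟩ := rep_of_subset (fun n => ⟨K n, hK n, hKA n⟩) hAm hAX i.1 _ hcl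
      (hpi.trans (by rw [hKA]; exact subset_iUnion (K i.1) i.2))
    exact ⟨_, p, b, hpne, hb⟩
  · obtain ⟨b, hb⟩ := rep_of_subset (fun n => ⟨L n, hL n, hLB n⟩) hBm hBX i.1 _ hcl
      (hpi.trans (by rw [hLB]; exact subset_iUnion (L i.1) i.2))
    exact ⟨_, p, _, hpne, Rep.compl _ hb⟩

theorem cell_inter (p q : Idx) (h : (cell p ∩ cell q).Nonempty) :
    ∃ r, cell r = cell p ∩ cell q := by
  obtain ⟨x, hp, hq⟩ := h
  refine ⟨idx x (max p.1 q.1), ?_⟩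
  ext y
  rw [mem_cell_idx]
  constructor
  · intro h
    exact ⟨fun i => (h i (lt_of_lt_of_le i.2 (le_max_left _ _))).symm.trans (hp i),
      fun i => (h i (lt_of_lt_of_le i.2 (le_max_right _ _))).symm.trans (hq i)⟩
  · rintro ⟨h1, h2⟩ i hi
    rcases lt_max_iff.1 hi with h | h
    · exact (hp ⟨i, h⟩).trans (h1 ⟨i, h⟩).symm
    · exact (hq ⟨i, h⟩).trans (h2 ⟨i, h⟩).symm

theorem exists_good {X Z : Set Cantor} (h : InDelta X) (hZ : IsClosed Z) (hne : Z.Nonempty) :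
    ∃ n p b, Good X (n+1) b (Z ∩ cell p) := by
  classical
  have hex : ∃ n, ∃ p b, (Z ∩ cell p).Nonempty ∧ Rep X n b (Z ∩ cell p) := exists_rep h hZ hne
  obtain ⟨p, b, hpne, hrep⟩ := Nat.find_spec hex
  have hmin := fun m => Nat.find_min hex (m := m)
  generalize Nat.find hex = n at hrep hmin
  match n, hrep, hmin with
  | 0, hrep, _ =>
    have hrep : Z ∩ cell p = ∅ := hrep
    rw [hrep] at hpne
    exact (not_nonempty_empty hpne).elim
  | n+1, hrep, hmin =>
    have hcl : IsClosed (Z ∩ cell p) := hZ.inter (isClopen_cell p).1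
    refine ⟨n, p, b, good_core n b _ hcl hpne hrep ?_⟩
    rintro q hq ⟨𝓔, hc, hE, hcov⟩
    have := hc.to_subtype
    obtain ⟨r, i, hrne, hri⟩ := baire (ι := 𝓔) (hcl.inter (isClopen_cell q).1) hq
      (C := fun E => E.1) (fun E => (hE E.1 E.2).1) (by rwa [← sUnion_eq_iUnion])
    obtain ⟨b', hb'⟩ := (hE i.1 i.2).2
    obtain ⟨x, ⟨⟨hxZ, hxp⟩, hxq⟩, hxr⟩ := hrne
    obtain ⟨s, hs⟩ := cell_inter p q ⟨x, hxp, hxq⟩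
    obtain ⟨t, ht⟩ := cell_inter s r ⟨x, by rw [hs]; exact ⟨hxp, hxq⟩, hxr⟩
    have heq : Z ∩ cell t = Z ∩ cell p ∩ cell q ∩ cell r := by
      rw [ht, hs]; simp only [inter_assoc]
    refine hmin n (Nat.lt_succ_self n) ⟨t, b', ?_, ?_⟩
    · rw [heq]; exact ⟨x, ⟨⟨hxZ, hxp⟩, hxq⟩, hxr⟩
    · refine Rep.subset n hb' (hZ.inter (isClopen_cell t).1) ?_
      rw [heq]; exact hri

theorem homeo_prod {ι T S : Type*} [TopologicalSpace ι] [DiscreteTopology ι] [TopologicalSpace T]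
    [TopologicalSpace S] (V : ι → Set T) (hV : ∀ i, IsOpen (V i))
    (hd : ∀ i j, ∀ x, x ∈ V i → x ∈ V j → i = j) (hcov : ∀ x, ∃ i, x ∈ V i)
    (h : ∀ i, Nonempty (V i ≃ₜ S)) : Nonempty (T ≃ₜ ι × S) := by
  have e := fun i => Classical.choice (h i)
  let f : ι × S → T := fun q => ((e q.1).symm q.2).1
  have hc : Continuous f := continuous_prod_of_discrete_left.2 fun i =>
    continuous_subtype_val.comp (e i).symm.continuous
  have ho : IsOpenMap f := isOpenMap_prod_of_discrete_left.2 fun i =>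
    ((hV i).isOpenMap_subtype_val).comp (e i).symm.isOpenMap
  have hb : Function.Bijective f := by
    constructor
    · rintro ⟨i, s⟩ ⟨j, t⟩ hst
      have hst : ((e i).symm s).1 = ((e j).symm t).1 := hst
      have hij : i = j := hd i j _ ((e i).symm s).2 (hst ▸ ((e j).symm t).2)
      subst hij
      have := (e i).symm.injective (Subtype.ext hst)
      rw [this]
    · intro x
      obtain ⟨i, hi⟩ := hcov x
      exact ⟨⟨i, e i ⟨x, hi⟩⟩, by simp [f]⟩
  exact ⟨((Equiv.ofBijective f hb).toHomeomorphOfContinuousOpen hc ho).symm⟩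

theorem homeo_of_cover {T S : Type*} [TopologicalSpace T] [TopologicalSpace S] [Nonempty T]
    (hS : Nonempty (S ≃ₜ ℕ × S)) (U : ℕ → Set T) (hU : ∀ i, IsClopen (U i))
    (hcov : ∀ x, ∃ i, x ∈ U i)
    (h : ∀ i (W : Set T), IsOpen W → W ⊆ U i → W.Nonempty → W ⊆ U i \ ⋃ j < i, U j →
      U i \ ⋃ j < i, U j ⊆ W → Nonempty (W ≃ₜ S)) : Nonempty (T ≃ₜ S) := by
  classical
  let V : ℕ → Set T := fun i => U i \ ⋃ j < i, U j
  have hV : ∀ i, IsOpen (V i) := fun i =>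
    (hU i).2.sdiff ((Set.finite_lt_nat i).isClosed_biUnion fun j _ => (hU j).1)
  have hd : ∀ i j x, x ∈ V i → x ∈ V j → i = j := by
    intro i j x hi hj
    rcases lt_trichotomy i j with hh | hh | hh
    · exact (hj.2 (mem_iUnion₂.2 ⟨i, hh, hi.1⟩)).elim
    · exact hh
    · exact (hi.2 (mem_iUnion₂.2 ⟨j, hh, hj.1⟩)).elim
  have hc : ∀ x, ∃ i, x ∈ V i := by
    intro x
    refine ⟨Nat.find (hcov x), Nat.find_spec (hcov x), fun hx => ?_⟩
    obtain ⟨j, hj, hxj⟩ := mem_iUnion₂.1 hx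
    exact Nat.find_min (hcov x) hj hxj
  let ι := {i : ℕ // (V i).Nonempty}
  obtain ⟨e⟩ := homeo_prod (ι := ι) (S := S) (fun i => V i.1) (fun i => hV i.1)
    (fun i j x hi hj => Subtype.ext (hd i.1 j.1 x hi hj))
    (fun x => by
      obtain ⟨i, hi⟩ := hc x
      exact ⟨⟨i, x, hi⟩, hi⟩)
    (fun i => h i.1 (V i.1) (hV i.1) sdiff_subset i.2 Subset.rfl Subset.rfl)
  obtain ⟨g⟩ := hS
  have : Nonempty ι := by
    obtain ⟨x⟩ := ‹Nonempty T›
    obtain ⟨i, hi⟩ := hc x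
    exact ⟨⟨i, x, hi⟩⟩
  obtain ⟨q⟩ : Nonempty (ι × ℕ ≃ ℕ) := nonempty_equiv_of_countable
  exact ⟨e.trans (((Homeomorph.refl ι).prodCongr g).trans
    ((Homeomorph.prodAssoc ι ℕ S).symm.trans
      ((q.toHomeomorphOfDiscrete.prodCongr (Homeomorph.refl S)).trans g.symm)))⟩

def preim (A D : Set Cantor) : ↥(Subtype.val ⁻¹' D : Set ↥A) ≃ₜ ↥(A ∩ D) where
  toFun x := ⟨x.1.1, x.1.2, x.2⟩
  invFun y := ⟨⟨y.1, y.2.1⟩, y.2.2⟩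
  left_inv _ := rfl
  right_inv _ := rfl
  continuous_toFun := (continuous_subtype_val.comp continuous_subtype_val).subtype_mk _
  continuous_invFun := (continuous_subtype_val.subtype_mk _).subtype_mk _

theorem good_homeo {X S F : Set Cantor} {n : ℕ} {b : Bool} (hF : Good X n b F)
    (hS : Good S n b univ) {O : Set Cantor} (hO : IsClopen O) (hne : (F ∩ O).Nonempty) :
    Nonempty (↥(X ∩ (F ∩ O)) ≃ₜ S) := by
  obtain ⟨e⟩ := (Good.iso n (Good.restrict hF hO hne) hS).homeo
  exact ⟨e.trans (Homeomorph.setCongr (inter_univ S))⟩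

theorem self_prod {S : Set Cantor} {n : ℕ} {b : Bool} (hS : Good S n b univ)
    (h0 : (fun _ => false) ∉ S) : Nonempty (S ≃ₜ ℕ × S) := by
  classical
  let O : ℕ → Set Cantor := fun k => {x | x k = true ∧ ∀ j < k, x j = false}
  have hO : ∀ k, IsClopen (O k) := fun k => isClopen_sat (k+1) fun x hx y hxy =>
    ⟨(hxy k (by omega)).symm.trans hx.1, fun j hj => (hxy j (by omega)).symm.trans (hx.2 j hj)⟩
  refine homeo_prod (fun k => (Subtype.val ⁻¹' O k : Set S))
    (fun k => (hO k).2.preimage continuous_subtype_val) ?_ ?_ ?_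
  · intro i j x hi hj
    rcases lt_trichotomy i j with hh | hh | hh
    · have := hj.2 i hh
      rw [hi.1] at this
      simp at this
    · exact hh
    · have := hi.2 j hh
      rw [hj.1] at this
      simp at this
  · intro x
    have hx : ∃ k, x.1 k = true := by
      by_contra hcon
      push Not at hcon
      refine h0 ?_
      have : x.1 = fun _ => false := by
        funext k
        simpa using hcon k
      rw [← this]; exact x.2
    refine ⟨Nat.find hx, Nat.find_spec hx, fun j hj => ?_⟩
    simpa using Nat.find_min hx hj
  · intro k
    obtain ⟨e⟩ := good_homeo hS hS (hO k)
      ⟨fun i => decide (i = k), trivial, by simp, fun j hj => by simp [hj.ne]⟩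
    refine ⟨(preim S (O k)).trans ((Homeomorph.setCongr ?_).trans e)⟩
    rw [univ_inter]

theorem open_homeo {X Z S : Set Cantor} {n : ℕ} {b : Bool} {p : Idx} (hXZ : X ⊆ Z)
    (hF : Good X n b (Z ∩ cell p)) (hS : Good S n b univ) (hSS : Nonempty (S ≃ₜ ℕ × S))
    {O : Set Cantor} (hO : IsOpen O) (hOp : O ⊆ cell p) (hne : (X ∩ O).Nonempty) :
    Nonempty (↥(X ∩ O) ≃ₜ S) := by
  classical
  have : Nonempty ↥(X ∩ O) := hne.to_subtype
  have : Nonempty Idx := ⟨p⟩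
  obtain ⟨g, hg⟩ := exists_surjective_nat Idx
  let C : ℕ → Set Cantor := fun k => if cell (g k) ⊆ O then cell (g k) else ∅
  have hC : ∀ k, IsClopen (C k) := by
    intro k
    by_cases h : cell (g k) ⊆ O
    · simp only [C, h, if_true]; exact isClopen_cell _
    · simp only [C, h, if_false]; exact isClopen_empty
  have hCO : ∀ k, C k ⊆ O := by
    intro k
    by_cases h : cell (g k) ⊆ O
    · simp only [C, h, if_true]
    · simp only [C, h, if_false]; exact empty_subset _
  refine homeo_of_cover hSS (fun k => (Subtype.val ⁻¹' C k : Set ↥(X ∩ O)))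
    (fun k => (hC k).preimage continuous_subtype_val) ?_ ?_
  · intro x
    obtain ⟨m, hm⟩ := open_cell hO x.2.2
    obtain ⟨k, hk⟩ := hg (idx x.1 m)
    refine ⟨k, ?_⟩
    change x.1 ∈ C k
    simp only [C, hk, hm, if_true]
    exact self_mem_cell _ _
  · intro k W _ hWU hWne hW1 hW2
    let D : Set Cantor := C k \ ⋃ j < k, C j
    have hD : IsClopen D :=
      (hC k).diff ((Set.finite_lt_nat k).isClopen_biUnion fun j _ => hC j)
    have hWD : W = Subtype.val ⁻¹' D := by
      have : (Subtype.val ⁻¹' D : Set ↥(X ∩ O)) =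
          Subtype.val ⁻¹' C k \ ⋃ j < k, Subtype.val ⁻¹' C j := by
        ext x; simp [D]
      rw [this]
      exact Subset.antisymm hW1 hW2
    subst hWD
    obtain ⟨x, hx⟩ := hWne
    have hDp : D ⊆ cell p := sdiff_subset.trans ((hCO k).trans hOp)
    obtain ⟨e⟩ := good_homeo hF hS hD ⟨x.1, ⟨hXZ x.2.1, hOp x.2.2⟩, hx⟩
    refine ⟨(preim (X ∩ O) D).trans ((Homeomorph.setCongr ?_).trans e)⟩
    ext y
    constructor
    · rintro ⟨⟨h1, h2⟩, h3⟩
      exact ⟨h1, ⟨hXZ h1, hOp h2⟩, h3⟩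
    · rintro ⟨h1, h2, h3⟩
      exact ⟨⟨h1, hCO k h3.1⟩, h3⟩

theorem main {X : Set Cantor} (hhom : IsHomogeneous X) (hnlc : ¬ LocallyCompactSpace X)
    (hdel : InDelta X) : ∃ S : Set Cantor, IsSemifilter S ∧ Nonempty (X ≃ₜ S) := by
  classical
  have hXne : X.Nonempty := by
    by_contra hcon
    rw [not_nonempty_iff_eq_empty] at hcon
    subst hcon
    exact hnlc inferInstance
  have : Nonempty X := hXne.to_subtype
  have hXZ : X ⊆ closure X := subset_closure
  obtain ⟨n, p, b, hgood⟩ := exists_good hdel (isClosed_closure (s := X)) hXne.closure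
  obtain ⟨z, hzZ, hzp⟩ := hgood.nonempty
  obtain ⟨x0, hx0p, hx0X⟩ := mem_closure_iff.1 hzZ _ (isClopen_cell p).2 hzp
  choose h hh using fun x : X => hhom ⟨x0, hx0X⟩ x
  let Q : Set X := Subtype.val ⁻¹' cell p
  have hQ : IsClopen Q := (isClopen_cell p).preimage continuous_subtype_val
  let U : X → Set X := fun x => h x '' Q
  have hU : ∀ x, IsClopen (U x) := fun x =>
    ⟨(h x).isClosedMap _ hQ.1, (h x).isOpenMap _ hQ.2⟩
  have hxU : ∀ x, x ∈ U x := fun x => ⟨⟨x0, hx0X⟩, hx0p, hh x⟩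
  have hn : 2 ≤ n := by
    by_contra hlt
    have hside : ∀ x ∈ closure X ∩ cell p, Side X b x := by
      have : n = 0 ∨ n = 1 := by omega
      rcases this with rfl | rfl
      · obtain ⟨y, hy, hs⟩ := hgood
        intro x hx
        rw [hy] at hx
        rw [mem_singleton_iff.1 hx]; exact hs
      · exact hgood.2.2.1
    have hb : b = true := (hside x0 ⟨hXZ hx0X, hx0p⟩).1 hx0X
    have hsub : closure X ∩ cell p ⊆ X := fun x hx => (hside x hx).2 hb
    have hQc : IsCompact Q := by
      rw [Subtype.isCompact_iff]
      have : Subtype.val '' Q = closure X ∩ cell p := by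
        ext y
        constructor
        · rintro ⟨x, hx, rfl⟩
          exact ⟨hXZ x.2, hx⟩
        · intro hy
          exact ⟨⟨y, hsub hy⟩, hy.2, rfl⟩
      rw [this]
      exact hgood.closed.isCompact
    have : WeaklyLocallyCompactSpace X :=
      ⟨fun x => ⟨U x, hQc.image (h x).continuous, (hU x).2.mem_nhds (hxU x)⟩⟩
    exact hnlc inferInstance
  obtain ⟨k, rfl⟩ : ∃ k, n = k + 2 := ⟨n - 2, by omega⟩
  obtain ⟨S, -, hS, hsf⟩ := exists_sfam (k+1) b
  have hsf : IsSemifilter S := hsf (by omega)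
  have hS : Good S (k+2+1) b univ := hS
  have hSS := self_prod hS hsf.1
  refine ⟨S, hsf, ?_⟩
  obtain ⟨T, hTc, hT⟩ := TopologicalSpace.isOpen_iUnion_countable U fun x => (hU x).2
  have hTcov : ∀ x, ∃ t ∈ T, x ∈ U t := by
    intro x
    have hx : x ∈ ⋃ i, U i := mem_iUnion.2 ⟨x, hxU x⟩
    rw [← hT] at hx
    simpa using hx
  have hTne : T.Nonempty := by
    obtain ⟨t, ht, -⟩ := hTcov ⟨x0, hx0X⟩
    exact ⟨t, ht⟩
  obtain ⟨f, hf⟩ := hTc.exists_eq_range hTne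
  refine homeo_of_cover hSS (fun i => U (f i)) (fun i => hU _) ?_ ?_
  · intro x
    obtain ⟨t, ht, hx⟩ := hTcov x
    rw [hf] at ht
    obtain ⟨i, rfl⟩ := ht
    exact ⟨i, hx⟩
  · intro i W hW hWU hWne _ _
    have hW' : IsOpen ((h (f i)).symm '' W) := (h (f i)).symm.isOpenMap _ hW
    obtain ⟨O, hO, hOW⟩ := isOpen_induced_iff.1 hW'
    have hWQ : (h (f i)).symm '' W ⊆ Q := by
      rintro _ ⟨w, hw, rfl⟩
      obtain ⟨y, hy, hyw⟩ := hWU hw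
      rw [← hyw, Homeomorph.symm_apply_apply]
      exact hy
    have hOp : (h (f i)).symm '' W = Subtype.val ⁻¹' (O ∩ cell p) := by
      rw [preimage_inter, hOW]
      exact (inter_eq_left.2 hWQ).symm
    have e1 := (h (f i)).symm.image W
    rw [hOp] at e1
    have hne : (X ∩ (O ∩ cell p)).Nonempty := by
      obtain ⟨w, hw⟩ := hWne
      have : (h (f i)).symm w ∈ (h (f i)).symm '' W := ⟨w, hw, rfl⟩
      rw [hOp] at this
      exact ⟨_, ((h (f i)).symm w).2, this⟩
    obtain ⟨e2⟩ := open_homeo hXZ hgood hS hSS (hO.inter (isClopen_cell p).2)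
      inter_subset_right hne
    exact ⟨e1.trans ((preim X (O ∩ cell p)).trans e2)⟩

end SF

/-- A homogeneous non-locally-compact space in Δ is homeomorphic to a semifilter. -/
theorem inDelta_homeomorphic_semifilter (X : Set Cantor)
    (hhom : IsHomogeneous X) (hnlc : ¬ LocallyCompactSpace X) (hdel : InDelta X) :
    ∃ S : Set Cantor, IsSemifilter S ∧ Nonempty (X ≃ₜ S) := by
  exact SF.main hhom hnlc hdel
end

section
/- Let X be a homogeneous subspace of the Cantor space 2^ω with X ∈ Δ. Then there exists ℓ ∈ ω such that X ∈ D_ℓ(Σ⁰₂), i.e., X is an ℓ-fold difference of Fσ subsets of 2^ω: there is an increasing sequence A_0 ⊆ A_1 ⊆ … ⊆ A_{ℓ-1} of Fσ subsets of 2^ω with X = ⋃{A_k \ ⋃_{j<k} A_j : k < ℓ and k ≢ ℓ (mod 2)}. -/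
open Set

theorem isFsigma_iff_compl (A : Set Cantor) : IsFsigma A ↔ IsGδ Aᶜ := by
  rw [isGδ_iff_eq_iInter_nat]
  constructor
  · rintro ⟨F, hF, rfl⟩
    exact ⟨fun n => (F n)ᶜ, fun n => (hF n).isOpen_compl, by rw [compl_iUnion]⟩
  · rintro ⟨f, hf, h⟩
    exact ⟨fun n => (f n)ᶜ, fun n => (hf n).isClosed_compl, by
      rw [← compl_iInter, ← h, compl_compl]⟩

theorem fs_closed {A : Set Cantor} (h : IsClosed A) : IsFsigma A :=
  (isFsigma_iff_compl A).2 h.isOpen_compl.isGδ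

theorem fs_open {A : Set Cantor} (h : IsOpen A) : IsFsigma A :=
  (isFsigma_iff_compl A).2 h.isClosed_compl.isGδ

theorem fs_union {A B : Set Cantor} (hA : IsFsigma A) (hB : IsFsigma B) :
    IsFsigma (A ∪ B) := by
  rw [isFsigma_iff_compl] at *
  rw [compl_union]
  exact hA.inter hB

theorem fs_inter {A B : Set Cantor} (hA : IsFsigma A) (hB : IsFsigma B) :
    IsFsigma (A ∩ B) := by
  rw [isFsigma_iff_compl] at *
  rw [compl_inter]
  exact hA.union hB

theorem fs_iUnion {A : ℕ → Set Cantor} (hA : ∀ n, IsFsigma (A n)) :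
    IsFsigma (⋃ n, A n) := by
  rw [isFsigma_iff_compl, compl_iUnion]
  exact IsGδ.iInter fun n => (isFsigma_iff_compl _).1 (hA n)

/-- `Y` is a difference of Fσ sets, counted along the odd indices below `n`. -/
def PDiff (n : ℕ) (Y : Set Cantor) : Prop :=
  ∃ A : ℕ → Set Cantor, (∀ k, IsFsigma (A k)) ∧ Monotone A ∧
    ∀ x, x ∈ Y ↔ ∃ k < n, Odd k ∧ x ∈ A k ∧ ∀ j < k, x ∉ A j

theorem pdiff_transport (X : Set Cantor) (h : X ≃ₜ X) (n : ℕ) (Z : Set Cantor) (hZX : Z ⊆ X)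
    (hZ : PDiff n Z) : PDiff n {x | ∃ hx : x ∈ X, (h ⟨x, hx⟩ : Cantor) ∈ Z} := by
  classical
  have hO : ∀ (m : ℕ) (b : Bool), ∃ O : Set Cantor, IsOpen O ∧
      ∀ x : X, (x : Cantor) ∈ O ↔ (h x : Cantor) m = b := by
    intro m b
    have : IsOpen {x : X | (h x : Cantor) m = b} := by
      have hc : Continuous fun x : X => (h x : Cantor) m :=
        (continuous_apply m).comp (continuous_subtype_val.comp h.continuous)
      exact (isOpen_discrete {b}).preimage hc
    obtain ⟨O, hO, h2⟩ := isOpen_induced_iff.1 this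
    refine ⟨O, hO, fun x => ?_⟩
    have : x ∈ Subtype.val ⁻¹' O ↔ x ∈ {x : X | (h x : Cantor) m = b} := by rw [h2]
    exact this
  choose O hOo hOm using hO
  set G : Set Cantor := closure X ∩ ⋂ m, (O m true ∪ O m false) with hG
  have hGd : IsGδ G := isClosed_closure.isGδ.inter
    (IsGδ.iInter fun m => ((hOo m true).union (hOo m false)).isGδ)
  have hXG : X ⊆ G := by
    intro x hx
    refine ⟨subset_closure hx, mem_iInter.2 fun m => ?_⟩
    have h1 := hOm m true ⟨x, hx⟩
    have h2 := hOm m false ⟨x, hx⟩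
    cases hb : (h ⟨x, hx⟩ : Cantor) m with
    | true => exact Or.inl (h1.2 hb)
    | false => exact Or.inr (h2.2 hb)
  have hdisj : ∀ x ∈ closure X, ∀ m, x ∈ O m true → x ∈ O m false → False := by
    intro x hx m h1 h2
    obtain ⟨y, ⟨hy1, hy2⟩, hyX⟩ := mem_closure_iff.1 hx _ ((hOo m true).inter (hOo m false)) ⟨h1, h2⟩
    have e1 := (hOm m true ⟨y, hyX⟩).1 hy1
    have e2 := (hOm m false ⟨y, hyX⟩).1 hy2
    rw [e1] at e2
    exact Bool.noConfusion e2
  let F : Cantor → Cantor := fun x m => decide (x ∈ O m true)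
  have hFval : ∀ x ∈ G, ∀ m b, x ∈ O m b → F x m = b := by
    intro x hx m b hb
    cases b with
    | true => simpa [F] using hb
    | false =>
      have : x ∉ O m true := fun h1 => hdisj x hx.1 m h1 hb
      simpa [F] using this
  have hFc : ContinuousOn F G := by
    rw [continuousOn_pi]
    intro m x hx
    have : ∃ b, x ∈ O m b := by
      rcases mem_iInter.1 hx.2 m with h1 | h1
      exacts [⟨_, h1⟩, ⟨_, h1⟩]
    obtain ⟨b, hb⟩ := this
    have hev : ∀ᶠ y in nhdsWithin x G, F y m = F x m := by
      filter_upwards [self_mem_nhdsWithin, mem_nhdsWithin_of_mem_nhds ((hOo m b).mem_nhds hb)]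
        with y hy hyb
      rw [hFval y hy m b hyb, hFval x hx m b hb]
    exact tendsto_nhds_of_eventually_eq hev
  have hFh : ∀ x : X, F x = h x := by
    intro x
    funext m
    exact hFval x (hXG x.2) m _ ((hOm m _ x).2 rfl)
  have key : ∀ x ∈ G, F x ∈ X → x ∈ X := by
    intro x hx hFx
    let z : X := ⟨F x, hFx⟩
    let L : Filter X := Filter.comap Subtype.val (nhds x)
    have hne : L.NeBot := by
      have := mem_closure_iff_comap_neBot.1 hx.1
      exact this
    have t1 : Filter.Tendsto (Subtype.val : X → Cantor) L (nhds x) := Filter.tendsto_comap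
    have t2 : Filter.Tendsto (fun y : X => h y) L (nhds z) := by
      rw [tendsto_subtype_rng]
      have t3 : Filter.Tendsto (Subtype.val : X → Cantor) L (nhdsWithin x G) :=
        tendsto_nhdsWithin_iff.2 ⟨t1, Filter.Eventually.of_forall fun y => hXG y.2⟩
      have := (hFc x hx).tendsto.comp t3
      refine this.congr fun y => ?_
      exact hFh y
    have t4 := (h.symm.continuous.tendsto z).comp t2
    have t5 := (continuous_subtype_val.tendsto (h.symm z)).comp t4
    have t6 : Filter.Tendsto (Subtype.val : X → Cantor) L (nhds (h.symm z : Cantor)) := by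
      refine t5.congr fun y => ?_
      simp
    rw [tendsto_nhds_unique t1 t6]
    exact (h.symm z).2
  obtain ⟨A, hA, hmono, hmem⟩ := hZ
  have hpre : ∀ k, IsFsigma (Gᶜ ∪ F ⁻¹' (A k)) := by
    intro k
    obtain ⟨C, hC, hAC⟩ := hA k
    have hD : ∀ i, ∃ D : Set Cantor, IsClosed D ∧ F ⁻¹' (C i) ∩ G = D ∩ G :=
      fun i => continuousOn_iff_isClosed.1 hFc _ (hC i)
    choose D hDc hD using hD
    have : Gᶜ ∪ F ⁻¹' (A k) = Gᶜ ∪ ⋃ i, D i := by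
      ext x
      by_cases hx : x ∈ G
      · have : ∀ i, F x ∈ C i ↔ x ∈ D i := by
          intro i
          have := Set.ext_iff.1 (hD i) x
          simpa [hx] using this
        simp [hx, hAC, this]
      · simp [hx]
    rw [this]
    refine fs_union ((isFsigma_iff_compl _).2 (by rwa [compl_compl])) ?_
    exact fs_iUnion fun i => fs_closed (hDc i)
  refine ⟨fun k => Gᶜ ∪ F ⁻¹' (A k), hpre, ?_, ?_⟩
  · intro i j hij
    exact union_subset_union_right _ (preimage_mono (hmono hij))
  · intro x
    by_cases hx : x ∈ G
    · have e1 : x ∈ {x | ∃ hx : x ∈ X, (h ⟨x, hx⟩ : Cantor) ∈ Z} ↔ F x ∈ Z := by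
        constructor
        · rintro ⟨hxX, hz⟩
          rw [← hFh ⟨x, hxX⟩] at hz
          exact hz
        · intro hz
          have hxX := key x hx (hZX hz)
          refine ⟨hxX, ?_⟩
          rw [← hFh ⟨x, hxX⟩]
          exact hz
      rw [e1, hmem]
      simp [hx]
    · constructor
      · rintro ⟨hxX, -⟩
        exact absurd (hXG hxX) hx
      · rintro ⟨k, -, hodd, -, hj⟩
        exact absurd (Or.inl hx) (hj 0 hodd.pos)

theorem pdiff_glue (X : Set Cantor) (n : ℕ) (V : ℕ → Set Cantor) (hV : ∀ i, IsOpen (V i))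
    (hcov : X ⊆ ⋃ i, V i) (hP : ∀ i, PDiff n (X ∩ V i)) : PDiff n X := by
  choose A hA hmono hmem using hP
  refine ⟨fun k => ⋃ i, ((V i ∩ (⋃ j, ⋃ (_ : j < i), V j)ᶜ) ∩ A i k), ?_, ?_, ?_⟩
  · intro k
    refine fs_iUnion fun i => fs_inter (fs_inter (fs_open (hV i)) (fs_closed ?_)) (hA i k)
    exact (isOpen_iUnion fun j => isOpen_iUnion fun _ => hV j).isClosed_compl
  · intro k l hkl
    exact iUnion_mono fun i => inter_subset_inter_right _ (hmono i hkl)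
  · intro x
    by_cases hx : ∃ i, x ∈ V i
    · classical
      have hi := Nat.find_spec hx
      have hlt : ∀ j < Nat.find hx, x ∉ V j := fun j hj => Nat.find_min hx hj
      generalize Nat.find hx = i at hi hlt
      have hk : ∀ k, x ∈ (⋃ i, ((V i ∩ (⋃ j, ⋃ (_ : j < i), V j)ᶜ) ∩ A i k)) ↔ x ∈ A i k := by
        intro k
        simp only [mem_iUnion, mem_inter_iff, mem_compl_iff, not_exists]
        constructor
        · rintro ⟨i', ⟨h1, h2⟩, h3⟩
          have : i' = i := by
            rcases lt_trichotomy i' i with h | h | h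
            · exact absurd h1 (hlt _ h)
            · exact h
            · exact absurd hi (h2 i h)
          exact this ▸ h3
        · intro h
          exact ⟨i, ⟨hi, hlt⟩, h⟩
      simp only [hk]
      rw [← hmem i x]
      simp [hi]
    · constructor
      · intro h
        exact absurd (mem_iUnion.1 (hcov h)) hx
      · rintro ⟨k, -, -, h, -⟩
        obtain ⟨i, ⟨h, -⟩, -⟩ := mem_iUnion.1 h
        exact absurd ⟨i, h⟩ hx

/-- If `A n` contains the closed-by-open piece `T`, `X ∩ T` is a finite difference. -/
theorem pdiff_piece_pos (Y T : Set Cantor) (hT : IsFsigma Tᶜ) (hYT : Y ⊆ T) (A : ℕ → Set Cantor)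
    (hA : ∀ n, IsFsigma (A n)) (hm : Monotone A) (n : ℕ) (hTA : T ⊆ A n)
    (h : ∀ x ∈ T, (x ∈ Y ↔ ∃ k, Odd k ∧ x ∈ A k ∧ ∀ j < k, x ∉ A j)) :
    PDiff (2 * (n + 1)) Y := by
  refine ⟨fun k => Tᶜ ∪ A k, fun k => fs_union hT (hA k),
    fun i j hij => union_subset_union_right _ (hm hij), fun x => ?_⟩
  by_cases hx : x ∈ T
  · rw [h x hx]
    simp only [mem_union, mem_compl_iff, hx, not_true_eq_false, false_or]
    constructor
    · rintro ⟨k, h1, h2, h3⟩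
      refine ⟨k, ?_, h1, h2, h3⟩
      by_contra hk
      exact h3 n (by omega) (hTA hx)
    · rintro ⟨k, -, h⟩
      exact ⟨k, h⟩
  · constructor
    · intro hy
      exact absurd (hYT hy) hx
    · rintro ⟨k, -, hodd, -, hj⟩
      exact absurd (Or.inl hx) (hj 0 hodd.pos)

theorem pdiff_piece_neg (Y T : Set Cantor) (hT : IsFsigma Tᶜ) (hYT : Y ⊆ T) (A : ℕ → Set Cantor)
    (hA : ∀ n, IsFsigma (A n)) (hm : Monotone A) (n : ℕ) (hTA : T ⊆ A n)
    (h : ∀ x ∈ T, (x ∉ Y ↔ ∃ k, Odd k ∧ x ∈ A k ∧ ∀ j < k, x ∉ A j)) :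
    PDiff (2 * (n + 2)) Y := by
  refine pdiff_piece_pos Y T hT hYT (fun k => Nat.casesOn k ∅ A) ?_ ?_ (n + 1) hTA ?_
  · rintro (_ | k)
    · exact fs_closed isClosed_empty
    · exact hA k
  · rintro (_ | i) (_ | j) hij
    · exact le_rfl
    · exact empty_subset _
    · omega
    · exact hm (by omega)
  · intro x hx
    classical
    have hex : ∃ k, x ∈ A k := ⟨n, hTA hx⟩
    have h1 := Nat.find_spec hex
    have h2 : ∀ j < Nat.find hex, x ∉ A j := fun j hj => Nat.find_min hex hj
    generalize Nat.find hex = r at h1 h2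
    have huniq : ∀ k, x ∈ A k → (∀ j < k, x ∉ A j) → k = r := by
      intro k a b
      rcases lt_trichotomy k r with c | c | c
      · exact absurd a (h2 _ c)
      · exact c
      · exact absurd h1 (b _ c)
    have e1 : x ∉ Y ↔ Odd r := by
      rw [h x hx]
      constructor
      · rintro ⟨k, a, b, c⟩
        exact huniq k b c ▸ a
      · intro a
        exact ⟨r, a, h1, h2⟩
    have e2 : x ∈ Y ↔ Odd (r + 1) := by
      rw [Nat.odd_add_one, ← e1, not_not]
    rw [e2]
    constructor
    · intro a
      refine ⟨r + 1, a, h1, ?_⟩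
      rintro (_ | j) hj
      · exact fun h => h
      · exact h2 j (by omega)
    · rintro ⟨_ | k, a, b, c⟩
      · exact absurd b (fun h => h)
      · have : k = r := huniq k b fun j hj => c (j + 1) (by omega)
        exact this ▸ a

theorem domega_mem {X : Set Cantor} {A : ℕ → Set Cantor}
    (h : X = ⋃ n ∈ {n : ℕ | Odd n}, (A n \ ⋃ m < n, A m)) (x : Cantor) :
    x ∈ X ↔ ∃ k, Odd k ∧ x ∈ A k ∧ ∀ j < k, x ∉ A j := by
  rw [h]
  simp only [mem_iUnion, mem_ofPred_eq, mem_sdiff, exists_prop, not_exists, not_and]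

theorem exists_piece (X : Set Cantor) (hne : X.Nonempty) (hdel : InDelta X) :
    ∃ n, ∃ U : Set Cantor, IsOpen U ∧ (X ∩ U).Nonempty ∧ PDiff (2 * n) (X ∩ U) := by
  obtain ⟨⟨A, hA, hAm, hAX⟩, ⟨B, hB, hBm, hBX⟩⟩ := hdel
  choose FA hFA hFAe using hA
  choose FB hFB hFBe using hB
  let C : Set Cantor := closure X
  have : CompactSpace C := isCompact_iff_compactSpace.1 isClosed_closure.isCompact
  have : Nonempty C := ⟨⟨hne.some, subset_closure hne.some_mem⟩⟩
  let f : Bool × ℕ × ℕ → Set C := fun p =>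
    Subtype.val ⁻¹' (if p.1 then FA p.2.1 p.2.2 else FB p.2.1 p.2.2)
  have hfc : ∀ p, IsClosed (f p) := by
    rintro ⟨b, i, j⟩
    refine IsClosed.preimage continuous_subtype_val ?_
    cases b
    · exact hFB i j
    · exact hFA i j
  have hfu : ⋃ p, f p = univ := by
    refine eq_univ_of_forall fun x => ?_
    by_cases hx : (x : Cantor) ∈ X
    · obtain ⟨k, -, hk, -⟩ := (domega_mem hAX x).1 hx
      rw [hFAe] at hk
      obtain ⟨i, hi⟩ := mem_iUnion.1 hk
      exact mem_iUnion.2 ⟨(true, k, i), by simpa [f] using hi⟩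
    · obtain ⟨k, -, hk, -⟩ := (domega_mem hBX x).1 hx
      rw [hFBe] at hk
      obtain ⟨i, hi⟩ := mem_iUnion.1 hk
      exact mem_iUnion.2 ⟨(false, k, i), by simpa [f] using hi⟩
  obtain ⟨⟨b, k, i⟩, y, hy⟩ := nonempty_interior_of_iUnion_of_closed hfc hfu
  obtain ⟨U, hU, hUe⟩ := isOpen_induced_iff.1 (isOpen_interior (s := f (b, k, i)))
  have hyU : (y : Cantor) ∈ U := by
    have : y ∈ Subtype.val ⁻¹' U := hUe ▸ hy
    exact this
  have hsub : ∀ x ∈ C ∩ U, x ∈ (if b then FA k i else FB k i) := by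
    rintro x ⟨hxC, hxU⟩
    have : (⟨x, hxC⟩ : C) ∈ interior (f (b, k, i)) := by
      rw [← hUe]
      exact hxU
    have h2 : (⟨x, hxC⟩ : C) ∈ f (b, k, i) := interior_subset this
    exact h2
  have hT : IsFsigma (C ∩ U)ᶜ := by
    rw [compl_inter]
    exact fs_union (fs_open isClosed_closure.isOpen_compl) (fs_closed hU.isClosed_compl)
  have hXT : X ∩ U ⊆ C ∩ U := inter_subset_inter_left _ subset_closure
  have hnon : (X ∩ U).Nonempty := by
    have := mem_closure_iff.1 y.2 U hU hyU
    rwa [inter_comm]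
  cases b with
  | true =>
    refine ⟨k + 1, U, hU, hnon, pdiff_piece_pos _ (C ∩ U) hT hXT A
      (fun n => ⟨FA n, hFA n, hFAe n⟩) hAm k ?_ ?_⟩
    · intro x hx
      rw [hFAe]
      exact mem_iUnion.2 ⟨i, by simpa using hsub x hx⟩
    · intro x hx
      rw [← domega_mem hAX x]
      simp [hx.2]
  | false =>
    refine ⟨k + 2, U, hU, hnon, pdiff_piece_neg _ (C ∩ U) hT hXT B
      (fun n => ⟨FB n, hFB n, hFBe n⟩) hBm k ?_ ?_⟩
    · intro x hx
      rw [hFBe]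
      exact mem_iUnion.2 ⟨i, by simpa using hsub x hx⟩
    · intro x hx
      rw [← domega_mem hBX x]
      simp [hx.2]

theorem exists_pdiff (X : Set Cantor) (hhom : IsHomogeneous X) (hdel : InDelta X) :
    ∃ n, PDiff (2 * n) X := by
  rcases X.eq_empty_or_nonempty with rfl | hne
  · exact ⟨0, fun _ => ∅, fun _ => fs_closed isClosed_empty, fun _ _ _ => le_rfl, by simp⟩
  obtain ⟨n, U, hU, ⟨x0, hx0X, hx0U⟩, hP⟩ := exists_piece X hne hdel
  refine ⟨n, ?_⟩
  have hloc : ∀ y : X, ∃ V : Set Cantor, IsOpen V ∧ (y : Cantor) ∈ V ∧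
      PDiff (2 * n) (X ∩ V) := by
    intro y
    obtain ⟨h, hh⟩ := hhom y ⟨x0, hx0X⟩
    have hop : IsOpen {x : X | (h x : Cantor) ∈ U} := by
      have hc : Continuous fun x : X => (h x : Cantor) := by fun_prop
      exact hU.preimage hc
    obtain ⟨V, hV, hVe⟩ := isOpen_induced_iff.1 hop
    have hm : ∀ x : X, (x : Cantor) ∈ V ↔ (h x : Cantor) ∈ U := by
      intro x
      have : x ∈ Subtype.val ⁻¹' V ↔ x ∈ {x : X | (h x : Cantor) ∈ U} := by rw [hVe]
      exact this
    refine ⟨V, hV, (hm y).2 (by rw [hh]; exact hx0U), ?_⟩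
    have e : X ∩ V = {x | ∃ hx : x ∈ X, (h ⟨x, hx⟩ : Cantor) ∈ X ∩ U} := by
      ext x
      constructor
      · rintro ⟨hx, hxV⟩
        exact ⟨hx, (h ⟨x, hx⟩).2, (hm ⟨x, hx⟩).1 hxV⟩
      · rintro ⟨hx, -, hxU⟩
        exact ⟨hx, (hm ⟨x, hx⟩).2 hxU⟩
    rw [e]
    exact pdiff_transport X h _ _ inter_subset_left hP
  choose V hVo hVm hVP using hloc
  obtain ⟨T, hTc, hTe⟩ := TopologicalSpace.isOpen_iUnion_countable V hVo
  have hTne : T.Nonempty := by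
    obtain ⟨x, hx⟩ := hne
    have : x ∈ ⋃ i ∈ T, V i := by
      rw [hTe]
      exact mem_iUnion.2 ⟨⟨x, hx⟩, hVm _⟩
    simp only [mem_iUnion] at this
    obtain ⟨i, hi, -⟩ := this
    exact ⟨i, hi⟩
  obtain ⟨g, hg⟩ := hTc.exists_eq_range hTne
  refine pdiff_glue X _ (fun i => V (g i)) (fun i => hVo _) ?_ fun i => hVP _
  intro x hx
  have : x ∈ ⋃ i ∈ T, V i := by
    rw [hTe]
    exact mem_iUnion.2 ⟨⟨x, hx⟩, hVm _⟩
  rw [hg] at this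
  simpa using this

/-- A homogeneous subspace of Cantor space in Δ is in D_ℓ(Σ⁰₂) for some finite ℓ. -/
theorem inDelta_implies_finite_difference (X : Set Cantor)
    (hhom : IsHomogeneous X) (hdel : InDelta X) :
    ∃ ℓ : ℕ, ∃ A : ℕ → Set Cantor, (∀ k, IsFsigma (A k)) ∧ Monotone A ∧
      X = ⋃ k ∈ {k : ℕ | k < ℓ ∧ k % 2 ≠ ℓ % 2}, (A k \ ⋃ j < k, A j) := by
  obtain ⟨n, A, hA, hm, h⟩ := exists_pdiff X hhom hdel
  refine ⟨2 * n, A, hA, hm, ?_⟩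
  ext x
  rw [h]
  have hp : ∀ k, k % 2 ≠ 2 * n % 2 ↔ Odd k := by
    intro k
    rw [Nat.odd_iff]
    omega
  simp only [mem_iUnion, mem_ofPred_eq, mem_sdiff, exists_prop, not_exists, not_and, hp, and_assoc]
end
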